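/- Let H ∈ (0,1), β ∈ ℝ, μ ≠ 0 and T > 0, and let K be the fOU covariance kernel on [0,T]. Suppose that for every ε > 0 the function h_ε : [0,T]² → ℝ is continuous and satisfies the Wiener–Hopf equation ε·h_ε(s,t) + μ²·∫₀ᵀ K(r,s)·h_ε(r,t) dr = μ²·K(s,t) for all 0 ≤ s ≤ t ≤ T. Then the filtering error P_ε := (ε/μ²)·h_ε(T,T) satisfies lim_{ε→0⁺} P_ε / (ε/μ²)^{2H/(1+2H)} = (sin(πH)·Γ(2H+1))^{1/(1+2H)} / sin(π/(2H+1)). -/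

import Mathlib

open Real MeasureTheory Set Filter intervalIntegral

/-- The fractional Ornstein–Uhlenbeck covariance kernel
`K(s,t) = ∫₀ᵗ e^{β(t−v)} (d/dv)(∫₀ˢ H |v−u|^{2H−1} sign(v−u) e^{β(s−u)} du) dv`. -/
noncomputable def fOUkernel (H β : ℝ) (s t : ℝ) : ℝ :=
  ∫ v in (0:ℝ)..t, Real.exp (β * (t - v)) *
    deriv (fun w : ℝ =>
      ∫ u in (0:ℝ)..s, H * |w - u| ^ (2 * H - 1) * Real.sign (w - u) * Real.exp (β * (s - u))) v

/-!
Write `l = ε / μ ^ 2`. For a Gram kernel `K(s, t) = ∫ ⟨F s, F t⟩ dν`, a solution `g` of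
`l g(s) + ∫₀ᵀ K(r, s) g(r) dr = K(s, T)` minimises the energy
`∫ ‖F T - ∫₀ᵀ g(t) F t dt‖² dν + l ∫₀ᵀ g²`, and `l g(T)` is the minimum. Every trial function
therefore bounds `l g(T)` from above, and every Lagrange multiplier bounds it from below.

The kernel of the fractional Ornstein–Uhlenbeck process is such a Gram kernel, with `ν` the measure
`c |ω| ^ (1 - 2H) dω` and `F t` the response of the Ornstein–Uhlenbeck flow to `exp (iωt)`. With
`l = 2 π c δ ^ (1 + 2H)` the optimal weights live at the time scale `δ`, where neither `β` nor the
finite horizon is visible in the limit, and both bounds become the problem of minimising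
`∫ |x| ^ (-a) |1 - p̂(x)|² + |p̂(x)|² dx` over causal transfer functions `p̂`, for `a = 1 + 2H`.
Spectral factorization of `1 + |x| ^ (-a)` solves it: the minimum is
`∫ log (1 + |x| ^ (-a)) dx = 2 π / sin (π / a)`. The trial functions are polynomials in the low-pass
transfer function `(1 + ix)⁻¹`, so that everything decays exponentially in time.
-/

/-! ### Explicit integrals -/

theorem integral_eq_integral_of_iterated_of_nonneg {α β : Type*} [MeasurableSpace α]
    [MeasurableSpace β] {μ : Measure α} {ν : Measure β} [SFinite μ] [SFinite ν] {f : α → β → ℝ}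
    {A : α → ℝ} {B : β → ℝ} (hf : AEStronglyMeasurable (Function.uncurry f) (μ.prod ν))
    (hf₀ : ∀ᵐ y ∂ν, ∀ᵐ x ∂μ, 0 ≤ f x y) (hfi : ∀ᵐ y ∂ν, Integrable (fun x => f x y) μ)
    (hA : ∀ᵐ x ∂μ, ∫ y, f x y ∂ν = A x) (hB : ∀ᵐ y ∂ν, ∫ x, f x y ∂μ = B y)
    (hBi : Integrable B ν) : ∫ x, A x ∂μ = ∫ y, B y ∂ν := by
  have hint : Integrable (Function.uncurry f) (μ.prod ν) := by
    refine (integrable_prod_iff' hf).2 ⟨hfi, hBi.congr ?_⟩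
    filter_upwards [hf₀, hB] with y hy hBy
    rw [← hBy]
    exact integral_congr_ae (hy.mono fun x hx => (norm_of_nonneg hx).symm)
  rw [← integral_congr_ae hA, ← integral_congr_ae hB, integral_integral_swap hint]

/-- Reflection formula: write `(1 + x ^ p)⁻¹` as `∫ exp (-u (1 + x ^ p))` over `u > 0`. -/
theorem integral_rpow_div_one_add_rpow {p q : ℝ} (hp : 0 < p) (hq : -1 < q) (hqp : q + 1 < p) :
    ∫ x in Ioi (0 : ℝ), x ^ q / (1 + x ^ p) = 1 / p * (π / sin (π * ((q + 1) / p))) := by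
  have hs : 0 < (q + 1) / p := div_pos (by linarith) hp
  have hs' : (q + 1) / p < 1 := (div_lt_one hp).2 hqp
  have hx : ∀ u > 0, ∫ x in Ioi (0 : ℝ), x ^ q * exp (-u * x ^ p) * exp (-u)
      = 1 / p * Gamma ((q + 1) / p) * (exp (-u) * u ^ (1 - (q + 1) / p - 1)) := fun u hu => by
    rw [MeasureTheory.integral_mul_const, integral_rpow_mul_exp_neg_mul_rpow hp hq hu,
      show 1 - (q + 1) / p - 1 = -(q + 1) / p by ring]
    ring
  rw [integral_eq_integral_of_iterated_of_nonneg
    (f := fun x u => x ^ q * exp (-u * x ^ p) * exp (-u)) (ν := volume.restrict (Ioi 0))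
    (by unfold Function.uncurry; fun_prop) ?_ ?_ ?_ (ae_restrict_of_forall_mem measurableSet_Ioi hx)
    ((GammaIntegral_convergent (sub_pos.2 hs')).const_mul _),
    MeasureTheory.integral_const_mul, ← Gamma_eq_integral (sub_pos.2 hs'), mul_assoc,
    Gamma_mul_Gamma_one_sub]
  · refine ae_of_all _ fun u => ae_restrict_of_forall_mem measurableSet_Ioi fun x hx => ?_
    have : 0 < x := hx
    positivity
  · refine ae_restrict_of_forall_mem measurableSet_Ioi fun u hu => .of_integral_ne_zero ?_
    have : 0 < u := hu
    have := Gamma_pos_of_pos hs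
    rw [hx u hu]
    positivity
  · refine ae_restrict_of_forall_mem measurableSet_Ioi fun x hx => ?_
    have : 0 < x := hx
    have hb : -(1 + x ^ p) < 0 := neg_neg_of_pos (by positivity)
    calc ∫ u in Ioi (0 : ℝ), x ^ q * exp (-u * x ^ p) * exp (-u)
        = ∫ u in Ioi (0 : ℝ), x ^ q * exp (-(1 + x ^ p) * u) := by
          congr 1 with u
          rw [mul_assoc, ← exp_add]
          ring_nf
      _ = x ^ q / (1 + x ^ p) := by
          rw [MeasureTheory.integral_const_mul, integral_exp_mul_Ioi hb, mul_zero, exp_zero]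
          field_simp

theorem integrableOn_rpow_div_one_add_rpow {p q : ℝ} (hp : 0 < p) (hq : -1 < q)
    (hqp : q + 1 < p) : IntegrableOn (fun x : ℝ => x ^ q / (1 + x ^ p)) (Ioi 0) := by
  refine .of_integral_ne_zero ?_
  have hs : 0 < (q + 1) / p := div_pos (by linarith) hp
  have hs' : (q + 1) / p < 1 := (div_lt_one hp).2 hqp
  have : 0 < sin (π * ((q + 1) / p)) :=
    sin_pos_of_pos_of_lt_pi (by positivity) (mul_lt_of_lt_one_right pi_pos hs')
  rw [integral_rpow_div_one_add_rpow hp hq hqp]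
  positivity

theorem integral_one_sub_cos_mul_exp_neg_mul {y : ℝ} (hy : 0 < y) :
    ∫ x in Ioi (0 : ℝ), (1 - cos x) * exp (-(y * x)) = 1 / (y * (1 + y ^ 2)) := by
  have hre : ((-y : ℂ) + Complex.I).re < 0 := by simpa
  have hcos : ∀ x : ℝ, cos x * exp (-y * x) = RCLike.re (Complex.exp ((-y + Complex.I) * x)) :=
    fun x => by simp [Complex.exp_re, mul_comm]
  have hcosi : IntegrableOn (fun x => cos x * exp (-y * x)) (Ioi 0) := by
    simp only [hcos]
    exact (integrableOn_exp_mul_complex_Ioi hre 0).re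
  have hexpi : IntegrableOn (fun x => exp (-y * x)) (Ioi 0) := exp_neg_integrableOn_Ioi 0 hy
  simp only [sub_mul, one_mul, ← neg_mul]
  rw [MeasureTheory.integral_sub hexpi hcosi, integral_exp_mul_Ioi (neg_neg_of_pos hy)]
  simp only [hcos]
  rw [integral_re (integrableOn_exp_mul_complex_Ioi hre 0), integral_exp_mul_complex_Ioi hre]
  simp only [mul_zero, exp_zero, Complex.ofReal_zero, Complex.exp_zero, RCLike.re_to_complex,
    Complex.div_re, Complex.normSq_apply, Complex.neg_re, Complex.neg_im, Complex.add_re,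
    Complex.add_im, Complex.ofReal_re, Complex.ofReal_im, Complex.I_re, Complex.I_im,
    Complex.one_re, Complex.one_im]
  field_simp
  ring

section
variable {H : ℝ} (hH : H ∈ Ioo (0 : ℝ) 1)
include hH

theorem sin_pi_mul_mul_Gamma_pos : 0 < sin (π * H) * Gamma (2 * H + 1) :=
  mul_pos (sin_pos_of_pos_of_lt_pi (mul_pos pi_pos hH.1) (mul_lt_of_lt_one_right pi_pos hH.2))
    (Gamma_pos_of_pos (by linarith [hH.1]))

/-- Write `Gamma (2 * H + 1) * x ^ (-1 - 2 * H)` as `∫ y ^ (2 * H) * exp (-x y)` over `y > 0`. -/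
theorem integral_one_sub_cos_mul_rpow :
    ∫ x in Ioi (0 : ℝ), (1 - cos x) * x ^ (-1 - 2 * H)
      = π / (2 * (sin (π * H) * Gamma (2 * H + 1))) := by
  obtain ⟨h0, h1⟩ := hH
  have hswap : ∫ x in Ioi (0 : ℝ), Gamma (2 * H + 1) * ((1 - cos x) * x ^ (-1 - 2 * H))
      = ∫ y in Ioi (0 : ℝ), y ^ (2 * H - 1) / (1 + y ^ (2 : ℝ)) := by
    have hx : ∀ y ∈ Ioi (0 : ℝ), ∫ x in Ioi (0 : ℝ), (1 - cos x) * exp (-(y * x)) * y ^ (2 * H)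
        = y ^ (2 * H - 1) / (1 + y ^ (2 : ℝ)) := fun y hy => by
      have hy₀ : 0 < y := hy
      rw [MeasureTheory.integral_mul_const, integral_one_sub_cos_mul_exp_neg_mul hy,
        rpow_sub_one hy₀.ne', rpow_two]
      field_simp
    refine integral_eq_integral_of_iterated_of_nonneg
      (f := fun x y => (1 - cos x) * exp (-(y * x)) * y ^ (2 * H)) (ν := volume.restrict (Ioi 0))
      (by unfold Function.uncurry; fun_prop) ?_ ?_ ?_
      (ae_restrict_of_forall_mem measurableSet_Ioi hx)
      (integrableOn_rpow_div_one_add_rpow two_pos (by linarith) (by linarith))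
    · refine ae_restrict_of_forall_mem measurableSet_Ioi fun y hy => ae_of_all _ fun x => ?_
      have : 0 < y := hy
      have : 0 ≤ 1 - cos x := sub_nonneg.2 (cos_le_one x)
      positivity
    · refine ae_restrict_of_forall_mem measurableSet_Ioi fun y hy => .of_integral_ne_zero ?_
      have : 0 < y := hy
      rw [hx y hy]
      positivity
    · refine ae_restrict_of_forall_mem measurableSet_Ioi fun x hx => ?_
      have hGamma := integral_rpow_mul_exp_neg_mul_Ioi (a := 2 * H + 1) (by linarith) hx
      rw [add_sub_cancel_right, one_div, inv_rpow (le_of_lt hx), ← rpow_neg (le_of_lt hx),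
        neg_add_rev, ← sub_eq_add_neg] at hGamma
      rw [mul_left_comm, mul_comm (Gamma _), ← hGamma, ← MeasureTheory.integral_const_mul]
      congr 1 with y
      ring_nf
  have hpos := sin_pi_mul_mul_Gamma_pos ⟨h0, h1⟩
  have hG : 0 < Gamma (2 * H + 1) := Gamma_pos_of_pos (by linarith)
  have hsin : 0 < sin (π * H) := pos_of_mul_pos_left hpos hG.le
  rw [MeasureTheory.integral_const_mul,
    integral_rpow_div_one_add_rpow two_pos (by linarith) (by linarith),
    show π * ((2 * H - 1 + 1) / 2) = π * H by ring] at hswap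
  field_simp at hswap ⊢
  linarith

theorem integral_one_sub_cos_mul_abs_rpow (x : ℝ) :
    ∫ ω : ℝ, (1 - cos (ω * x)) * |ω| ^ (-1 - 2 * H)
      = |x| ^ (2 * H) * (π / (sin (π * H) * Gamma (2 * H + 1))) := by
  rcases eq_or_ne x 0 with rfl | hx
  · simp [zero_rpow (by linarith [hH.1] : 2 * H ≠ 0)]
  have hx₀ : 0 < |x| := abs_pos.2 hx
  have hscale : ∀ v ∈ Ioi (0 : ℝ), (1 - cos (v * |x|)) * v ^ (-1 - 2 * H) =
      |x| ^ (1 + 2 * H) * ((1 - cos (v * |x|)) * (v * |x|) ^ (-1 - 2 * H)) := fun v hv => by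
    rw [mul_rpow (le_of_lt hv) hx₀.le, show -1 - 2 * H = -(1 + 2 * H) by ring, rpow_neg hx₀.le]
    field_simp
  calc ∫ ω : ℝ, (1 - cos (ω * x)) * |ω| ^ (-1 - 2 * H)
      = ∫ ω : ℝ, (fun v => (1 - cos (v * |x|)) * v ^ (-1 - 2 * H)) |ω| := by
        congr 1 with ω
        rw [← cos_abs (ω * x), abs_mul]
    _ = 2 * (|x| ^ (1 + 2 * H) * (|x|⁻¹ * (π / (2 * (sin (π * H) * Gamma (2 * H + 1)))))) := by
        rw [integral_comp_abs (f := fun v => (1 - cos (v * |x|)) * v ^ (-1 - 2 * H)),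
          setIntegral_congr_fun measurableSet_Ioi hscale, MeasureTheory.integral_const_mul,
          integral_comp_mul_right_Ioi (fun v => (1 - cos v) * v ^ (-1 - 2 * H)) _ hx₀, zero_mul,
          integral_one_sub_cos_mul_rpow hH, smul_eq_mul]
    _ = _ := by
        rw [rpow_add hx₀, rpow_one]
        field_simp

end

theorem integrable_comp_abs {f : ℝ → ℝ} (hf : IntegrableOn f (Ioi 0)) :
    Integrable fun x : ℝ => f |x| := by
  have hIoi : IntegrableOn (fun x : ℝ => f |x|) (Ioi 0) :=
    hf.congr_fun (fun x hx => by rw [abs_of_pos hx]) measurableSet_Ioi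
  have hIic : IntegrableOn (fun x : ℝ => f |x|) (Iic 0) := by
    have := hIoi.comp_neg
    simp only [abs_neg, Set.neg_Ioi, neg_zero] at this
    exact (integrableOn_Iic_iff_integrableOn_Iio).2 this
  simpa using hIic.union hIoi

theorem integrable_abs_rpow_div_one_add_sq {b : ℝ} (hb : -1 < b) (hb' : b < 1) :
    Integrable fun ω : ℝ => |ω| ^ b / (1 + ω ^ 2) := by
  simpa using integrable_comp_abs
    (integrableOn_rpow_div_one_add_rpow two_pos hb (by linarith))

theorem intervalIntegrable_abs_rpow {r : ℝ} (hr : -1 < r) (a b : ℝ) :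
    IntervalIntegrable (fun x : ℝ => |x| ^ r) volume a b := by
  set R := max |a| |b|
  have hIoc : IntegrableOn (fun x : ℝ => x ^ r) (Ioc 0 R) :=
    (intervalIntegrable_iff_integrableOn_Ioc_of_le (by positivity)).1 (intervalIntegrable_rpow' hr)
  have h := integrable_comp_abs (integrable_indicator_iff measurableSet_Ioc |>.2 hIoc).integrableOn
  refine h.intervalIntegrable.congr_ae ?_
  rw [EventuallyEq, ae_restrict_iff' measurableSet_uIoc]
  filter_upwards [Measure.ae_ne volume (0 : ℝ)] with x hx hxm
  refine indicator_of_mem (show |x| ∈ Ioc 0 R from ⟨abs_pos.2 hx, ?_⟩) _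
  rcases mem_uIcc.1 (uIoc_subset_uIcc hxm) with ⟨h₁, h₂⟩ | ⟨h₁, h₂⟩
  · exact abs_le_max_abs_abs h₁ h₂
  · exact (abs_le_max_abs_abs h₁ h₂).trans (max_comm _ _).le

section
variable {a : ℝ} (ha : 1 < a)
include ha

/-- Write `log (1 + x ^ (-a))` as `∫ (x ^ a + s)⁻¹` over `0 < s ≤ 1`. -/
theorem integral_Ioi_log_one_add_rpow_neg :
    ∫ x in Ioi (0 : ℝ), log (1 + x ^ (-a)) = π / sin (π / a) := by
  have ha₀ : 0 < a := by linarith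
  have hr : -1 < 1 / a - 1 := by linarith [one_div_pos.2 ha₀]
  have hsin : 0 < sin (π / a) :=
    sin_pos_of_pos_of_lt_pi (by positivity) (div_lt_self pi_pos ha)
  have hx : ∀ s ∈ Ioc (0 : ℝ) 1, ∫ x in Ioi (0 : ℝ), 1 / (s + x ^ a)
      = s ^ (1 / a - 1) * (1 / a * (π / sin (π / a))) := fun s ⟨hs, _⟩ => by
    have hscale : ∀ x ∈ Ioi (0 : ℝ), 1 / (s + x ^ a)
        = s⁻¹ * (fun v : ℝ => v ^ (0 : ℝ) / (1 + v ^ a)) (s ^ (-1 / a) * x) := fun x hx => by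
      have : -1 / a * a = -1 := by field_simp
      simp only [rpow_zero]
      rw [mul_rpow (by positivity) (le_of_lt hx), ← rpow_mul hs.le, this, rpow_neg_one]
      field_simp
    rw [setIntegral_congr_fun measurableSet_Ioi hscale, MeasureTheory.integral_const_mul,
      integral_comp_mul_left_Ioi (fun v : ℝ => v ^ (0 : ℝ) / (1 + v ^ a)) _ (by positivity),
      mul_zero, integral_rpow_div_one_add_rpow ha₀ (by norm_num) (by linarith), smul_eq_mul,
      ← rpow_neg hs.le,
      rpow_sub_one hs.ne', show π * ((0 + 1) / a) = π / a by ring, show -(-1 / a) = 1 / a by ring]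
    ring
  rw [integral_eq_integral_of_iterated_of_nonneg (f := fun x s => 1 / (s + x ^ a))
    (ν := volume.restrict (Ioc 0 1))
    (Measurable.aestronglyMeasurable (by unfold Function.uncurry; fun_prop)) ?_ ?_ ?_
    (ae_restrict_of_forall_mem measurableSet_Ioc hx) ?_, MeasureTheory.integral_mul_const,
    ← integral_of_le zero_le_one, integral_rpow (.inl hr), sub_add_cancel, one_rpow,
    zero_rpow (by positivity)]
  · field_simp
    ring
  · refine ae_restrict_of_forall_mem measurableSet_Ioc fun s hs =>
      ae_restrict_of_forall_mem measurableSet_Ioi fun x hx => ?_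
    have : 0 < s := hs.1
    have : 0 < x := hx
    positivity
  · refine ae_restrict_of_forall_mem measurableSet_Ioc fun s hs => .of_integral_ne_zero ?_
    have : 0 < s := hs.1
    rw [hx s hs]
    positivity
  · refine ae_restrict_of_forall_mem measurableSet_Ioi fun x hx => ?_
    have hxa : 0 < x ^ a := rpow_pos_of_pos hx a
    rw [← integral_of_le zero_le_one, integral_comp_add_right (fun v => 1 / v),
      integral_one_div_of_pos (by linarith) (by linarith), rpow_neg (le_of_lt hx)]
    congr 1
    field_simp
    ring
  · exact ((intervalIntegrable_iff_integrableOn_Ioc_of_le zero_le_one).1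
      (intervalIntegrable_rpow' hr)).mul_const _

theorem integrable_log_one_add_abs_rpow_neg : Integrable fun x : ℝ => log (1 + |x| ^ (-a)) := by
  refine integrable_comp_abs (f := fun x => log (1 + x ^ (-a))) (.of_integral_ne_zero ?_)
  have : 0 < sin (π / a) :=
    sin_pos_of_pos_of_lt_pi (by positivity) (div_lt_self pi_pos ha)
  rw [integral_Ioi_log_one_add_rpow_neg ha]
  positivity

theorem integral_log_one_add_abs_rpow_neg :
    ∫ x : ℝ, log (1 + |x| ^ (-a)) = 2 * π / sin (π / a) := by
  rw [integral_comp_abs (f := fun x => log (1 + x ^ (-a))), integral_Ioi_log_one_add_rpow_neg ha]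
  ring

end

/-! ### The Ornstein–Uhlenbeck integral of an integrand family -/

section
variable {E F : Type*} [NormedAddCommGroup E] [NormedSpace ℝ E] [NormedAddCommGroup F]
  [NormedSpace ℝ F] {β s t : ℝ}

/-- The Ornstein–Uhlenbeck response `∫₀ᵗ e ^ (β (t - v)) dm(v)` at time `t` to the driving path `m`,
integrated by parts so that it makes sense without differentiability of `m`. -/
noncomputable def ouIntegral (β t : ℝ) (m : ℝ → E) : E :=
  m t - exp (β * t) • m 0 + β • ∫ v in (0 : ℝ)..t, exp (β * (t - v)) • m v

theorem hasDerivAt_exp_mul_const_sub (β t v : ℝ) :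
    HasDerivAt (fun v : ℝ => exp (β * (t - v))) (-β * exp (β * (t - v))) v := by
  refine (((hasDerivAt_id v).const_sub t).const_mul β).exp.congr_deriv ?_
  simp only [id_eq]
  ring

theorem ouIntegral_eq_integral_deriv [CompleteSpace E] {m m' : ℝ → E} {S : Set ℝ}
    (hS : S.Countable) (hm : Continuous m) (hm' : ∀ v ∉ S, HasDerivAt m (m' v) v)
    (hi : IntervalIntegrable m' volume 0 t) :
    ouIntegral β t m = ∫ v in (0 : ℝ)..t, exp (β * (t - v)) • m' v := by
  have hi₁ : IntervalIntegrable (fun v => exp (β * (t - v)) • m' v) volume 0 t :=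
    hi.continuousOn_smul (by fun_prop)
  have hi₂ : IntervalIntegrable (fun v => β • exp (β * (t - v)) • m v) volume 0 t :=
    Continuous.intervalIntegrable (by fun_prop) _ _
  have key := integral_eq_of_hasDerivAt_off_countable (fun v => exp (β * (t - v)) • m v)
    (fun v => exp (β * (t - v)) • m' v - β • exp (β * (t - v)) • m v) hS (by fun_prop)
    (fun v hv => ((hasDerivAt_exp_mul_const_sub β t v).smul (hm' v hv.2)).congr_deriv (by module))
    (hi₁.sub hi₂)
  rw [intervalIntegral.integral_sub hi₁ hi₂, intervalIntegral.integral_smul] at key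
  simp only [sub_self, mul_zero, exp_zero, one_smul, sub_zero] at key
  rw [ouIntegral, ← key, sub_add_cancel]

theorem ouIntegral_const [CompleteSpace E] (c : E) : ouIntegral β t (fun _ => c) = 0 := by
  simp [ouIntegral_eq_integral_deriv countable_empty continuous_const
    (fun v _ => hasDerivAt_const v c) (by simp)]

theorem ouIntegral_sub {m n : ℝ → E} (hm : Continuous m) (hn : Continuous n) :
    ouIntegral β t (fun v => m v - n v) = ouIntegral β t m - ouIntegral β t n := by
  simp only [ouIntegral, smul_sub]
  rw [intervalIntegral.integral_sub (Continuous.intervalIntegrable (by fun_prop) _ _)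
    (Continuous.intervalIntegrable (by fun_prop) _ _)]
  module

theorem ouIntegral_smul (c : ℝ) (m : ℝ → E) :
    ouIntegral β t (fun v => c • m v) = c • ouIntegral β t m := by
  simp only [ouIntegral, smul_comm _ c, intervalIntegral.integral_smul]
  module

theorem ouIntegral_neg (m : ℝ → E) : ouIntegral β t (fun v => -m v) = -ouIntegral β t m := by
  simpa using ouIntegral_smul (-1) m

theorem ouIntegral_clm_apply [CompleteSpace E] [CompleteSpace F] (L : E →L[ℝ] F) {m : ℝ → E}
    (hm : Continuous m) : ouIntegral β t (fun v => L (m v)) = L (ouIntegral β t m) := by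
  simp only [ouIntegral, map_add, map_sub, map_smul]
  rw [← L.intervalIntegral_comp_comm (Continuous.intervalIntegrable (by fun_prop) _ _)]
  simp only [map_smul]

theorem exp_mul_sub_le {v : ℝ} (hv : v ∈ uIcc 0 t) :
    exp (β * (t - v)) ≤ exp (|β| * |t|) := by
  refine exp_le_exp.2 ((le_abs_self _).trans ?_)
  rw [abs_mul]
  exact mul_le_mul_of_nonneg_left (by simpa using abs_sub_right_of_mem_uIcc hv) (abs_nonneg β)

theorem norm_integral_exp_smul_le {m : ℝ → E} {M : ℝ} (hm : ∀ v ∈ uIcc 0 t, ‖m v‖ ≤ M) :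
    ‖∫ v in (0 : ℝ)..t, exp (β * (t - v)) • m v‖ ≤ exp (|β| * |t|) * |t| * M := by
  have h := norm_integral_le_of_norm_le_const (a := 0) (b := t)
    (f := fun v => exp (β * (t - v)) • m v) (C := exp (|β| * |t|) * M) fun v hv => by
      rw [norm_smul, norm_of_nonneg (exp_pos _).le]
      exact mul_le_mul (exp_mul_sub_le (uIoc_subset_uIcc hv)) (hm v (uIoc_subset_uIcc hv))
        (norm_nonneg _) (exp_pos _).le
  exact h.trans_eq (by rw [sub_zero]; ring)

theorem norm_ouIntegral_le {m : ℝ → E} {M : ℝ} (hm : ∀ v ∈ uIcc 0 t, ‖m v‖ ≤ M) :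
    ‖ouIntegral β t m‖ ≤ (1 + exp (β * t) + |β| * (exp (|β| * |t|) * |t|)) * M := by
  calc ‖ouIntegral β t m‖
      ≤ ‖m t‖ + ‖exp (β * t) • m 0‖ + ‖β • ∫ v in (0 : ℝ)..t, exp (β * (t - v)) • m v‖ :=
        (norm_add_le _ _).trans (by gcongr; exact norm_sub_le _ _)
    _ ≤ M + exp (β * t) * M + |β| * (exp (|β| * |t|) * |t| * M) := by
        rw [norm_smul, norm_smul, norm_of_nonneg (exp_pos _).le, norm_eq_abs]
        gcongr
        · exact hm t right_mem_uIcc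
        · exact hm 0 left_mem_uIcc
        · exact norm_integral_exp_smul_le hm
    _ = _ := by ring

end

/-! ### Superpositions of driving paths -/

/-- A family `ω ↦ k · ω` of paths dominated by an integrable function of `ω`, uniformly on bounded
time intervals: such families may be integrated over `ω` under the Ornstein–Uhlenbeck integral. -/
structure LocallyDominated (k : ℝ → ℝ → ℝ) : Prop where
  measurable : Measurable (Function.uncurry k)
  exists_bound : ∀ R, ∃ G : ℝ → ℝ, Integrable G ∧ ∀ x, |x| ≤ R → ∀ ω, |k x ω| ≤ G ω

theorem integral_integral_swap_of_dominated {Ω : Type*} [MeasurableSpace Ω] {ν : Measure Ω}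
    [SFinite ν] {A : ℝ → Ω → ℝ} (hA : Measurable (Function.uncurry A)) {G : Ω → ℝ}
    (hG : Integrable G ν) {t : ℝ} (hb : ∀ v ∈ uIcc 0 t, ∀ ω, |A v ω| ≤ G ω) :
    ∫ v in (0 : ℝ)..t, (∫ ω, A v ω ∂ν) = ∫ ω, (∫ v in (0 : ℝ)..t, A v ω) ∂ν ∧
      Integrable (fun ω => ∫ v in (0 : ℝ)..t, A v ω) ν := by
  have : IsFiniteMeasure (volume.restrict (uIoc 0 t)) := ⟨by simp [uIoc]⟩
  have hint : Integrable (Function.uncurry A) ((volume.restrict (uIoc 0 t)).prod ν) := by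
    have hG' : Integrable (fun p : ℝ × Ω => (1 : ℝ) * G p.2)
        ((volume.restrict (uIoc 0 t)).prod ν) := (integrable_const 1).mul_prod hG
    refine hG'.mono' hA.aestronglyMeasurable ?_
    rw [← Measure.restrict_univ (μ := ν), Measure.prod_restrict]
    refine ae_restrict_of_forall_mem (measurableSet_uIoc.prod .univ) fun p hp => ?_
    rw [one_mul]
    exact hb p.1 (uIoc_subset_uIcc hp.1) p.2
  refine ⟨intervalIntegral_integral_swap hint, ?_⟩
  simp only [intervalIntegral_eq_integral_uIoc]
  exact hint.integral_prod_right.const_mul _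

namespace LocallyDominated
variable {k : ℝ → ℝ → ℝ}

theorem integrable (h : LocallyDominated k) (x : ℝ) : Integrable (k x) := by
  obtain ⟨G, hG, hb⟩ := h.exists_bound |x|
  exact hG.mono' (h.measurable.of_uncurry_left).aestronglyMeasurable (ae_of_all _ (hb x le_rfl))

theorem comp_const_sub (h : LocallyDominated k) (w : ℝ) :
    LocallyDominated fun u ω => k (w - u) ω where
  measurable := by
    have hm : Measurable fun p : ℝ × ℝ => (w - p.1, p.2) := by fun_prop
    exact h.measurable.comp hm
  exists_bound R := by
    obtain ⟨G, hG, hb⟩ := h.exists_bound (|w| + R)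
    exact ⟨G, hG, fun x hx => hb _ ((abs_sub _ _).trans (by gcongr))⟩

theorem ouIntegral_integral (h : LocallyDominated k) (β t : ℝ) :
    ouIntegral β t (fun v => ∫ ω, k v ω) = ∫ ω, ouIntegral β t (fun v => k v ω) := by
  obtain ⟨G, hG, hb⟩ := h.exists_bound |t|
  have he : Measurable fun p : ℝ × ℝ => exp (β * (t - p.1)) := by fun_prop
  obtain ⟨hswap, hi⟩ := integral_integral_swap_of_dominated
    (A := fun v ω => exp (β * (t - v)) • k v ω) (t := t)
    (he.smul h.measurable) (hG.const_mul (exp (|β| * |t|))) fun v hv ω => by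
      rw [smul_eq_mul, abs_mul, abs_of_pos (exp_pos _)]
      have hvt : |v| ≤ |t| := by simpa using abs_sub_left_of_mem_uIcc hv
      exact mul_le_mul (exp_mul_sub_le hv) (hb v hvt ω) (abs_nonneg _) (exp_pos _).le
  simp only [ouIntegral, ← MeasureTheory.integral_smul, hswap]
  have h₀ : Integrable fun ω => exp (β * t) • k 0 ω := (h.integrable 0).smul (exp (β * t))
  have hβ : Integrable fun ω => β • ∫ v in (0 : ℝ)..t, exp (β * (t - v)) • k v ω := hi.smul β
  rw [← MeasureTheory.integral_sub (h.integrable t) h₀]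
  exact (MeasureTheory.integral_add ((h.integrable t).sub h₀) hβ).symm

theorem ouIntegral_const_sub (h : LocallyDominated k) (β s : ℝ) :
    LocallyDominated fun w ω => ouIntegral β s (fun u => k (w - u) ω) where
  measurable := by
    have hm : ∀ v, Measurable fun p : ℝ × ℝ => k (p.1 - v) p.2 := fun v =>
      h.measurable.comp (by fun_prop : Measurable fun p : ℝ × ℝ => (p.1 - v, p.2))
    refine ((hm s).sub ((hm 0).const_mul _)).add (Measurable.const_mul ?_ β)
    have hm₃ : StronglyMeasurable
        (Function.uncurry fun (p : ℝ × ℝ) u => exp (β * (s - u)) • k (p.1 - u) p.2) := by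
      have hq : Measurable fun q : (ℝ × ℝ) × ℝ => (q.1.1 - q.2, q.1.2) := by fun_prop
      have he : Measurable fun q : (ℝ × ℝ) × ℝ => exp (β * (s - q.2)) := by fun_prop
      exact (he.smul (h.measurable.comp hq)).stronglyMeasurable
    simp only [intervalIntegral_eq_integral_uIoc]
    exact hm₃.integral_prod_right.measurable.const_mul _
  exists_bound R := by
    obtain ⟨G, hG, hb⟩ := h.exists_bound (R + |s|)
    refine ⟨_, hG.const_mul (1 + exp (β * s) + |β| * (exp (|β| * |s|) * |s|)), fun w hw ω =>
      norm_ouIntegral_le (m := fun u => k (w - u) ω) (M := G ω) fun u hu => hb _ ?_ ω⟩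
    have hus : |u| ≤ |s| := by simpa using abs_sub_left_of_mem_uIcc hu
    exact (abs_sub _ _).trans (add_le_add hw hus)

theorem ouIntegral_ouIntegral_integral (h : LocallyDominated k) (β s t : ℝ) :
    ouIntegral β t (fun w => ouIntegral β s fun u => ∫ ω, k (w - u) ω)
      = ∫ ω, ouIntegral β t fun w => ouIntegral β s fun u => k (w - u) ω := by
  rw [← (h.ouIntegral_const_sub β s).ouIntegral_integral]
  congr 1 with w
  exact (h.comp_const_sub w).ouIntegral_integral β s

end LocallyDominated

/-! ### Spectral representation of the covariance kernel -/

section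
variable {β s t ω : ℝ}

/-- The harmonic wave of frequency `ω`, at time `t`. -/
noncomputable def wave (t ω : ℝ) : ℂ := Complex.exp ((ω * t : ℝ) * Complex.I)

/-- The response at time `t` of the Ornstein–Uhlenbeck flow to the forcing `wave · ω`. Defining it
by the integral, and not by its value `(e ^ (iωt) - e ^ (βt)) / (iω - β)`, covers `ω = β = 0`. -/
noncomputable def ouFourier (β t ω : ℝ) : ℂ := ∫ v in (0 : ℝ)..t, exp (β * (t - v)) • wave v ω

@[fun_prop]
theorem continuous_wave : Continuous fun p : ℝ × ℝ => wave p.1 p.2 := by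
  unfold wave
  fun_prop

theorem norm_wave (t ω : ℝ) : ‖wave t ω‖ = 1 := Complex.norm_exp_ofReal_mul_I _

theorem hasDerivAt_wave (t ω : ℝ) :
    HasDerivAt (fun t => wave t ω) (ω * Complex.I * wave t ω) t := by
  have h : HasDerivAt (fun t : ℝ => ((ω * t : ℝ) : ℂ) * Complex.I) (ω * Complex.I) t := by
    simpa using ((hasDerivAt_id t).const_mul ω).ofReal_comp.mul_const Complex.I
  exact h.cexp.congr_deriv (mul_comm _ _)

theorem inner_wave (u v ω : ℝ) : inner ℝ (wave u ω) (wave v ω) = cos (ω * (v - u)) := by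
  rw [Complex.inner, wave, wave, ← Complex.exp_conj, ← Complex.exp_add,
    show (ω * v : ℝ) * Complex.I + (starRingEnd ℂ) ((ω * u : ℝ) * Complex.I)
      = (ω * (v - u) : ℝ) * Complex.I by simp; ring, Complex.exp_ofReal_mul_I_re]

theorem ouIntegral_wave : ouIntegral β t (fun v => wave v ω) = ω * Complex.I * ouFourier β t ω := by
  rw [ouIntegral_eq_integral_deriv countable_empty (by fun_prop)
    (fun v _ => hasDerivAt_wave v ω) (Continuous.intervalIntegrable (by fun_prop) _ _), ouFourier,
    ← intervalIntegral.integral_const_mul]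
  simp only [mul_smul_comm]

theorem mul_ouFourier (β t ω : ℝ) :
    (ω * Complex.I - β) * ouFourier β t ω = wave t ω - exp (β * t) := by
  rw [sub_mul, ← ouIntegral_wave, ouIntegral, ← ouFourier]
  simp [wave]

theorem ouIntegral_ouIntegral_cos :
    ouIntegral β t (fun w => ouIntegral β s fun u => cos (ω * (w - u)))
      = ω ^ 2 * inner ℝ (ouFourier β s ω) (ouFourier β t ω) := by
  have inside (w : ℝ) : ouIntegral β s (fun u => cos (ω * (w - u)))
      = innerSL ℝ (ω * Complex.I * ouFourier β s ω) (wave w ω) := by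
    simp only [← inner_wave, ← ouIntegral_wave, innerSL_apply_apply, real_inner_comm (wave w ω)]
    exact ouIntegral_clm_apply (innerSL ℝ (wave w ω)) (by fun_prop)
  simp only [inside]
  rw [ouIntegral_clm_apply _ (by fun_prop), ouIntegral_wave, innerSL_apply_apply]
  simp only [Complex.inner, map_mul, Complex.conj_ofReal, Complex.conj_I]
  rw [show ω * Complex.I * ouFourier β t ω
        * (ω * -Complex.I * (starRingEnd ℂ) (ouFourier β s ω))
      = ((ω ^ 2 : ℝ) : ℂ) * (ouFourier β t ω * (starRingEnd ℂ) (ouFourier β s ω)) by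
    push_cast
    linear_combination (-(ω : ℂ) ^ 2 * ouFourier β t ω * (starRingEnd ℂ) (ouFourier β s ω))
      * Complex.I_sq, Complex.re_ofReal_mul]

theorem ouIntegral_ouIntegral_one_sub_cos :
    ouIntegral β t (fun w => ouIntegral β s fun u => 1 - cos (ω * (w - u)))
      = -(ω ^ 2 * inner ℝ (ouFourier β s ω) (ouFourier β t ω)) := by
  have inside (w : ℝ) : ouIntegral β s (fun u => 1 - cos (ω * (w - u)))
      = -ouIntegral β s fun u => cos (ω * (w - u)) := by
    rw [ouIntegral_sub (by fun_prop) (by fun_prop), ouIntegral_const, zero_sub]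
  simp only [inside, ouIntegral_neg, ouIntegral_ouIntegral_cos]

end

/-- The constant of the spectral density `spectralConst H * |ω| ^ (1 - 2 * H)` of fractional
Gaussian noise of Hurst index `H`. -/
noncomputable def spectralConst (H : ℝ) : ℝ := sin (π * H) * Gamma (2 * H + 1) / (2 * π)

section
variable {H : ℝ} (hH : H ∈ Ioo (0 : ℝ) 1)
include hH

theorem spectralConst_pos : 0 < spectralConst H :=
  div_pos (sin_pi_mul_mul_Gamma_pos hH) (by positivity)

theorem integral_spectralConst_mul_one_sub_cos (x : ℝ) :
    ∫ ω, spectralConst H * ((1 - cos (ω * x)) * |ω| ^ (-1 - 2 * H)) = |x| ^ (2 * H) / 2 := by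
  have h := (sin_pi_mul_mul_Gamma_pos hH).ne'
  rw [MeasureTheory.integral_const_mul, integral_one_sub_cos_mul_abs_rpow hH, spectralConst,
    mul_left_comm, div_mul_div_cancel₀' h]
  field_simp

omit hH in
theorem abs_rpow_one_sub_two_mul {ω : ℝ} (hω : ω ≠ 0) :
    |ω| ^ (1 - 2 * H) = ω ^ 2 * |ω| ^ (-1 - 2 * H) := by
  rw [← sq_abs ω, ← rpow_natCast, ← rpow_add (abs_pos.2 hω)]
  congr 1
  push_cast
  ring

omit hH in
theorem one_sub_cos_mul_abs_rpow_le {R x : ℝ} (hx : |x| ≤ R) (ω : ℝ) :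
    |(1 - cos (ω * x)) * |ω| ^ (-1 - 2 * H)|
      ≤ (R ^ 2 / 2 + 2) * (|ω| ^ (1 - 2 * H) / (1 + ω ^ 2)) := by
  rcases eq_or_ne ω 0 with rfl | hω
  · simp only [zero_mul, cos_zero, sub_self, abs_zero]
    positivity
  have hcos : (1 - cos (ω * x)) * (1 + ω ^ 2) ≤ (R ^ 2 / 2 + 2) * ω ^ 2 := by
    have hsq : 1 - cos (ω * x) ≤ ω ^ 2 * R ^ 2 / 2 := by
      have := one_sub_sq_div_two_le_cos (x := ω * x)
      have := mul_le_mul_of_nonneg_left (sq_le_sq' (abs_le.1 hx).1 (abs_le.1 hx).2) (sq_nonneg ω)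
      nlinarith
    nlinarith [neg_one_le_cos (ω * x), sq_nonneg ω]
  rw [abs_of_nonneg (mul_nonneg (sub_nonneg.2 (cos_le_one _)) (by positivity)),
    abs_rpow_one_sub_two_mul hω, mul_div_assoc', le_div_iff₀ (by positivity), mul_right_comm,
    ← mul_assoc (_ + _)]
  gcongr

theorem locallyDominated_one_sub_cos : LocallyDominated fun x ω =>
    spectralConst H * ((1 - cos (ω * x)) * |ω| ^ (-1 - 2 * H)) where
  measurable := by
    unfold Function.uncurry
    fun_prop
  exists_bound R := by
    have hint : Integrable fun ω : ℝ => |ω| ^ (1 - 2 * H) / (1 + ω ^ 2) :=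
      integrable_abs_rpow_div_one_add_sq (by linarith [hH.2]) (by linarith [hH.1])
    refine ⟨_, (hint.const_mul (R ^ 2 / 2 + 2)).const_mul (spectralConst H), fun x hx ω => ?_⟩
    rw [abs_mul, abs_of_pos (spectralConst_pos hH)]
    exact mul_le_mul_of_nonneg_left (one_sub_cos_mul_abs_rpow_le hx ω) (spectralConst_pos hH).le

theorem ouIntegral_ouIntegral_abs_rpow (β s t : ℝ) :
    ouIntegral β t (fun w => ouIntegral β s fun u => |w - u| ^ (2 * H) / 2)
      = -(spectralConst H *
          ∫ ω, |ω| ^ (1 - 2 * H) * inner ℝ (ouFourier β s ω) (ouFourier β t ω)) := by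
  simp only [← integral_spectralConst_mul_one_sub_cos hH]
  rw [(locallyDominated_one_sub_cos hH).ouIntegral_ouIntegral_integral,
    ← MeasureTheory.integral_const_mul, ← MeasureTheory.integral_neg]
  refine integral_congr_ae ?_
  filter_upwards [compl_mem_ae_iff.2 (measure_singleton (0 : ℝ))] with ω hω
  have hsplit (x : ℝ) : spectralConst H * ((1 - cos (ω * x)) * |ω| ^ (-1 - 2 * H))
      = (spectralConst H * |ω| ^ (-1 - 2 * H)) • (1 - cos (ω * x)) := by
    rw [smul_eq_mul]
    ring
  simp only [hsplit, ouIntegral_smul, ouIntegral_ouIntegral_one_sub_cos]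
  rw [smul_eq_mul, abs_rpow_one_sub_two_mul hω]
  ring

end

theorem hasDerivAt_integral_exp_mul_comp_sub {k : ℝ → ℝ} (hk : Continuous k) (β s w : ℝ) :
    HasDerivAt (fun w => ∫ u in (0 : ℝ)..s, exp (β * (s - u)) * k (w - u))
      (exp (β * s) * k w - k (w - s)
        - β * ∫ u in (0 : ℝ)..s, exp (β * (s - u)) * k (w - u)) w := by
  have hN : Continuous fun y => exp (β * y) * k y := by fun_prop
  have hsubst (w : ℝ) : ∫ u in (0 : ℝ)..s, exp (β * (s - u)) * k (w - u)
      = exp (β * (s - w)) *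
        ((∫ y in (0 : ℝ)..w, exp (β * y) * k y) - ∫ y in (0 : ℝ)..w - s, exp (β * y) * k y) := by
    rw [integral_interval_sub_left (hN.intervalIntegrable _ _) (hN.intervalIntegrable _ _),
      ← intervalIntegral.integral_const_mul]
    have h := intervalIntegral.integral_comp_sub_left (a := 0) (b := s)
      (fun y => exp (β * (s - w)) * (exp (β * y) * k y)) w
    rw [sub_zero] at h
    rw [← h]
    congr 1 with u
    rw [← mul_assoc, ← exp_add]
    ring_nf
  have hprim (x : ℝ) : HasDerivAt (fun w => ∫ y in (0 : ℝ)..w, exp (β * y) * k y)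
      (exp (β * x) * k x) x :=
    (hN.integral_hasStrictDerivAt 0 x).hasDerivAt
  simp only [hsubst]
  refine ((hasDerivAt_exp_mul_const_sub β s w).mul
    ((hprim w).sub ((hprim (w - s)).comp_sub_const w s))).congr_deriv ?_
  have h₁ : exp (β * (s - w)) * exp (β * w) = exp (β * s) := by
    rw [← exp_add]
    ring_nf
  have h₂ : exp (β * (s - w)) * exp (β * (w - s)) = 1 := by
    rw [← exp_add, ← exp_zero]
    ring_nf
  simp only [Pi.sub_apply]
  linear_combination k w * h₁ - k (w - s) * h₂

theorem hasDerivAt_ouIntegral_const_sub {k k' : ℝ → ℝ} (hk : Continuous k) {β s w : ℝ}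
    (hw : HasDerivAt k (k' w) w) (hws : HasDerivAt k (k' (w - s)) (w - s)) :
    HasDerivAt (fun w => ouIntegral β s fun u => k (w - u))
      (k' (w - s) - exp (β * s) * k' w + β * (exp (β * s) * k w - k (w - s)
        - β * ∫ u in (0 : ℝ)..s, exp (β * (s - u)) * k (w - u))) w := by
  simp only [ouIntegral, smul_eq_mul, sub_zero]
  exact ((hws.comp_sub_const w s).sub (hw.const_mul _)).add
    ((hasDerivAt_integral_exp_mul_comp_sub hk β s w).const_mul β)

theorem ouIntegral_ouIntegral_eq_integral_deriv {k k' : ℝ → ℝ} (hk : Continuous k)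
    (hk' : ∀ x ≠ 0, HasDerivAt k (k' x) x) (hi : ∀ a b, IntervalIntegrable k' volume a b)
    (β s t : ℝ) :
    ouIntegral β t (fun w => ouIntegral β s fun u => k (w - u))
      = ∫ v in (0 : ℝ)..t,
          exp (β * (t - v)) • deriv (fun w => ouIntegral β s fun u => k (w - u)) v := by
  have hderiv : ∀ w ∉ ({0, s} : Set ℝ), HasDerivAt (fun w => ouIntegral β s fun u => k (w - u))
      (k' (w - s) - exp (β * s) * k' w + β * (exp (β * s) * k w - k (w - s)
        - β * ∫ u in (0 : ℝ)..s, exp (β * (s - u)) * k (w - u))) w := fun w hw => by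
    simp only [mem_insert_iff, mem_singleton_iff, not_or] at hw
    exact hasDerivAt_ouIntegral_const_sub hk (hk' w hw.1) (hk' _ (sub_ne_zero.2 hw.2))
  have hcount : ({0, s} : Set ℝ).Countable := countable_insert.2 (countable_singleton s)
  refine ouIntegral_eq_integral_deriv hcount ?_
    (fun w hw => (hderiv w hw).differentiableAt.hasDerivAt) ?_
  · simp only [ouIntegral, smul_eq_mul, sub_zero]
    fun_prop
  · have hshift := (hi (0 - s) (t - s)).comp_sub_right s
    rw [sub_add_cancel, sub_add_cancel] at hshift
    have hcont : Continuous fun w => exp (β * s) * k w - k (w - s)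
      - β * ∫ u in (0 : ℝ)..s, exp (β * (s - u)) * k (w - u) := by fun_prop
    have hi' := (hshift.sub ((hi 0 t).const_mul (exp (β * s)))).add
      ((hcont.intervalIntegrable 0 t).const_mul β)
    refine hi'.congr_ae (ae_restrict_of_ae ?_)
    filter_upwards [hcount.ae_notMem volume] with w hw
    exact (hderiv w hw).deriv.symm

section
variable {H : ℝ} (hH : H ∈ Ioo (0 : ℝ) 1)
include hH

theorem continuous_abs_rpow_div_two : Continuous fun x : ℝ => |x| ^ (2 * H) / 2 :=
  (continuous_abs.rpow_const fun _ => .inr (by linarith [hH.1])).div_const 2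

omit hH in
theorem hasDerivAt_abs_rpow_div_two {x : ℝ} (hx : x ≠ 0) :
    HasDerivAt (fun x : ℝ => |x| ^ (2 * H) / 2) (H * |x| ^ (2 * H - 1) * Real.sign x) x := by
  have h : HasDerivAt (fun x : ℝ => |x|) (Real.sign x) x := by
    rcases hx.lt_or_gt with hneg | hpos
    · simpa only [Real.sign_of_neg hneg] using hasDerivAt_abs_neg hneg
    · simpa only [Real.sign_of_pos hpos] using hasDerivAt_abs_pos hpos
  exact ((h.rpow_const (.inl (abs_pos.2 hx).ne')).div_const 2).congr_deriv (by ring)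

theorem intervalIntegrable_abs_rpow_mul_sign (a b : ℝ) :
    IntervalIntegrable (fun x : ℝ => H * |x| ^ (2 * H - 1) * Real.sign x) volume a b := by
  have hsign : Measurable Real.sign :=
    Measurable.ite measurableSet_Iio measurable_const
      (Measurable.ite measurableSet_Ioi measurable_const measurable_const)
  refine ((intervalIntegrable_abs_rpow (r := 2 * H - 1) (by linarith [hH.1]) a b).const_mul
    H).mono_fun (by fun_prop) (ae_of_all _ fun x => ?_)
  refine (norm_mul _ _).trans_le (mul_le_of_le_one_right (norm_nonneg _) ?_)
  rcases Real.sign_apply_eq x with h | h | h <;> simp [h]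

theorem integral_mul_sign_mul_exp (β s w : ℝ) :
    ∫ u in (0 : ℝ)..s, H * |w - u| ^ (2 * H - 1) * Real.sign (w - u) * exp (β * (s - u))
      = -ouIntegral β s fun u => |w - u| ^ (2 * H) / 2 := by
  have hderiv : ∀ u ∉ ({w} : Set ℝ), HasDerivAt (fun u => |w - u| ^ (2 * H) / 2)
      (-(H * |w - u| ^ (2 * H - 1) * Real.sign (w - u))) u := fun u hu =>
    (hasDerivAt_abs_rpow_div_two (sub_ne_zero.2 (Ne.symm hu))).comp_const_sub w u
  have hi := (intervalIntegrable_abs_rpow_mul_sign hH (w - 0) (w - s)).comp_sub_left w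
  simp only [sub_sub_cancel, sub_zero, sub_self] at hi
  have hcont : Continuous fun u => |w - u| ^ (2 * H) / 2 :=
    (continuous_abs_rpow_div_two hH).comp (continuous_const.sub continuous_id)
  rw [ouIntegral_eq_integral_deriv (countable_singleton w) hcont hderiv hi.neg,
    ← intervalIntegral.integral_neg]
  simp only [smul_eq_mul, mul_comm (exp _), neg_mul, neg_neg]

theorem fOUkernel_eq_neg_ouIntegral (β s t : ℝ) :
    fOUkernel H β s t
      = -ouIntegral β t fun w => ouIntegral β s fun u => |w - u| ^ (2 * H) / 2 := by
  rw [ouIntegral_ouIntegral_eq_integral_deriv (continuous_abs_rpow_div_two hH)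
    (fun x hx => hasDerivAt_abs_rpow_div_two hx) (intervalIntegrable_abs_rpow_mul_sign hH)]
  simp only [fOUkernel, integral_mul_sign_mul_exp hH, deriv.fun_neg, smul_eq_mul, mul_neg,
    intervalIntegral.integral_neg]

theorem fOUkernel_eq_integral_inner (β s t : ℝ) :
    fOUkernel H β s t = ∫ ω, spectralConst H * |ω| ^ (1 - 2 * H)
      * inner ℝ (ouFourier β s ω) (ouFourier β t ω) := by
  rw [fOUkernel_eq_neg_ouIntegral hH, ouIntegral_ouIntegral_abs_rpow hH, neg_neg,
    ← MeasureTheory.integral_const_mul]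
  simp only [mul_assoc]

end

/-! ### The variational principle for the Wiener–Hopf equation -/

/-- A continuous solution `g` on `[0, T]` of the Wiener–Hopf equation of the kernel `K` with noise
intensity `l`: the optimal weights for filtering a signal of covariance `K` in white noise. -/
structure IsWienerHopfSolution (K : ℝ → ℝ → ℝ) (T l : ℝ) (g : ℝ → ℝ) : Prop where
  continuous : Continuous g
  eq : ∀ s ∈ Icc 0 T, l * g s + ∫ r in (0 : ℝ)..T, K r s * g r = K s T

section
variable {Ω E : Type*} [NormedAddCommGroup E] [InnerProductSpace ℝ E]

/-- The spectral transfer function of the error `X T - ∫ t in 0..T, g t * X t` that the weights `g`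
make when the signal `X` has the transfer functions `F t`. -/
noncomputable def filterResidual (T : ℝ) (F : ℝ → Ω → E) (g : ℝ → ℝ) (ω : Ω) : E :=
  F T ω - ∫ t in (0 : ℝ)..T, g t • F t ω

theorem exists_abs_le_of_continuous {g : ℝ → ℝ} (hg : Continuous g) (T : ℝ) :
    ∃ M, 0 ≤ M ∧ ∀ t ∈ uIcc 0 T, |g t| ≤ M := by
  obtain ⟨M, hM⟩ := isCompact_uIcc.exists_bound_of_continuousOn (hg.continuousOn (s := uIcc 0 T))
  exact ⟨M, (norm_nonneg _).trans (hM 0 left_mem_uIcc), hM⟩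

theorem norm_filterResidual_le {T M : ℝ} (hT : 0 ≤ T) {F : ℝ → Ω → E} {D : Ω → ℝ}
    (hD : ∀ t ∈ Icc 0 T, ∀ ω, ‖F t ω‖ ≤ D ω) {g : ℝ → ℝ} (hM₀ : 0 ≤ M)
    (hM : ∀ t ∈ uIcc 0 T, |g t| ≤ M) (ω : Ω) : ‖filterResidual T F g ω‖ ≤ (1 + M * T) * D ω := by
  have h := norm_integral_le_of_norm_le_const (a := 0) (b := T) (f := fun t => g t • F t ω)
    (C := M * D ω) fun t ht => by
      have ht' := uIoc_subset_uIcc ht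
      rw [norm_smul]
      exact mul_le_mul (hM t ht') (hD t (by rwa [← uIcc_of_le hT]) ω) (norm_nonneg _) hM₀
  rw [sub_zero, abs_of_nonneg hT] at h
  calc ‖filterResidual T F g ω‖ ≤ ‖F T ω‖ + ‖∫ t in (0 : ℝ)..T, g t • F t ω‖ := norm_sub_le _ _
    _ ≤ D ω + M * D ω * T := add_le_add (hD T ⟨hT, le_rfl⟩ ω) h
    _ = _ := by ring

variable [MeasurableSpace Ω]

/-- A factorization `K s t = ⟪F s, F t⟫` of a covariance kernel in `L²(ν; E)`, by functions that are
dominated in `L²` uniformly over `[0, T]`. -/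
structure IsSpectralFactor (K : ℝ → ℝ → ℝ) (ν : Measure Ω) (T : ℝ) (F : ℝ → Ω → E) : Prop where
  stronglyMeasurable : StronglyMeasurable (Function.uncurry F)
  continuous : ∀ ω, Continuous fun t => F t ω
  exists_bound : ∃ D : Ω → ℝ, MemLp D 2 ν ∧ ∀ t ∈ Icc 0 T, ∀ ω, ‖F t ω‖ ≤ D ω
  kernel_eq : ∀ s t, K s t = ∫ ω, inner ℝ (F s ω) (F t ω) ∂ν

theorem stronglyMeasurable_filterResidual {T : ℝ} {F : ℝ → Ω → E}
    (hF : StronglyMeasurable (Function.uncurry F)) {g : ℝ → ℝ} (hg : Continuous g) :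
    StronglyMeasurable (filterResidual T F g) := by
  have hgF : StronglyMeasurable (Function.uncurry fun ω t => g t • F t ω) :=
    (hg.measurable.comp measurable_snd).stronglyMeasurable.smul
      (hF.comp_measurable measurable_swap)
  refine hF.of_uncurry_left.sub ?_
  simp only [intervalIntegral_eq_integral_uIoc]
  exact hgF.integral_prod_right.const_smul _

theorem integrable_inner_of_memLp {ν : Measure Ω} {A B : Ω → E} (hA : MemLp A 2 ν)
    (hB : MemLp B 2 ν) : Integrable (fun ω => inner ℝ (A ω) (B ω)) ν :=
  (hA.norm.integrable_mul hB.norm).mono' (hA.1.inner hB.1)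
    (ae_of_all _ fun _ => norm_inner_le_norm _ _)

theorem two_mul_integral_inner_le_of_memLp {ν : Measure Ω} {A B : Ω → E} (hA : MemLp A 2 ν)
    (hB : MemLp B 2 ν) :
    2 * ∫ ω, inner ℝ (A ω) (B ω) ∂ν ≤ (∫ ω, ‖A ω‖ ^ 2 ∂ν) + ∫ ω, ‖B ω‖ ^ 2 ∂ν := by
  rw [← MeasureTheory.integral_add hA.norm.integrable_sq hB.norm.integrable_sq,
    ← MeasureTheory.integral_const_mul]
  refine integral_mono ((integrable_inner_of_memLp hA hB).const_mul 2)
    (hA.norm.integrable_sq.add hB.norm.integrable_sq) fun ω => ?_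
  linarith [norm_sub_sq_real (A ω) (B ω), sq_nonneg ‖A ω - B ω‖]

theorem integral_inner_filterResidual [CompleteSpace E] {ν : Measure Ω} [SFinite ν] {T : ℝ}
    {A : Ω → E} (hA : StronglyMeasurable A) {F : ℝ → Ω → E}
    (hF : StronglyMeasurable (Function.uncurry F)) (hc : ∀ ω, Continuous fun t => F t ω)
    {G : Ω → ℝ} (hG : Integrable G ν)
    (hb : ∀ t ∈ uIcc 0 T, ∀ ω, ‖A ω‖ * ‖F t ω‖ ≤ G ω) {g : ℝ → ℝ} (hg : Continuous g) :
    Integrable (fun ω => inner ℝ (A ω) (filterResidual T F g ω)) ν ∧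
      ∫ ω, inner ℝ (A ω) (filterResidual T F g ω) ∂ν
        = ∫ ω, inner ℝ (A ω) (F T ω) ∂ν
          - ∫ t in (0 : ℝ)..T, g t * (∫ ω, inner ℝ (A ω) (F t ω) ∂ν) := by
  obtain ⟨M, hM₀, hM⟩ := exists_abs_le_of_continuous hg T
  have hAF : StronglyMeasurable fun p : ℝ × Ω => inner ℝ (A p.2) (F p.1 p.2) :=
    (hA.comp_measurable measurable_snd).inner hF
  have hinner (t : ℝ) (ht : t ∈ uIcc 0 T) (ω : Ω) : |inner ℝ (A ω) (F t ω)| ≤ G ω :=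
    (abs_real_inner_le_norm _ _).trans (hb t ht ω)
  obtain ⟨hswap, hi⟩ := integral_integral_swap_of_dominated (t := T)
    (A := fun t ω => g t * inner ℝ (A ω) (F t ω))
    ((hg.measurable.comp measurable_fst).mul hAF.measurable) (hG.const_mul M) fun t ht ω => by
      rw [abs_mul]
      exact mul_le_mul (hM t ht) (hinner t ht ω) (abs_nonneg _) hM₀
  have hFT : Integrable (fun ω => inner ℝ (A ω) (F T ω)) ν :=
    hG.mono' (hA.inner hF.of_uncurry_left).aestronglyMeasurable
      (ae_of_all _ (hinner T right_mem_uIcc))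
  have hres (ω : Ω) : inner ℝ (A ω) (filterResidual T F g ω)
      = inner ℝ (A ω) (F T ω) - ∫ t in (0 : ℝ)..T, g t * inner ℝ (A ω) (F t ω) := by
    have h := (innerSL ℝ (A ω)).intervalIntegral_comp_comm
      (Continuous.intervalIntegrable (hg.smul (hc ω)) 0 T (μ := volume))
    simp only [innerSL_apply_apply, Pi.smul_apply', inner_smul_right] at h
    rw [filterResidual, inner_sub_right, ← h]
  simp only [hres, ← MeasureTheory.integral_const_mul]
  exact ⟨hFT.sub hi, by rw [MeasureTheory.integral_sub hFT hi, hswap]⟩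

theorem two_mul_integral_mul_le {T : ℝ} (hT : 0 ≤ T) {f g : ℝ → ℝ} (hf : Continuous f)
    (hg : Continuous g) :
    2 * ∫ t in (0 : ℝ)..T, f t * g t
      ≤ (∫ t in (0 : ℝ)..T, f t ^ 2) + ∫ t in (0 : ℝ)..T, g t ^ 2 := by
  rw [← intervalIntegral.integral_add (Continuous.intervalIntegrable (by fun_prop) _ _)
    (Continuous.intervalIntegrable (by fun_prop) _ _), ← intervalIntegral.integral_const_mul]
  refine intervalIntegral.integral_mono_on hT (Continuous.intervalIntegrable (by fun_prop) _ _)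
    (Continuous.intervalIntegrable (by fun_prop) _ _) fun t _ => ?_
  linarith [two_mul_le_add_sq (f t) (g t)]

namespace IsSpectralFactor
variable {K : ℝ → ℝ → ℝ} {ν : Measure Ω} {T l : ℝ} {F : ℝ → Ω → E}
  {g g' : ℝ → ℝ}

theorem memLp (h : IsSpectralFactor K ν T F) {t : ℝ} (ht : t ∈ Icc 0 T) :
    MemLp (F t) 2 ν := by
  obtain ⟨D, hD, hb⟩ := h.exists_bound
  refine hD.mono h.stronglyMeasurable.of_uncurry_left.aestronglyMeasurable (ae_of_all _ fun ω => ?_)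
  exact (hb t ht ω).trans (le_abs_self _)

theorem memLp_filterResidual (h : IsSpectralFactor K ν T F) (hT : 0 ≤ T) (hg : Continuous g) :
    MemLp (filterResidual T F g) 2 ν := by
  obtain ⟨D, hD, hb⟩ := h.exists_bound
  obtain ⟨M, hM₀, hM⟩ := exists_abs_le_of_continuous hg T
  refine hD.of_le_mul (c := 1 + M * T)
    (stronglyMeasurable_filterResidual h.stronglyMeasurable hg).aestronglyMeasurable
    (ae_of_all _ fun ω => (norm_filterResidual_le hT hb hM₀ hM ω).trans ?_)
  gcongr
  exact le_abs_self _

variable [CompleteSpace E] [SFinite ν]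

theorem integral_inner_filterResidual (h : IsSpectralFactor K ν T F) (hT : 0 ≤ T) {A : Ω → E}
    (hA : StronglyMeasurable A) (hA₂ : MemLp A 2 ν) (hg : Continuous g) :
    ∫ ω, inner ℝ (A ω) (filterResidual T F g ω) ∂ν
      = ∫ ω, inner ℝ (A ω) (F T ω) ∂ν
        - ∫ t in (0 : ℝ)..T, g t * (∫ ω, inner ℝ (A ω) (F t ω) ∂ν) := by
  obtain ⟨D, hD, hb⟩ := h.exists_bound
  refine (_root_.integral_inner_filterResidual hA h.stronglyMeasurable h.continuous
    (hA₂.norm.integrable_mul hD) (fun t ht ω => ?_) hg).2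
  rw [uIcc_of_le hT] at ht
  exact mul_le_mul_of_nonneg_left (hb t ht ω) (norm_nonneg _)

theorem mul_eq_integral_inner (h : IsSpectralFactor K ν T F) (hg : IsWienerHopfSolution K T l g)
    {s : ℝ} (hs : s ∈ Icc 0 T) :
    l * g s = ∫ ω, inner ℝ (filterResidual T F g ω) (F s ω) ∂ν := by
  simp only [real_inner_comm (F s _)]
  rw [h.integral_inner_filterResidual (hs.1.trans hs.2)
    h.stronglyMeasurable.of_uncurry_left (h.memLp hs) hg.continuous, ← h.kernel_eq,
    eq_sub_iff_add_eq, ← hg.eq s hs]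
  congr 2 with r
  simp only [h.kernel_eq r s, real_inner_comm (F s _), mul_comm]

theorem mul_sub_eq_integral_inner (h : IsSpectralFactor K ν T F) (hT : 0 ≤ T)
    (hg : IsWienerHopfSolution K T l g) (hg' : Continuous g') :
    l * g T - l * ∫ t in (0 : ℝ)..T, g t * g' t
      = ∫ ω, inner ℝ (filterResidual T F g ω) (filterResidual T F g' ω) ∂ν := by
  rw [h.integral_inner_filterResidual hT
    (stronglyMeasurable_filterResidual h.stronglyMeasurable hg.continuous)
    (h.memLp_filterResidual hT hg.continuous) hg', ← h.mul_eq_integral_inner hg ⟨hT, le_rfl⟩,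
    ← intervalIntegral.integral_const_mul]
  congr 1
  refine intervalIntegral.integral_congr fun t ht => ?_
  rw [uIcc_of_le hT] at ht
  simp only [← h.mul_eq_integral_inner hg ht]
  ring

theorem mul_eq_energy (h : IsSpectralFactor K ν T F) (hT : 0 ≤ T)
    (hg : IsWienerHopfSolution K T l g) :
    l * g T = (∫ ω, ‖filterResidual T F g ω‖ ^ 2 ∂ν) + l * ∫ t in (0 : ℝ)..T, g t ^ 2 := by
  have hcross := h.mul_sub_eq_integral_inner hT hg hg.continuous
  simp only [real_inner_self_eq_norm_sq, ← pow_two] at hcross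
  linarith

/-- Completing the square: the energy of `g'` exceeds that of the solution `g` by the energy of the
difference. -/
theorem mul_le_energy (h : IsSpectralFactor K ν T F) (hT : 0 ≤ T) (hl : 0 ≤ l)
    (hg : IsWienerHopfSolution K T l g) (hg' : Continuous g') :
    l * g T ≤ (∫ ω, ‖filterResidual T F g' ω‖ ^ 2 ∂ν) + l * ∫ t in (0 : ℝ)..T, g' t ^ 2 := by
  have hR := h.memLp_filterResidual hT hg.continuous
  have hR' := h.memLp_filterResidual hT hg'
  have hspectral : 2 * ∫ ω, inner ℝ (filterResidual T F g ω) (filterResidual T F g' ω) ∂ν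
      ≤ (∫ ω, ‖filterResidual T F g ω‖ ^ 2 ∂ν) + ∫ ω, ‖filterResidual T F g' ω‖ ^ 2 ∂ν :=
    two_mul_integral_inner_le_of_memLp hR hR'
  have henergy := h.mul_eq_energy hT hg
  have hcross := h.mul_sub_eq_integral_inner hT hg hg'
  have htemporal :=
    mul_le_mul_of_nonneg_left (two_mul_integral_mul_le hT hg.continuous hg') hl
  linarith

/-- The dual of `mul_le_energy`: the Lagrange multiplier `A` bounds the solution from below. -/
theorem two_mul_integral_inner_le (h : IsSpectralFactor K ν T F) (hT : 0 ≤ T) (hl : 0 < l)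
    (hg : IsWienerHopfSolution K T l g) {A : Ω → E} (hA : StronglyMeasurable A)
    (hA₂ : MemLp A 2 ν) {φ : ℝ → ℝ} (hφ : Continuous φ)
    (hφA : ∀ t ∈ Icc 0 T, ∫ ω, inner ℝ (A ω) (F t ω) ∂ν = φ t) :
    2 * φ T ≤ g T + (l * (∫ ω, ‖A ω‖ ^ 2 ∂ν) + ∫ t in (0 : ℝ)..T, φ t ^ 2) := by
  have hsplit : φ T = ∫ ω, inner ℝ (A ω) (filterResidual T F g ω) ∂ν
      + ∫ t in (0 : ℝ)..T, g t * φ t := by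
    have hcongr : ∫ t in (0 : ℝ)..T, g t * (∫ ω, inner ℝ (A ω) (F t ω) ∂ν)
        = ∫ t in (0 : ℝ)..T, g t * φ t := intervalIntegral.integral_congr fun t ht => by
      rw [uIcc_of_le hT] at ht
      simp only [hφA t ht]
    rw [h.integral_inner_filterResidual hT hA hA₂ hg.continuous, hcongr, hφA T ⟨hT, le_rfl⟩,
      sub_add_cancel]
  have hspectral : 2 * (l * ∫ ω, inner ℝ (A ω) (filterResidual T F g ω) ∂ν)
      ≤ l ^ 2 * (∫ ω, ‖A ω‖ ^ 2 ∂ν) + ∫ ω, ‖filterResidual T F g ω‖ ^ 2 ∂ν := by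
    simpa only [Pi.smul_apply, real_inner_smul_left, norm_smul, mul_pow, norm_of_nonneg hl.le,
      MeasureTheory.integral_const_mul] using
      two_mul_integral_inner_le_of_memLp (hA₂.const_smul l)
        (h.memLp_filterResidual hT hg.continuous)
  have htemporal := mul_le_mul_of_nonneg_left (two_mul_integral_mul_le hT hg.continuous hφ) hl.le
  have henergy := h.mul_eq_energy hT hg
  refine le_of_mul_le_mul_left ?_ hl
  rw [hsplit]
  linarith

end IsSpectralFactor
end

section
variable {H : ℝ} (hH : H ∈ Ioo (0 : ℝ) 1)

/-- The spectral measure of fractional Gaussian noise of Hurst index `H`. -/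
noncomputable def spectralMeasure (H : ℝ) : Measure ℝ :=
  volume.withDensity fun ω => ENNReal.ofReal (spectralConst H * |ω| ^ (1 - 2 * H))

instance (H : ℝ) : SFinite (spectralMeasure H) := by
  unfold spectralMeasure
  infer_instance

include hH

theorem spectralDensity_nonneg (ω : ℝ) : 0 ≤ spectralConst H * |ω| ^ (1 - 2 * H) :=
  mul_nonneg (spectralConst_pos hH).le (by positivity)

theorem integral_spectralMeasure (f : ℝ → ℝ) :
    ∫ ω, f ω ∂spectralMeasure H = ∫ ω, spectralConst H * |ω| ^ (1 - 2 * H) * f ω := by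
  rw [spectralMeasure, integral_withDensity_eq_integral_toReal_smul (by fun_prop)
    (ae_of_all _ fun _ => ENNReal.ofReal_lt_top)]
  simp only [ENNReal.toReal_ofReal (spectralDensity_nonneg hH _), smul_eq_mul]

theorem integrable_spectralMeasure_iff {f : ℝ → ℝ} :
    Integrable f (spectralMeasure H) ↔
      Integrable fun ω => spectralConst H * |ω| ^ (1 - 2 * H) * f ω := by
  rw [spectralMeasure, integrable_withDensity_iff_integrable_smul' (by fun_prop)
    (ae_of_all _ fun _ => ENNReal.ofReal_lt_top)]
  simp only [ENNReal.toReal_ofReal (spectralDensity_nonneg hH _), smul_eq_mul]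

theorem memLp_two_spectralMeasure_of_sq_le {D : ℝ → ℝ} (hD : Measurable D) {C : ℝ}
    (hC : ∀ ω, D ω ^ 2 ≤ C / (1 + ω ^ 2)) : MemLp D 2 (spectralMeasure H) := by
  rw [memLp_two_iff_integrable_sq hD.aestronglyMeasurable, integrable_spectralMeasure_iff hH]
  have hint : Integrable fun ω : ℝ => |ω| ^ (1 - 2 * H) / (1 + ω ^ 2) :=
    integrable_abs_rpow_div_one_add_sq (by linarith [hH.2]) (by linarith [hH.1])
  refine (hint.const_mul (spectralConst H * C)).mono' (by fun_prop) (ae_of_all _ fun ω => ?_)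
  rw [norm_of_nonneg (mul_nonneg (spectralDensity_nonneg hH ω) (sq_nonneg _))]
  calc _ ≤ spectralConst H * |ω| ^ (1 - 2 * H) * (C / (1 + ω ^ 2)) :=
        mul_le_mul_of_nonneg_left (hC ω) (spectralDensity_nonneg hH ω)
    _ = _ := by ring

end

section
variable {β T t : ℝ}

theorem norm_ouFourier_le (ht : t ∈ Icc 0 T) (ω : ℝ) :
    ‖ouFourier β t ω‖ ≤ exp (|β| * T) * T := by
  have ht' : |t| ≤ T := by simpa [abs_of_nonneg ht.1] using ht.2
  refine (norm_integral_exp_smul_le (M := 1) fun v _ => (norm_wave v ω).le).trans ?_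
  rw [mul_one]
  gcongr

theorem abs_mul_norm_ouFourier_le (ht : t ∈ Icc 0 T) (ω : ℝ) :
    |ω| * ‖ouFourier β t ω‖ ≤ 1 + exp (|β| * T) + |β| * (exp (|β| * T) * T) := by
  have hexp : exp (β * t) ≤ exp (|β| * T) :=
    exp_le_exp.2 (mul_le_mul (le_abs_self β) ht.2 ht.1 (abs_nonneg β))
  have hnorm : |ω| * ‖ouFourier β t ω‖ = ‖wave t ω - exp (β * t) + β * ouFourier β t ω‖ := by
    rw [← mul_ouFourier, sub_mul, sub_add_cancel]
    simp
  rw [hnorm]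
  refine (norm_add_le _ _).trans (add_le_add ((norm_sub_le _ _).trans ?_) ?_)
  · rw [norm_wave, Complex.norm_of_nonneg (exp_pos _).le]
    gcongr
  · rw [norm_mul, Complex.norm_real, norm_eq_abs]
    exact mul_le_mul_of_nonneg_left (norm_ouFourier_le ht ω) (abs_nonneg β)

theorem exists_norm_ouFourier_sq_le (β T : ℝ) :
    ∃ C, 0 ≤ C ∧ ∀ t ∈ Icc 0 T, ∀ ω, ‖ouFourier β t ω‖ ^ 2 ≤ C / (1 + ω ^ 2) := by
  refine ⟨(exp (|β| * T) * T) ^ 2 + (1 + exp (|β| * T) + |β| * (exp (|β| * T) * T)) ^ 2,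
    by positivity, fun t ht ω => (le_div_iff₀ (by positivity)).2 ?_⟩
  have h₀ := pow_le_pow_left₀ (norm_nonneg _) (norm_ouFourier_le (β := β) ht ω) 2
  have h₁ := pow_le_pow_left₀ (by positivity) (abs_mul_norm_ouFourier_le (β := β) ht ω) 2
  rw [mul_pow, sq_abs] at h₁
  linarith

theorem ouFourier_eq_exp_smul (β t ω : ℝ) :
    ouFourier β t ω = exp (β * t) • ∫ v in (0 : ℝ)..t, exp (-(β * v)) • wave v ω := by
  rw [← intervalIntegral.integral_smul, ouFourier]
  congr with v
  rw [smul_smul, ← exp_add]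
  ring_nf

theorem continuous_ouFourier (β : ℝ) : Continuous fun p : ℝ × ℝ => ouFourier β p.1 p.2 := by
  simp only [ouFourier_eq_exp_smul]
  have h : Continuous fun p : ℝ × ℝ => ∫ v in (0 : ℝ)..p.1, exp (-(β * v)) • wave v p.2 :=
    have hc : Continuous (Function.uncurry fun ω v => exp (-(β * v)) • wave v ω) := by
      unfold Function.uncurry
      fun_prop
    (continuous_parametric_primitive_of_continuous hc).comp continuous_swap
  have hexp : Continuous fun p : ℝ × ℝ => exp (β * p.1) := by fun_prop
  exact hexp.smul h

theorem hasDerivAt_ouFourier (β t ω : ℝ) :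
    HasDerivAt (fun t => ouFourier β t ω) (wave t ω + β * ouFourier β t ω) t := by
  have hexp : HasDerivAt (fun t => exp (β * t)) (exp (β * t) * β) t := by
    simpa using ((hasDerivAt_id t).const_mul β).exp
  have hc : Continuous fun v => exp (-(β * v)) • wave v ω := by fun_prop
  have h := hexp.smul (hc.integral_hasStrictDerivAt 0 t).hasDerivAt
  refine (h.congr_of_eventuallyEq (Eventually.of_forall fun t => ?_)).congr_deriv ?_
  · exact ouFourier_eq_exp_smul β t ω
  · rw [smul_smul, ← exp_add, add_neg_cancel, exp_zero, one_smul, mul_comm (exp _), mul_smul,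
      ← ouFourier_eq_exp_smul, Complex.real_smul]

theorem norm_ouFourier_sub_le {s : ℝ} (hs : s ∈ Icc 0 T) (ht : t ∈ Icc 0 T) (ω : ℝ) :
    ‖ouFourier β t ω - ouFourier β s ω‖ ≤ (1 + |β| * (exp (|β| * T) * T)) * |t - s| := by
  refine (convex_Icc 0 T).norm_image_sub_le_of_norm_hasDerivWithin_le
    (fun v _ => (hasDerivAt_ouFourier β v ω).hasDerivWithinAt) (fun v hv => ?_) hs ht
  refine (norm_add_le _ _).trans (add_le_add (norm_wave v ω).le ?_)
  rw [norm_mul, Complex.norm_real, norm_eq_abs]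
  exact mul_le_mul_of_nonneg_left (norm_ouFourier_le hv ω) (abs_nonneg β)

theorem isSpectralFactor_ouFourier {H : ℝ} (hH : H ∈ Ioo (0 : ℝ) 1) (β T : ℝ) :
    IsSpectralFactor (fOUkernel H β) (spectralMeasure H) T (ouFourier β) where
  stronglyMeasurable := (continuous_ouFourier β).stronglyMeasurable
  continuous ω := (continuous_ouFourier β).comp (Continuous.prodMk_left ω)
  exists_bound := by
    obtain ⟨C, hC, hb⟩ := exists_norm_ouFourier_sq_le β T
    refine ⟨fun ω => √(C / (1 + ω ^ 2)), memLp_two_spectralMeasure_of_sq_le hH (by fun_prop)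
      fun ω => (sq_sqrt (by positivity)).le, fun t ht ω => le_sqrt_of_sq_le (hb t ht ω)⟩
  kernel_eq s t := by
    rw [fOUkernel_eq_integral_inner hH, integral_spectralMeasure hH]

end

/-! ### Polynomials in the low-pass filter -/

section
open Polynomial
open scoped FourierTransform ComplexConjugate

/-- The transfer function of the first-order low-pass filter, at frequency `x`. -/
noncomputable def lowPass (x : ℝ) : ℂ := (1 + x * Complex.I)⁻¹

theorem one_add_mul_I_ne_zero (x : ℝ) : 1 + x * Complex.I ≠ 0 := fun h => by
  simpa using congrArg Complex.re h

theorem normSq_one_add_mul_I (x : ℝ) : Complex.normSq (1 + x * Complex.I) = 1 + x ^ 2 := by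
  simp [Complex.normSq_apply]
  ring

theorem norm_lowPass_sq (x : ℝ) : ‖lowPass x‖ ^ 2 = (1 + x ^ 2)⁻¹ := by
  rw [lowPass, norm_inv, inv_pow, ← Complex.normSq_eq_norm_sq, normSq_one_add_mul_I]

theorem norm_lowPass_le_one (x : ℝ) : ‖lowPass x‖ ≤ 1 := by
  refine (sq_le_one_iff₀ (norm_nonneg _)).1 ?_
  rw [norm_lowPass_sq]
  exact inv_le_one_of_one_le₀ (by nlinarith)

theorem re_lowPass (x : ℝ) : (lowPass x).re = (1 + x ^ 2)⁻¹ := by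
  rw [lowPass, Complex.inv_re, normSq_one_add_mul_I]
  simp

@[fun_prop]
theorem continuous_lowPass : Continuous lowPass :=
  Continuous.inv₀ (by fun_prop) one_add_mul_I_ne_zero

@[fun_prop]
theorem continuous_aeval_lowPass (p : ℝ[X]) : Continuous fun x => aeval (lowPass x) p := by
  fun_prop

theorem exists_norm_aeval_le (p : ℝ[X]) : ∃ C, 0 ≤ C ∧ ∀ z : ℂ, ‖z‖ ≤ 1 → ‖aeval z p‖ ≤ C := by
  obtain ⟨C, hC⟩ := (isCompact_closedBall (0 : ℂ) 1).exists_bound_of_continuousOn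
    p.continuous_aeval.continuousOn
  exact ⟨C, (norm_nonneg _).trans (hC 0 (by simp)), fun z hz => hC z (by simpa using hz)⟩

theorem exists_norm_aeval_le_mul_pow {k : ℕ} {p : ℝ[X]} (hp : X ^ k ∣ p) :
    ∃ C, 0 ≤ C ∧ ∀ z : ℂ, ‖z‖ ≤ 1 → ‖aeval z p‖ ≤ C * ‖z‖ ^ k := by
  obtain ⟨r, rfl⟩ := hp
  obtain ⟨C, hC, hr⟩ := exists_norm_aeval_le r
  refine ⟨C, hC, fun z hz => ?_⟩
  rw [map_mul, norm_mul, map_pow, aeval_X, norm_pow, mul_comm]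
  exact mul_le_mul_of_nonneg_right (hr z hz) (by positivity)

theorem exists_norm_aeval_lowPass_sq_le {p : ℝ[X]} (hp : p.coeff 0 = 0) :
    ∃ C, 0 ≤ C ∧ ∀ x, ‖aeval (lowPass x) p‖ ^ 2 ≤ C * (1 + x ^ 2)⁻¹ := by
  obtain ⟨C, -, h⟩ := exists_norm_aeval_le_mul_pow (k := 1) (by rwa [pow_one, X_dvd_iff])
  refine ⟨C ^ 2, by positivity, fun x => ?_⟩
  rw [← norm_lowPass_sq, ← mul_pow]
  exact pow_le_pow_left₀ (norm_nonneg _) (by simpa using h _ (norm_lowPass_le_one x)) 2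

theorem integrable_norm_aeval_lowPass_sq {p : ℝ[X]} (hp : p.coeff 0 = 0) :
    Integrable fun x => ‖aeval (lowPass x) p‖ ^ 2 := by
  obtain ⟨C, -, h⟩ := exists_norm_aeval_lowPass_sq_le hp
  have hc : Continuous fun x => ‖aeval (lowPass x) p‖ ^ 2 := by fun_prop
  exact (integrable_inv_one_add_sq.const_mul C).mono' hc.aestronglyMeasurable
    (ae_of_all _ fun x => by simpa using h x)

/-- The density of a sum of `n + 1` independent standard exponential variables, extended to
negative times by the same formula; it is the impulse response of `lowPass ^ (n + 1)`. -/
noncomputable def erlangDensity (n : ℕ) (τ : ℝ) : ℝ := τ ^ n / n.factorial * exp (-τ)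

@[fun_prop]
theorem continuous_erlangDensity (n : ℕ) : Continuous (erlangDensity n) := by
  unfold erlangDensity
  fun_prop

theorem hasDerivAt_erlangDensity_zero (τ : ℝ) :
    HasDerivAt (erlangDensity 0) (-erlangDensity 0 τ) τ := by
  have h : erlangDensity 0 = fun τ => exp (-τ) := by simp [funext_iff, erlangDensity]
  simpa [h] using (hasDerivAt_neg τ).exp

theorem hasDerivAt_erlangDensity_succ (n : ℕ) (τ : ℝ) :
    HasDerivAt (erlangDensity (n + 1)) (erlangDensity n τ - erlangDensity (n + 1) τ) τ := by
  refine (((hasDerivAt_pow (n + 1) τ).div_const ((n + 1).factorial : ℝ)).mul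
    (hasDerivAt_neg τ).exp).congr_deriv ?_
  simp only [erlangDensity, Nat.factorial_succ, Nat.add_sub_cancel]
  push_cast
  field_simp
  ring

theorem abs_erlangDensity_le (n : ℕ) {τ : ℝ} (hτ : 0 ≤ τ) :
    |erlangDensity n τ| ≤ 2 ^ n * exp (-τ / 2) := by
  rw [erlangDensity, abs_of_nonneg (by positivity)]
  calc τ ^ n / n.factorial * exp (-τ)
      = 2 ^ n * ((τ / 2) ^ n / n.factorial) * exp (-τ) := by rw [div_pow]; field_simp
    _ ≤ 2 ^ n * exp (τ / 2) * exp (-τ) := by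
        gcongr; exact pow_div_factorial_le_exp _ (by positivity) n
    _ = 2 ^ n * exp (-τ / 2) := by rw [mul_assoc, ← exp_add]; ring_nf

theorem integrableOn_exp_neg_div_two : IntegrableOn (fun τ => exp (-τ / 2)) (Ioi 0) := by
  simpa [neg_div, div_eq_inv_mul] using exp_neg_integrableOn_Ioi 0 (b := 2⁻¹) (by norm_num)

theorem integrableOn_erlangDensity_mul_wave (n : ℕ) (x : ℝ) :
    IntegrableOn (fun τ => erlangDensity n τ * wave (-τ) x) (Ioi 0) := by
  refine (integrableOn_exp_neg_div_two.const_mul (2 ^ n)).mono'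
    (Continuous.aestronglyMeasurable (by fun_prop)) ?_
  filter_upwards [ae_restrict_mem measurableSet_Ioi] with τ hτ
  rw [norm_mul, norm_wave, mul_one, Complex.norm_real, norm_eq_abs]
  exact abs_erlangDensity_le n (le_of_lt hτ)

theorem tendsto_erlangDensity_mul_wave (n : ℕ) (x : ℝ) :
    Tendsto (fun τ => erlangDensity n τ * wave (-τ) x) atTop (nhds 0) := by
  have hlim : Tendsto (fun τ : ℝ => 2 ^ n * exp (-τ / 2)) atTop (nhds 0) := by
    simpa using (tendsto_exp_atBot.comp
      (tendsto_neg_atTop_atBot.atBot_div_const two_pos)).const_mul ((2 : ℝ) ^ n)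
  refine squeeze_zero_norm' ?_ hlim
  filter_upwards [eventually_ge_atTop 0] with τ hτ
  rw [norm_mul, norm_wave, mul_one, Complex.norm_real, norm_eq_abs]
  exact abs_erlangDensity_le n hτ

theorem hasDerivAt_mul_wave_neg {f : ℝ → ℝ} {f' τ : ℝ} (hf : HasDerivAt f f' τ) (x : ℝ) :
    HasDerivAt (fun τ => f τ * wave (-τ) x)
      (((f' + f τ : ℝ) : ℂ) * wave (-τ) x - (1 + x * Complex.I) * (f τ * wave (-τ) x)) τ := by
  have hw := (hasDerivAt_wave (-τ) x).scomp τ (hasDerivAt_neg τ)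
  refine (hf.ofReal_comp.mul hw).congr_deriv ?_
  simp only [neg_smul, one_smul, Function.comp_apply]
  push_cast
  ring

theorem integral_erlangDensity_mul_wave (n : ℕ) (x : ℝ) :
    ∫ τ in Ioi 0, erlangDensity n τ * wave (-τ) x = lowPass x ^ (n + 1) := by
  have hx := one_add_mul_I_ne_zero x
  induction n with
  | zero =>
    have h := integral_Ioi_of_hasDerivAt_of_tendsto' (a := 0)
      (fun τ _ => by
        simpa using hasDerivAt_mul_wave_neg (hasDerivAt_erlangDensity_zero τ) x)
      ((integrableOn_erlangDensity_mul_wave 0 x).const_mul (1 + x * Complex.I)).neg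
      (tendsto_erlangDensity_mul_wave 0 x)
    rw [integral_neg', MeasureTheory.integral_const_mul, zero_sub, neg_inj] at h
    rw [zero_add, pow_one, lowPass, ← mul_right_inj' hx, h, mul_inv_cancel₀ hx]
    simp [erlangDensity, wave]
  | succ n ih =>
    have hn := integrableOn_erlangDensity_mul_wave n x
    have hsucc := (integrableOn_erlangDensity_mul_wave (n + 1) x).const_mul (1 + x * Complex.I)
    have h := integral_Ioi_of_hasDerivAt_of_tendsto' (a := 0)
      (fun τ _ => by
        simpa using hasDerivAt_mul_wave_neg (hasDerivAt_erlangDensity_succ n τ) x)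
      (hn.sub hsucc) (tendsto_erlangDensity_mul_wave (n + 1) x)
    rw [integral_sub' hn hsucc, ih, MeasureTheory.integral_const_mul] at h
    have h₀ : (erlangDensity (n + 1) 0 : ℂ) = 0 := by simp [erlangDensity]
    rw [h₀, zero_mul, sub_zero, sub_eq_zero] at h
    rw [pow_succ, h, lowPass, mul_comm, inv_mul_cancel_left₀ hx]

/-- The impulse response of the filter with transfer function `p (lowPass x)`, where `p` has no
constant term; as for `erlangDensity`, it is only meaningful at times `0 ≤ τ`. -/
noncomputable def impulseResponse (p : ℝ[X]) (τ : ℝ) : ℝ :=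
  ∑ n ∈ Finset.range p.natDegree, p.coeff (n + 1) * erlangDensity n τ

@[fun_prop]
theorem continuous_impulseResponse (p : ℝ[X]) : Continuous (impulseResponse p) := by
  unfold impulseResponse
  fun_prop

theorem impulseResponse_zero (p : ℝ[X]) : impulseResponse p 0 = p.coeff 1 := by
  rw [impulseResponse]
  rcases hp : p.natDegree with - | m
  · rw [Finset.sum_range_zero, coeff_eq_zero_of_natDegree_lt (by omega)]
  · simp [Finset.sum_range_succ', erlangDensity]

theorem exists_abs_impulseResponse_le (p : ℝ[X]) :
    ∃ C, 0 ≤ C ∧ ∀ τ, 0 ≤ τ → |impulseResponse p τ| ≤ C * exp (-τ / 2) := by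
  refine ⟨∑ n ∈ Finset.range p.natDegree, |p.coeff (n + 1)| * 2 ^ n, by positivity,
    fun τ hτ => ?_⟩
  rw [impulseResponse, Finset.sum_mul]
  refine (Finset.abs_sum_le_sum_abs _ _).trans (Finset.sum_le_sum fun n _ => ?_)
  rw [abs_mul, mul_assoc]
  exact mul_le_mul_of_nonneg_left (abs_erlangDensity_le n hτ) (abs_nonneg _)

theorem integrableOn_impulseResponse_mul_wave (p : ℝ[X]) (x : ℝ) :
    IntegrableOn (fun τ => impulseResponse p τ * wave (-τ) x) (Ioi 0) := by
  simp only [impulseResponse, Complex.ofReal_sum, Complex.ofReal_mul, Finset.sum_mul, mul_assoc]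
  exact integrable_finsetSum _ fun n _ => (integrableOn_erlangDensity_mul_wave n x).const_mul _

theorem integral_impulseResponse_mul_wave {p : ℝ[X]} (hp : p.coeff 0 = 0) (x : ℝ) :
    ∫ τ in Ioi 0, impulseResponse p τ * wave (-τ) x = aeval (lowPass x) p := by
  simp only [impulseResponse, Complex.ofReal_sum, Complex.ofReal_mul, Finset.sum_mul, mul_assoc]
  rw [integral_finsetSum _ fun n _ => (integrableOn_erlangDensity_mul_wave n x).const_mul _,
    aeval_eq_sum_range, Finset.sum_range_succ', hp, zero_smul, add_zero]
  simp only [MeasureTheory.integral_const_mul, integral_erlangDensity_mul_wave, Complex.real_smul]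

end

section
open Polynomial
open scoped FourierTransform ComplexConjugate

theorem integral_inner_fourier_eq {f g : ℝ → ℂ} (hf : Integrable f) (hg : Integrable g) :
    ∫ w, inner ℂ (𝓕 f w) (g w) = ∫ τ, inner ℂ (f τ) (𝓕⁻ g τ) := by
  have h := VectorFourier.integral_sesq_fourierIntegral_eq_neg_flip (innerSL ℂ) (L := innerₗ ℝ)
    continuous_fourierChar continuous_inner hf hg
  rwa [flip_innerₗ] at h

section
variable {f v : ℝ → ℂ}

theorem fourier_eq_of_integral_mul_wave (hv : ∀ x, ∫ τ, f τ * wave (-τ) x = v x) :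
    𝓕 f = fun w => v (2 * π * w) := by
  ext w
  rw [fourier_real_eq_integral_exp_smul, ← hv]
  congr with τ
  rw [smul_eq_mul, mul_comm, wave]
  congr 4
  ring

theorem integral_mul_wave_of_transform (hf : Continuous f) (hfi : Integrable f)
    (hv : ∀ x, ∫ τ, f τ * wave (-τ) x = v x) (hvi : Integrable v) (τ : ℝ) :
    ∫ x, v x * wave τ x = 2 * π * f τ := by
  have hπ : 2 * π ≠ 0 := by positivity
  have hfourier := fourier_eq_of_integral_mul_wave hv
  have hinv := congrFun (hf.fourierInv_fourier_eq hfi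
    (by rw [hfourier]; exact hvi.comp_mul_left' hπ)) τ
  have hscale := Measure.integral_comp_mul_left (fun x => v x * wave τ x) (2 * π)
  rw [abs_of_pos (by positivity), ← inv_smul_eq_iff₀ (by positivity), inv_inv] at hscale
  rw [← hscale, ← hinv, fourierInv_eq', hfourier, Complex.real_smul]
  push_cast
  congr with x
  rw [smul_eq_mul, mul_comm, wave]
  congr 4
  simp
  ring

theorem integral_norm_sq_transform (hf : Continuous f) (hfi : Integrable f)
    (hv : ∀ x, ∫ τ, f τ * wave (-τ) x = v x) (hvi : Integrable v) :
    ∫ x, ‖v x‖ ^ 2 = 2 * π * ∫ τ, ‖f τ‖ ^ 2 := by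
  have hπ : 2 * π ≠ 0 := by positivity
  have hfourier := fourier_eq_of_integral_mul_wave hv
  have hfi' : Integrable (𝓕 f) := by rw [hfourier]; exact hvi.comp_mul_left' hπ
  have h := integral_inner_fourier_eq hfi hfi'
  have hscale := Measure.integral_comp_mul_left (fun x => ‖v x‖ ^ 2) (2 * π)
  rw [hf.fourierInv_fourier_eq hfi hfi', hfourier] at h
  simp only [inner_self_eq_norm_sq_to_K] at h
  norm_cast at h
  rw [← h, hscale, abs_of_pos (by positivity), smul_eq_mul, mul_inv_cancel_left₀ hπ]

end

/-- The response equal to that of `p` forward in time and to that of `r` backward. -/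
noncomputable def twoSidedResponse (p r : ℝ[X]) (τ : ℝ) : ℝ :=
  if 0 ≤ τ then impulseResponse p τ else impulseResponse r (-τ)

/-- The transfer function of `twoSidedResponse p r`. -/
noncomputable def twoSidedTransfer (p r : ℝ[X]) (x : ℝ) : ℂ :=
  aeval (lowPass x) p + conj (aeval (lowPass x) r)

section
variable {p r : ℝ[X]}

@[fun_prop]
theorem continuous_twoSidedTransfer (p r : ℝ[X]) : Continuous (twoSidedTransfer p r) := by
  unfold twoSidedTransfer
  fun_prop

theorem continuous_twoSidedResponse (h₁ : p.coeff 1 = r.coeff 1) :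
    Continuous (twoSidedResponse p r) := by
  refine Continuous.if_le (by fun_prop) (by fun_prop) continuous_const continuous_id ?_
  rintro x rfl
  rw [impulseResponse_zero, neg_zero, impulseResponse_zero, h₁]

theorem twoSidedResponse_mul_wave_eqOn (p r : ℝ[X]) (x : ℝ) :
    EqOn (fun τ => impulseResponse p τ * wave (-τ) x)
      (fun τ => twoSidedResponse p r τ * wave (-τ) x) (Ioi 0) := fun τ hτ => by
  simp only [twoSidedResponse, if_pos (mem_Ioi.1 hτ).le]

theorem conj_wave (t ω : ℝ) : conj (wave t ω) = wave (-t) ω := by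
  rw [wave, wave, ← Complex.exp_conj]
  simp

theorem twoSidedResponse_neg_mul_wave_eqOn (p r : ℝ[X]) (x : ℝ) :
    EqOn (fun τ => conj (impulseResponse r τ * wave (-τ) x))
      (fun τ => twoSidedResponse p r (-τ) * wave (-(-τ)) x) (Ioi 0) := fun τ hτ => by
  simp only [twoSidedResponse, if_neg (not_le.2 (neg_lt_zero.2 (mem_Ioi.1 hτ))), map_mul, conj_wave,
    Complex.conj_ofReal, neg_neg]

theorem integrableOn_Iic_of_comp_neg {f : ℝ → ℂ} (h : IntegrableOn (fun τ => f (-τ)) (Ioi 0)) :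
    IntegrableOn f (Iic 0) := by
  have h' := h.comp_neg
  simp only [neg_neg, Set.neg_Ioi, neg_zero] at h'
  exact (integrableOn_Iic_iff_integrableOn_Iio (by simp)).2 h'

theorem integrableOn_Iic_twoSidedResponse_mul_wave (p r : ℝ[X]) (x : ℝ) :
    IntegrableOn (fun τ => twoSidedResponse p r τ * wave (-τ) x) (Iic 0) := by
  refine integrableOn_Iic_of_comp_neg (IntegrableOn.congr_fun ?_
    (twoSidedResponse_neg_mul_wave_eqOn p r x) measurableSet_Ioi)
  exact Complex.conjCLE.toContinuousLinearMap.integrable_comp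
    (integrableOn_impulseResponse_mul_wave r x)

theorem integrableOn_Ioi_twoSidedResponse_mul_wave (p r : ℝ[X]) (x : ℝ) :
    IntegrableOn (fun τ => twoSidedResponse p r τ * wave (-τ) x) (Ioi 0) :=
  (integrableOn_impulseResponse_mul_wave p x).congr_fun (twoSidedResponse_mul_wave_eqOn p r x)
    measurableSet_Ioi

theorem integrable_twoSidedResponse (p r : ℝ[X]) :
    Integrable fun τ => (twoSidedResponse p r τ : ℂ) := by
  have h := (integrableOn_Iic_twoSidedResponse_mul_wave p r 0).union
    (integrableOn_Ioi_twoSidedResponse_mul_wave p r 0)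
  rw [Iic_union_Ioi, integrableOn_univ] at h
  simpa [wave] using h

theorem integral_twoSidedResponse_mul_wave (hp : p.coeff 0 = 0) (hr : r.coeff 0 = 0) (x : ℝ) :
    ∫ τ, twoSidedResponse p r τ * wave (-τ) x = twoSidedTransfer p r x := by
  rw [← intervalIntegral.integral_Iic_add_Ioi (integrableOn_Iic_twoSidedResponse_mul_wave p r x)
    (integrableOn_Ioi_twoSidedResponse_mul_wave p r x), add_comm, twoSidedTransfer,
    ← integral_impulseResponse_mul_wave hp, ← integral_impulseResponse_mul_wave hr, ← integral_conj,
    setIntegral_congr_fun measurableSet_Ioi (twoSidedResponse_mul_wave_eqOn p r x),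
    setIntegral_congr_fun measurableSet_Ioi (twoSidedResponse_neg_mul_wave_eqOn p r x)]
  simpa using (integral_comp_neg_Ioi 0 fun τ => twoSidedResponse p r τ * wave (-τ) x).symm

theorem X_sq_dvd_sub_coeff_one_mul_X (hp : p.coeff 0 = 0) : X ^ 2 ∣ p - C (p.coeff 1) * X := by
  rw [X_pow_dvd_iff]
  intro d hd
  interval_cases d <;> simp [hp]

theorem exists_norm_twoSidedTransfer_le (hp : p.coeff 0 = 0) (hr : r.coeff 0 = 0)
    (h₁ : p.coeff 1 = r.coeff 1) :
    ∃ C, 0 ≤ C ∧ ∀ x, ‖twoSidedTransfer p r x‖ ≤ C * (1 + x ^ 2)⁻¹ := by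
  obtain ⟨C₁, hC₁, hb₁⟩ := exists_norm_aeval_le_mul_pow (X_sq_dvd_sub_coeff_one_mul_X hp)
  obtain ⟨C₂, hC₂, hb₂⟩ := exists_norm_aeval_le_mul_pow (X_sq_dvd_sub_coeff_one_mul_X hr)
  refine ⟨|2 * p.coeff 1| + C₁ + C₂, by positivity, fun x => ?_⟩
  have hsplit : twoSidedTransfer p r x = ((2 * p.coeff 1 * (1 + x ^ 2)⁻¹ : ℝ) : ℂ)
      + aeval (lowPass x) (p - C (p.coeff 1) * X)
      + conj (aeval (lowPass x) (r - C (r.coeff 1) * X)) := by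
    have hre := Complex.add_conj (lowPass x)
    rw [← re_lowPass, ← h₁, twoSidedTransfer]
    simp only [map_sub, map_mul, aeval_X, aeval_C, Complex.coe_algebraMap, Complex.conj_ofReal]
    push_cast at hre ⊢
    linear_combination (p.coeff 1 : ℂ) * hre
  have hp' := hb₁ _ (norm_lowPass_le_one x)
  have hr' := hb₂ _ (norm_lowPass_le_one x)
  rw [norm_lowPass_sq] at hp' hr'
  rw [hsplit, add_mul, add_mul]
  refine norm_add₃_le.trans (add_le_add (add_le_add (le_of_eq ?_) hp') ?_)
  · rw [Complex.norm_real, norm_mul, norm_eq_abs, norm_of_nonneg (by positivity)]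
  · rwa [Complex.norm_conj]

theorem integrable_twoSidedTransfer (hp : p.coeff 0 = 0) (hr : r.coeff 0 = 0)
    (h₁ : p.coeff 1 = r.coeff 1) : Integrable (twoSidedTransfer p r) := by
  obtain ⟨C, -, hC⟩ := exists_norm_twoSidedTransfer_le hp hr h₁
  exact (integrable_inv_one_add_sq.const_mul C).mono'
    (continuous_twoSidedTransfer p r).aestronglyMeasurable (ae_of_all _ hC)

theorem integral_twoSidedTransfer_mul_wave (hp : p.coeff 0 = 0) (hr : r.coeff 0 = 0)
    (h₁ : p.coeff 1 = r.coeff 1) (τ : ℝ) :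
    ∫ x, twoSidedTransfer p r x * wave τ x = 2 * π * twoSidedResponse p r τ :=
  integral_mul_wave_of_transform
    (Complex.continuous_ofReal.comp (continuous_twoSidedResponse h₁))
    (integrable_twoSidedResponse p r) (integral_twoSidedResponse_mul_wave hp hr)
    (integrable_twoSidedTransfer hp hr h₁) τ

theorem twoSidedTransfer_self (p : ℝ[X]) (x : ℝ) :
    twoSidedTransfer p p x = ((2 * (aeval (lowPass x) p).re : ℝ) : ℂ) := Complex.add_conj _

theorem integrable_re_aeval_lowPass (hp : p.coeff 0 = 0) :
    Integrable fun x => (aeval (lowPass x) p).re := by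
  have h := (integrable_twoSidedTransfer hp hp rfl).re.const_mul 2⁻¹
  simpa [twoSidedTransfer_self] using h

theorem integral_re_aeval_lowPass (hp : p.coeff 0 = 0) :
    ∫ x, (aeval (lowPass x) p).re = π * p.coeff 1 := by
  have h := integral_twoSidedTransfer_mul_wave hp hp rfl 0
  simp only [twoSidedTransfer_self, wave, mul_zero, Complex.ofReal_zero, zero_mul, Complex.exp_zero,
    mul_one, integral_complex_ofReal, twoSidedResponse, le_refl, if_true, impulseResponse_zero,
    MeasureTheory.integral_const_mul] at h
  norm_cast at h
  linarith

theorem integral_twoSidedResponse_self_sq (p : ℝ[X]) :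
    ∫ τ, ‖(twoSidedResponse p p τ : ℂ)‖ ^ 2 = 2 * ∫ τ in Ioi 0, impulseResponse p τ ^ 2 := by
  have h : ∀ τ, ‖(twoSidedResponse p p τ : ℂ)‖ ^ 2 = impulseResponse p |τ| ^ 2 := fun τ => by
    rw [Complex.norm_real, norm_eq_abs, sq_abs, twoSidedResponse]
    rcases le_or_gt 0 τ with hτ | hτ
    · rw [if_pos hτ, abs_of_nonneg hτ]
    · rw [if_neg hτ.not_ge, abs_of_neg hτ]
  simp only [h]
  exact integral_comp_abs (f := fun τ => impulseResponse p τ ^ 2)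

/-- Plancherel's identity, read off the even extension: `(2 Re P)² = 2 |P|² + 2 Re P²`, and
`Re P²` has integral zero because `p ^ 2` has no linear term. -/
theorem integral_impulseResponse_sq (hp : p.coeff 0 = 0) :
    ∫ τ in Ioi 0, impulseResponse p τ ^ 2 = (2 * π)⁻¹ * ∫ x, ‖aeval (lowPass x) p‖ ^ 2 := by
  have hsq : ∀ x, ‖twoSidedTransfer p p x‖ ^ 2
      = 2 * ‖aeval (lowPass x) p‖ ^ 2 + 2 * (aeval (lowPass x) (p ^ 2)).re := fun x => by
    rw [twoSidedTransfer_self, Complex.norm_real, norm_eq_abs, sq_abs, map_pow,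
      ← Complex.normSq_eq_norm_sq, Complex.normSq_apply, sq (aeval _ p), Complex.mul_re]
    ring
  have hp₀ : (p ^ 2).coeff 0 = 0 := by rw [sq, mul_coeff_zero, hp, zero_mul]
  have hp₁ : (p ^ 2).coeff 1 = 0 := by rw [sq, mul_coeff_one, hp]; ring
  have h := integral_norm_sq_transform
    (Complex.continuous_ofReal.comp (continuous_twoSidedResponse rfl))
    (integrable_twoSidedResponse p p) (integral_twoSidedResponse_mul_wave hp hp)
    (integrable_twoSidedTransfer hp hp rfl)
  simp only [hsq, Function.comp_apply, integral_twoSidedResponse_self_sq] at h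
  rw [MeasureTheory.integral_add ((integrable_norm_aeval_lowPass_sq hp).const_mul 2)
    ((integrable_re_aeval_lowPass hp₀).const_mul 2), MeasureTheory.integral_const_mul,
    MeasureTheory.integral_const_mul, integral_re_aeval_lowPass hp₀, hp₁] at h
  rw [eq_inv_mul_iff_mul_eq₀ (by positivity)]
  linarith

end
end

section
open Polynomial
open scoped Topology Nat

theorem exists_re_aeval_eq_eval_re (P : ℝ[X]) :
    ∃ h : ℝ[X], ∀ w : ℂ, ‖w‖ = 1 → (aeval w h).re = P.eval w.re := by
  induction P using Polynomial.induction_on with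
  | C a => exact ⟨C a, fun w _ => by simp⟩
  | add p q hp hq =>
    obtain ⟨f, hf⟩ := hp
    obtain ⟨g, hg⟩ := hq
    exact ⟨f + g, fun w hw => by rw [map_add, Complex.add_re, hf w hw, hg w hw, eval_add]⟩
  | monomial n a ih =>
    obtain ⟨f, hf⟩ := ih
    refine ⟨C (1 / 2) * (X * f + C (f.coeff 0) * X + divX f), fun w hw => ?_⟩
    have hdiv : aeval w f = aeval w (divX f) * w + (f.coeff 0 : ℂ) := by
      conv_lhs => rw [← divX_mul_X_add f]
      simp
    have hnorm : w.re * w.re + w.im * w.im = 1 := by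
      rw [← Complex.normSq_apply, Complex.normSq_eq_norm_sq, hw, one_pow]
    have hmul : eval w.re (C a * X ^ (n + 1)) = (aeval w f).re * w.re := by
      rw [hf w hw]
      simp [pow_succ, mul_assoc]
    simp only [hmul, map_add, map_mul, aeval_X, aeval_C, Complex.coe_algebraMap, hdiv,
      Complex.add_re, Complex.mul_re, Complex.ofReal_re, Complex.add_im, Complex.mul_im,
      Complex.ofReal_im]
    linear_combination (-(1 / 2) * (aeval w (divX f)).re) * hnorm

/- `2 * lowPass x - 1` runs over the unit circle, with real part `2 * (1 + x ^ 2)⁻¹ - 1`. -/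
theorem exists_two_mul_re_aeval_lowPass_eq (p : ℝ[X]) :
    ∃ h : ℝ[X], h.coeff 0 = 0 ∧
      ∀ x : ℝ, 2 * (aeval (lowPass x) h).re = (1 + x ^ 2)⁻¹ * p.eval (1 + x ^ 2)⁻¹ := by
  obtain ⟨h, hh⟩ := exists_re_aeval_eq_eval_re ((X * p).comp (C (1 / 2) * (1 + X)))
  refine ⟨C (1 / 2) * h.comp (C 2 * X - 1), ?_, fun x => ?_⟩
  · have h₁ := hh ((-1 : ℝ) : ℂ) (by simp)
    rw [← Complex.coe_algebraMap, aeval_algebraMap_apply] at h₁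
    rw [coeff_zero_eq_eval_zero]
    simpa using h₁
  · have hnorm : ‖2 * lowPass x - 1‖ = 1 := by
      have hsq := norm_lowPass_sq x
      have hre := re_lowPass x
      rw [← sq_eq_sq₀ (norm_nonneg _) zero_le_one, ← Complex.normSq_eq_norm_sq]
      rw [← Complex.normSq_eq_norm_sq, ← hre, Complex.normSq_apply] at hsq
      simp only [Complex.normSq_apply, Complex.sub_re, Complex.mul_re, Complex.re_ofNat,
        Complex.im_ofNat, Complex.sub_im, Complex.mul_im, Complex.one_re, Complex.one_im]
      linear_combination 4 * hsq
    have haeval : aeval (lowPass x) (C (1 / 2) * h.comp (C 2 * X - 1)) =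
        ((1 / 2 : ℝ) : ℂ) * aeval (2 * lowPass x - 1) h := by
      simp [aeval_comp]
    rw [haeval, Complex.re_ofReal_mul, hh _ hnorm]
    simp [eval_comp, re_lowPass]

/-- The exponential series of the polynomial `h`, truncated at degree `N + 1` in `h`. -/
noncomputable def expTrunc (N : ℕ) (h : ℝ[X]) : ℝ[X] :=
  ∑ j ∈ Finset.range (N + 2), C ((j ! : ℝ)⁻¹) * h ^ j

theorem expTrunc_sub_one_sub (N : ℕ) (h : ℝ[X]) :
    expTrunc N h - 1 - h = ∑ j ∈ Finset.range N, C (((j + 2) ! : ℝ)⁻¹) * h ^ (j + 2) := by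
  rw [expTrunc, Finset.sum_range_succ', Finset.sum_range_succ']
  simp

theorem aeval_expTrunc (N : ℕ) (h : ℝ[X]) (z : ℂ) :
    aeval z (expTrunc N h) = ∑ j ∈ Finset.range (N + 2), aeval z h ^ j / (j ! : ℂ) := by
  simp [expTrunc, div_eq_inv_mul]

theorem tendsto_aeval_expTrunc (h : ℝ[X]) (z : ℂ) :
    Tendsto (fun N => aeval z (expTrunc N h)) atTop (𝓝 (Complex.exp (aeval z h))) := by
  have hsum := (NormedSpace.expSeries_div_hasSum_exp (𝔸 := ℂ) (aeval z h)).tendsto_sum_nat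
  rw [← Complex.exp_eq_exp_ℂ] at hsum
  simp only [aeval_expTrunc]
  exact hsum.comp (tendsto_add_atTop_nat 2)

section
variable {h : ℝ[X]}

theorem X_sq_dvd_expTrunc_sub_one_sub (hh : h.coeff 0 = 0) (N : ℕ) :
    X ^ 2 ∣ expTrunc N h - 1 - h := by
  rw [expTrunc_sub_one_sub]
  refine Finset.dvd_sum fun j _ => Dvd.dvd.mul_left ?_ _
  exact (pow_dvd_pow_of_dvd (X_dvd_iff.2 hh) 2).trans (pow_dvd_pow h (Nat.le_add_left 2 j))

theorem coeff_zero_expTrunc (hh : h.coeff 0 = 0) (N : ℕ) : (expTrunc N h).coeff 0 = 1 := by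
  have hdvd := X_pow_dvd_iff.1 (X_sq_dvd_expTrunc_sub_one_sub hh N) 0 two_pos
  rw [coeff_sub, coeff_sub, hh, coeff_one_zero] at hdvd
  linarith

theorem coeff_one_expTrunc (hh : h.coeff 0 = 0) (N : ℕ) :
    (expTrunc N h).coeff 1 = h.coeff 1 := by
  have hdvd := X_pow_dvd_iff.1 (X_sq_dvd_expTrunc_sub_one_sub hh N) 1 one_lt_two
  rw [coeff_sub, coeff_sub, coeff_one] at hdvd
  simp at hdvd
  linarith

theorem norm_aeval_expTrunc_sub_one_sub_le (h : ℝ[X]) (N : ℕ) (z : ℂ) :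
    ‖aeval z (expTrunc N h) - 1 - aeval z h‖ ≤ ‖aeval z h‖ ^ 2 * exp ‖aeval z h‖ := by
  have hrem : aeval z (expTrunc N h) - 1 - aeval z h =
      ∑ j ∈ Finset.range N, (((j + 2) ! : ℝ)⁻¹ : ℂ) * aeval z h ^ (j + 2) := by
    have := congrArg (aeval z) (expTrunc_sub_one_sub N h)
    simpa using this
  rw [hrem]
  have hterm : ∀ j ∈ Finset.range N, ‖(((j + 2) ! : ℝ)⁻¹ : ℂ) * aeval z h ^ (j + 2)‖ ≤
      ‖aeval z h‖ ^ 2 * (‖aeval z h‖ ^ j / j !) := by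
    intro j _
    rw [norm_mul, norm_inv, Complex.norm_real, Real.norm_natCast, norm_pow, pow_add, mul_comm,
      mul_comm (_ ^ j), mul_assoc, ← div_eq_mul_inv]
    gcongr
    omega
  refine (norm_sum_le_of_le _ hterm).trans ?_
  rw [← Finset.mul_sum]
  gcongr
  exact sum_le_exp_of_nonneg (norm_nonneg _) N

theorem exists_norm_aeval_expTrunc_sub_le (hh : h.coeff 0 = 0) :
    ∃ C, 0 ≤ C ∧ ∀ (N : ℕ) (z : ℂ), ‖z‖ ≤ 1 →
      ‖aeval z (expTrunc N h) - 1 - aeval z h‖ ≤ C * ‖z‖ ^ 2 := by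
  obtain ⟨K, hK, hbound⟩ := exists_norm_aeval_le_mul_pow (k := 1) (by simpa [X_dvd_iff] using hh)
  refine ⟨K ^ 2 * exp K, by positivity, fun N z hz => ?_⟩
  have hz' := hbound z hz
  rw [pow_one] at hz'
  have hzK : ‖aeval z h‖ ≤ K := hz'.trans (mul_le_of_le_one_right hK hz)
  calc ‖aeval z (expTrunc N h) - 1 - aeval z h‖ ≤ ‖aeval z h‖ ^ 2 * exp ‖aeval z h‖ :=
        norm_aeval_expTrunc_sub_one_sub_le h N z
    _ ≤ (K * ‖z‖) ^ 2 * exp K := by gcongr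
    _ = K ^ 2 * exp K * ‖z‖ ^ 2 := by ring

end

/-- A continuous cutoff with values in `[0, 1]`, supported inside `(0, 1)` and increasing to its
indicator as `n → ∞`. -/
noncomputable def cutoff (n : ℕ) (u : ℝ) : ℝ :=
  max 0 (min 1 (n * (u * (1 - u)) - 1))

theorem cutoff_nonneg (n : ℕ) (u : ℝ) : 0 ≤ cutoff n u :=
  le_max_left _ _

theorem cutoff_le_one (n : ℕ) (u : ℝ) : cutoff n u ≤ 1 :=
  max_le zero_le_one (min_le_left _ _)

@[fun_prop]
theorem continuous_cutoff (n : ℕ) : Continuous (cutoff n) := by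
  unfold cutoff
  fun_prop

theorem tendsto_cutoff {u : ℝ} (hu : u ∈ Ioo (0 : ℝ) 1) :
    Tendsto (fun n => cutoff n u) atTop (𝓝 1) := by
  have hpos : 0 < u * (1 - u) := mul_pos hu.1 (sub_pos.2 hu.2)
  have htop : Tendsto (fun n : ℕ => (n : ℝ) * (u * (1 - u)) - 1) atTop atTop :=
    tendsto_atTop_add_const_right _ _ (tendsto_natCast_atTop_atTop.atTop_mul_const hpos)
  refine tendsto_const_nhds.congr' ?_
  filter_upwards [htop.eventually_ge_atTop 1] with n hn
  rw [cutoff, min_eq_left hn, max_eq_right zero_le_one]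

theorem continuous_cutoff_mul {f : ℝ → ℝ} (hf : ContinuousOn f (Ioo 0 1)) (n : ℕ) :
    Continuous fun u => cutoff n u * f u := by
  refine continuous_iff_continuousAt.2 fun u => ?_
  by_cases hu : u ∈ Ioo (0 : ℝ) 1
  · exact (continuous_cutoff n).continuousAt.mul (hf.continuousAt (Ioo_mem_nhds hu.1 hu.2))
  have hlt : (n : ℝ) * (u * (1 - u)) < 1 := by
    have hu' : u * (1 - u) ≤ 0 := by
      contrapose! hu
      constructor <;> nlinarith
    exact (mul_nonpos_of_nonneg_of_nonpos n.cast_nonneg hu').trans_lt one_pos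
  have hnear : ∀ᶠ v in 𝓝 u, (n : ℝ) * (v * (1 - v)) < 1 :=
    ContinuousAt.eventually_lt (by fun_prop) continuousAt_const hlt
  refine continuousAt_const.congr (f := fun _ => (0 : ℝ)) ?_
  filter_upwards [hnear] with v hv
  rw [cutoff, max_eq_left (min_le_of_right_le (by linarith)), zero_mul]

theorem inv_one_add_sq_mem_Ioo {x : ℝ} (hx : x ≠ 0) : (1 + x ^ 2)⁻¹ ∈ Ioo (0 : ℝ) 1 :=
  ⟨by positivity, inv_lt_one_of_one_lt₀ (lt_add_of_pos_right 1 (by positivity))⟩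

/- The substitution `u = (1 + x ^ 2)⁻¹` carries an even function on the punctured line to a
function on `(0, 1)`, where Weierstrass's theorem applies. -/
theorem exists_abs_two_mul_re_aeval_lowPass_sub_le {g : ℝ → ℝ} (hg : ContinuousOn g (Ioi 0))
    (hg' : ∀ x, g |x| = g x) (n : ℕ) {κ : ℝ} (hκ : 0 < κ) (d : ℝ) :
    ∃ h : ℝ[X], h.coeff 0 = 0 ∧ ∀ x : ℝ, x ≠ 0 →
      |2 * (aeval (lowPass x) h).re - (cutoff n (1 + x ^ 2)⁻¹ * g x + d * (1 + x ^ 2)⁻¹ ^ 2)| ≤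
        κ * (1 + x ^ 2)⁻¹ ^ 2 := by
  have hcont : ContinuousOn (fun u => g (√(u⁻¹ - 1)) / u ^ 2) (Ioo 0 1) := by
    have hne : ∀ u ∈ Ioo (0 : ℝ) 1, u ≠ 0 := fun u hu => hu.1.ne'
    refine .div (hg.comp (.sqrt (.sub (continuousOn_id.inv₀ hne) continuousOn_const)) ?_)
      (by fun_prop) fun u hu => pow_ne_zero 2 (hne u hu)
    exact fun u hu => sqrt_pos.2 (sub_pos.2 ((one_lt_inv₀ hu.1).2 hu.2))
  obtain ⟨p, hp⟩ := exists_polynomial_near_of_continuousOn 0 1 _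
    ((continuous_cutoff_mul hcont n).add (continuous_const (y := d))).continuousOn κ hκ
  obtain ⟨h, hh₀, hh⟩ := exists_two_mul_re_aeval_lowPass_eq (X * p)
  refine ⟨h, hh₀, fun x hx => ?_⟩
  have hu := inv_one_add_sq_mem_Ioo hx
  have hux : √((1 + x ^ 2)⁻¹⁻¹ - 1) = |x| := by
    rw [inv_inv, add_sub_cancel_left, sqrt_sq_eq_abs]
  rw [hh, eval_mul, eval_X]
  specialize hp _ ⟨hu.1.le, hu.2.le⟩
  simp only [Pi.add_apply, hux, hg'] at hp
  set u := (1 + x ^ 2)⁻¹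
  have hu₀ := hu.1
  have hfactor : u * (u * p.eval u) - (cutoff n u * g x + d * u ^ 2) =
      (p.eval u - (cutoff n u * (g x / u ^ 2) + d)) * u ^ 2 := by
    field_simp
  rw [hfactor, abs_mul, abs_of_pos (pow_pos hu₀ 2)]
  exact mul_le_mul_of_nonneg_right hp.le (by positivity)

end

section
open Polynomial
open scoped Topology

theorem integrable_and_tendsto_integral_of_dominated {α E : Type*} [MeasurableSpace α]
    [NormedAddCommGroup E] [NormedSpace ℝ E] {μ : Measure α} {F : ℕ → α → E} {f : α → E}
    {G : α → ℝ} (hF : ∀ n, AEStronglyMeasurable (F n) μ) (hG : Integrable G μ)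
    (hbound : ∀ n, ∀ᵐ x ∂μ, ‖F n x‖ ≤ G x)
    (hlim : ∀ᵐ x ∂μ, Tendsto (fun n => F n x) atTop (𝓝 (f x))) :
    Integrable f μ ∧ Tendsto (fun n => ∫ x, F n x ∂μ) atTop (𝓝 (∫ x, f x ∂μ)) := by
  refine ⟨hG.mono' (aestronglyMeasurable_of_tendsto_ae _ hF hlim) ?_,
    tendsto_integral_of_dominated_convergence G hF hG hbound hlim⟩
  filter_upwards [hlim, ae_all_iff.2 hbound] with x hx hxb
  exact le_of_tendsto hx.norm (.of_forall hxb)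

theorem ae_ne_zero : ∀ᵐ x : ℝ, x ≠ 0 :=
  compl_mem_ae_iff.2 (measure_singleton (0 : ℝ))

theorem aestronglyMeasurable_abs_rpow (b : ℝ) :
    AEStronglyMeasurable (fun x : ℝ => |x| ^ b) volume :=
  (measurable_norm.pow_const b).aestronglyMeasurable

section
variable {m h : ℝ[X]}

theorem tendsto_aeval_mul_expTrunc (m h : ℝ[X]) (z : ℂ) :
    Tendsto (fun N => aeval z (m * expTrunc N h)) atTop
      (𝓝 (aeval z m * Complex.exp (aeval z h))) := by
  simpa only [map_mul] using (tendsto_aeval_expTrunc h z).const_mul (aeval z m)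

theorem coeff_zero_mul_expTrunc (hm : m.coeff 0 = 1) (hh : h.coeff 0 = 0) (N : ℕ) :
    (m * expTrunc N h).coeff 0 = 1 := by
  rw [mul_coeff_zero, hm, coeff_zero_expTrunc hh, one_mul]

theorem coeff_one_mul_expTrunc (hm : m.coeff 0 = 1) (hh : h.coeff 0 = 0) (N : ℕ) :
    (m * expTrunc N h).coeff 1 = m.coeff 1 + h.coeff 1 := by
  rw [mul_coeff_one, hm, coeff_zero_expTrunc hh, coeff_one_expTrunc hh]
  ring

theorem exists_norm_aeval_mul_expTrunc_sub_le (m : ℝ[X]) (hh : h.coeff 0 = 0) :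
    ∃ C, 0 ≤ C ∧ ∀ N x, ‖aeval (lowPass x) (m * expTrunc N h - m * (1 + h))‖ ≤
      C * (1 + x ^ 2)⁻¹ := by
  obtain ⟨C₁, hC₁, hb₁⟩ := exists_norm_aeval_le m
  obtain ⟨C₂, hC₂, hb₂⟩ := exists_norm_aeval_expTrunc_sub_le hh
  refine ⟨C₁ * C₂, by positivity, fun N x => ?_⟩
  have hx := norm_lowPass_le_one x
  have hfactor : aeval (lowPass x) (m * expTrunc N h - m * (1 + h)) =
      aeval (lowPass x) m * (aeval (lowPass x) (expTrunc N h) - 1 - aeval (lowPass x) h) := by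
    simp only [map_sub, map_mul, map_add, map_one]
    ring
  rw [hfactor, norm_mul, mul_assoc, ← norm_lowPass_sq]
  exact mul_le_mul (hb₁ _ hx) (hb₂ N _ hx) (norm_nonneg _) hC₁

theorem exists_norm_one_sub_aeval_mul_expTrunc_sq_le (hm : m.coeff 0 = 1) (hh : h.coeff 0 = 0) :
    ∃ C, 0 ≤ C ∧ ∀ N x, ‖1 - aeval (lowPass x) (m * expTrunc N h)‖ ^ 2 ≤ C * (1 + x ^ 2)⁻¹ := by
  obtain ⟨C₁, -, hb₁⟩ := exists_norm_aeval_mul_expTrunc_sub_le m hh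
  obtain ⟨C₂, hC₂, hb₂⟩ := exists_norm_aeval_lowPass_sq_le (p := 1 - m * (1 + h))
    (by simp [mul_coeff_zero, hm, hh])
  refine ⟨2 * (C₂ + C₁ ^ 2), by positivity, fun N x => ?_⟩
  have hsplit : 1 - aeval (lowPass x) (m * expTrunc N h) = aeval (lowPass x) (1 - m * (1 + h)) -
      aeval (lowPass x) (m * expTrunc N h - m * (1 + h)) := by
    simp only [map_sub, map_one]
    ring
  have hu : (1 + x ^ 2)⁻¹ ≤ (1 : ℝ) := inv_le_one_of_one_le₀ (by nlinarith)
  have hu₀ : (0 : ℝ) ≤ (1 + x ^ 2)⁻¹ := by positivity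
  calc ‖1 - aeval (lowPass x) (m * expTrunc N h)‖ ^ 2
      ≤ (‖aeval (lowPass x) (1 - m * (1 + h))‖ +
          ‖aeval (lowPass x) (m * expTrunc N h - m * (1 + h))‖) ^ 2 := by
        rw [hsplit]
        gcongr
        exact norm_sub_le _ _
    _ ≤ 2 * (‖aeval (lowPass x) (1 - m * (1 + h))‖ ^ 2 +
          ‖aeval (lowPass x) (m * expTrunc N h - m * (1 + h))‖ ^ 2) := add_sq_le
    _ ≤ 2 * (C₂ * (1 + x ^ 2)⁻¹ + (C₁ * (1 + x ^ 2)⁻¹) ^ 2) := by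
        gcongr
        exacts [hb₂ x, hb₁ N x]
    _ ≤ 2 * (C₂ + C₁ ^ 2) * (1 + x ^ 2)⁻¹ := by
        nlinarith [mul_nonneg (mul_nonneg (sq_nonneg C₁) hu₀) (sub_nonneg.2 hu)]

theorem exists_abs_re_one_sub_aeval_mul_expTrunc_le (hm : m.coeff 0 = 1) (hh : h.coeff 0 = 0) :
    ∃ C, 0 ≤ C ∧ ∀ N x, |(1 - aeval (lowPass x) (m * expTrunc N h)).re| ≤ C * (1 + x ^ 2)⁻¹ := by
  obtain ⟨C₁, hC₁, hb₁⟩ := exists_norm_aeval_mul_expTrunc_sub_le m hh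
  have hcoeff : (1 - m * (1 + h)).coeff 0 = 0 := by simp [mul_coeff_zero, hm, hh]
  obtain ⟨C₂, hC₂, hb₂⟩ := exists_norm_twoSidedTransfer_le hcoeff hcoeff rfl
  refine ⟨C₂ + C₁, by positivity, fun N x => ?_⟩
  have hsplit : (1 - aeval (lowPass x) (m * expTrunc N h)).re =
      (aeval (lowPass x) (1 - m * (1 + h))).re -
        (aeval (lowPass x) (m * expTrunc N h - m * (1 + h))).re := by
    rw [← Complex.sub_re]
    simp only [map_sub, map_one]
    ring_nf
  have hre := hb₂ x
  rw [twoSidedTransfer_self, Complex.norm_real, norm_eq_abs, abs_mul, abs_two] at hre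
  have hrem := (Complex.abs_re_le_norm _).trans (hb₁ N x)
  rw [hsplit]
  refine (abs_sub _ _).trans ?_
  linarith [abs_nonneg (aeval (lowPass x) (1 - m * (1 + h))).re]

theorem integrable_and_integral_re_one_sub_mul_exp (hm : m.coeff 0 = 1) (hh : h.coeff 0 = 0) :
    Integrable (fun x => (1 - aeval (lowPass x) m * Complex.exp (aeval (lowPass x) h)).re) ∧
      ∫ x, (1 - aeval (lowPass x) m * Complex.exp (aeval (lowPass x) h)).re =
        -π * (m.coeff 1 + h.coeff 1) := by
  obtain ⟨C, -, hb⟩ := exists_abs_re_one_sub_aeval_mul_expTrunc_le hm hh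
  have hcont : ∀ N, Continuous fun x => (1 - aeval (lowPass x) (m * expTrunc N h)).re :=
    fun N => by fun_prop
  obtain ⟨hint, hlim⟩ := integrable_and_tendsto_integral_of_dominated
    (fun N => (hcont N).aestronglyMeasurable) (integrable_inv_one_add_sq.const_mul C)
    (fun N => ae_of_all volume (hb N)) (ae_of_all _ fun x => (Complex.continuous_re.tendsto _).comp
      ((tendsto_aeval_mul_expTrunc m h (lowPass x)).const_sub 1))
  refine ⟨hint, tendsto_nhds_unique hlim (tendsto_const_nhds.congr fun N => ?_)⟩
  have hpoly := integral_re_aeval_lowPass (p := 1 - m * expTrunc N h)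
    (by rw [coeff_sub, coeff_zero_mul_expTrunc hm hh, coeff_one_zero, sub_self])
  simp only [map_sub, map_one, coeff_sub, coeff_one, coeff_one_mul_expTrunc hm hh] at hpoly
  rw [hpoly]
  simp
  ring

end

/-- The spectral density of the error in filtering a signal of density `|x| ^ (-a)` from white noise
of unit intensity by a filter which responds with the factor `1 - z` at frequency `x`. -/
noncomputable def errorDensity (a x : ℝ) (z : ℂ) : ℝ :=
  |x| ^ (-a) * ‖z‖ ^ 2 + ‖1 - z‖ ^ 2

/-- The log-ratio of the observation spectra for signals of density `|x| ^ (-a)` and `|x| ^ (-2)`;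
unlike either term alone, it is spectrally factored up to a polynomial in `lowPass`. -/
noncomputable def logRatio (a x : ℝ) : ℝ :=
  log (1 + |x| ^ (-a)) - log (1 + |x| ^ (-2 : ℝ))

/-- The minimum-phase response `(1 - y) * exp (-h y)` at `y = lowPass x`, which minimises the
integral of `errorDensity a` when `logDefect a h` vanishes. -/
noncomputable def outerResponse (h : ℝ[X]) (x : ℝ) : ℂ :=
  (1 - lowPass x) * Complex.exp (-aeval (lowPass x) h)

/-- The defect of `2 * re h`, for the polynomial `h` in `lowPass`, as an approximation to
`logRatio a`. -/
noncomputable def logDefect (a : ℝ) (h : ℝ[X]) (x : ℝ) : ℝ :=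
  logRatio a x - 2 * (aeval (lowPass x) h).re

theorem errorDensity_nonneg (a x : ℝ) (z : ℂ) : 0 ≤ errorDensity a x z := by
  unfold errorDensity
  positivity

theorem norm_one_sub_sq (z : ℂ) : ‖1 - z‖ ^ 2 = 1 - 2 * z.re + ‖z‖ ^ 2 := by
  rw [← Complex.normSq_eq_norm_sq, ← Complex.normSq_eq_norm_sq, Complex.normSq_sub]
  simp
  ring

theorem norm_one_sub_lowPass_sq (x : ℝ) : ‖1 - lowPass x‖ ^ 2 = x ^ 2 * (1 + x ^ 2)⁻¹ := by
  rw [norm_one_sub_sq, re_lowPass, norm_lowPass_sq]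
  field_simp
  ring

theorem norm_exp_sq (z : ℂ) : ‖Complex.exp z‖ ^ 2 = exp (2 * z.re) := by
  rw [Complex.norm_exp, ← exp_nat_mul, Nat.cast_two]

section
variable {a : ℝ}

theorem integrable_logRatio (ha : 1 < a) : Integrable (logRatio a) :=
  (integrable_log_one_add_abs_rpow_neg ha).sub (integrable_log_one_add_abs_rpow_neg one_lt_two)

theorem integral_logRatio (ha : 1 < a) : ∫ x, logRatio a x = 2 * π / sin (π / a) - 2 * π := by
  unfold logRatio
  rw [MeasureTheory.integral_sub (integrable_log_one_add_abs_rpow_neg ha)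
    (integrable_log_one_add_abs_rpow_neg one_lt_two), integral_log_one_add_abs_rpow_neg ha,
    integral_log_one_add_abs_rpow_neg one_lt_two, sin_pi_div_two, div_one]

theorem integrable_logDefect (ha : 1 < a) {h : ℝ[X]} (hh : h.coeff 0 = 0) :
    Integrable (logDefect a h) :=
  (integrable_logRatio ha).sub ((integrable_re_aeval_lowPass hh).const_mul 2)

theorem integral_logDefect (ha : 1 < a) {h : ℝ[X]} (hh : h.coeff 0 = 0) :
    ∫ x, logDefect a h x = 2 * π / sin (π / a) - 2 * π * (1 + h.coeff 1) := by
  unfold logDefect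
  rw [MeasureTheory.integral_sub (integrable_logRatio ha)
    ((integrable_re_aeval_lowPass hh).const_mul 2), MeasureTheory.integral_const_mul,
    integral_logRatio ha, integral_re_aeval_lowPass hh]
  ring

theorem integrable_and_integral_re_one_sub_outerResponse {h : ℝ[X]} (hh : h.coeff 0 = 0) :
    Integrable (fun x => (1 - outerResponse h x).re) ∧
      ∫ x, (1 - outerResponse h x).re = π * (1 + h.coeff 1) := by
  obtain ⟨hint, hval⟩ := integrable_and_integral_re_one_sub_mul_exp (m := 1 - X) (h := -h)
    (by simp) (by simpa using hh)
  simp only [map_sub, map_one, aeval_X, map_neg] at hint hval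
  refine ⟨hint, hval.trans ?_⟩
  simp [coeff_one]
  ring

theorem exp_logDefect {x : ℝ} (hx : x ≠ 0) (h : ℝ[X]) :
    exp (logDefect a h x) = (1 + |x| ^ (-a)) * ‖outerResponse h x‖ ^ 2 := by
  have hx' := abs_pos.2 hx
  have hsq : |x| ^ (-2 : ℝ) = (x ^ 2)⁻¹ := by rw [rpow_neg hx'.le, rpow_two, sq_abs]
  rw [logDefect, logRatio, outerResponse, exp_sub, exp_sub, exp_log (by positivity),
    exp_log (by positivity), norm_mul, mul_pow, norm_one_sub_lowPass_sq, norm_exp_sq,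
    Complex.neg_re, mul_neg, exp_neg, hsq]
  field_simp
  ring

theorem errorDensity_outerResponse {x : ℝ} (hx : x ≠ 0) (h : ℝ[X]) :
    errorDensity a x (outerResponse h x) = (exp (logDefect a h x) - 1 - logDefect a h x) +
      2 * (1 - outerResponse h x).re + logDefect a h x := by
  rw [exp_logDefect hx, errorDensity, norm_one_sub_sq, Complex.sub_re, Complex.one_re]
  ring

theorem integral_errorDensity_outerResponse (ha : 1 < a) {h : ℝ[X]} (hh : h.coeff 0 = 0)
    (hint : Integrable fun x => errorDensity a x (outerResponse h x)) :
    Integrable (fun x => exp (logDefect a h x) - 1 - logDefect a h x) ∧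
      ∫ x, errorDensity a x (outerResponse h x) =
        2 * π / sin (π / a) + ∫ x, (exp (logDefect a h x) - 1 - logDefect a h x) := by
  obtain ⟨hre, hre'⟩ := integrable_and_integral_re_one_sub_outerResponse hh
  have hlog := integrable_logDefect ha hh
  have heq : (fun x => errorDensity a x (outerResponse h x) - 2 * (1 - outerResponse h x).re -
      logDefect a h x) =ᵐ[volume] fun x => exp (logDefect a h x) - 1 - logDefect a h x := by
    filter_upwards [ae_ne_zero] with x hx
    rw [errorDensity_outerResponse hx]
    ring
  have hdiff : Integrable fun x =>
      errorDensity a x (outerResponse h x) - 2 * (1 - outerResponse h x).re :=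
    hint.sub (hre.const_mul 2)
  refine ⟨(hdiff.sub hlog).congr heq, ?_⟩
  rw [← integral_congr_ae heq, MeasureTheory.integral_sub hdiff hlog,
    MeasureTheory.integral_sub hint (hre.const_mul 2), MeasureTheory.integral_const_mul, hre',
    integral_logDefect ha hh]
  ring

theorem abs_rpow_neg_mul_sq {x : ℝ} (hx : x ≠ 0) (a : ℝ) : |x| ^ (-a) * x ^ 2 = |x| ^ (2 - a) := by
  rw [← sq_abs, ← rpow_two, ← rpow_add (abs_pos.2 hx), neg_add_eq_sub]

theorem exists_errorDensity_aeval_mul_expTrunc_le (a : ℝ) {h : ℝ[X]} (hh : h.coeff 0 = 0) :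
    ∃ C, ∀ N x, x ≠ 0 → errorDensity a x (aeval (lowPass x) ((1 - X) * expTrunc N h)) ≤
      C * (|x| ^ (2 - a) / (1 + x ^ 2) + (1 + x ^ 2)⁻¹) := by
  obtain ⟨C₁, hC₁, hb₁⟩ := exists_norm_one_sub_aeval_mul_expTrunc_sq_le coeff_one_zero hh
  obtain ⟨C₂, hC₂, hb₂⟩ := exists_norm_one_sub_aeval_mul_expTrunc_sq_le (m := 1 - X)
    (by simp) hh
  refine ⟨2 * (1 + C₁) + C₂, fun N x hx => ?_⟩
  have hE : ‖aeval (lowPass x) (expTrunc N h)‖ ^ 2 ≤ 2 * (1 + C₁) := by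
    have hu : (1 + x ^ 2)⁻¹ ≤ (1 : ℝ) := inv_le_one_of_one_le₀ (by nlinarith)
    have hsub := (hb₁ N x).trans (mul_le_of_le_one_right hC₁ hu)
    rw [one_mul] at hsub
    have htri := norm_sub_le (1 : ℂ) (1 - aeval (lowPass x) (expTrunc N h))
    rw [sub_sub_cancel, norm_one] at htri
    refine (pow_le_pow_left₀ (norm_nonneg _) htri 2).trans (add_sq_le.trans ?_)
    linarith
  have hsignal : |x| ^ (-a) * ‖aeval (lowPass x) ((1 - X) * expTrunc N h)‖ ^ 2 ≤
      2 * (1 + C₁) * (|x| ^ (2 - a) / (1 + x ^ 2)) := by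
    rw [map_mul, map_sub, map_one, aeval_X, norm_mul, mul_pow, norm_one_sub_lowPass_sq,
      ← abs_rpow_neg_mul_sq hx]
    calc _ = |x| ^ (-a) * x ^ 2 / (1 + x ^ 2) * ‖aeval (lowPass x) (expTrunc N h)‖ ^ 2 := by ring
      _ ≤ |x| ^ (-a) * x ^ 2 / (1 + x ^ 2) * (2 * (1 + C₁)) := by gcongr
      _ = _ := by ring
  have hpos : 0 ≤ |x| ^ (2 - a) / (1 + x ^ 2) := by positivity
  have hpos' : 0 ≤ (1 + x ^ 2)⁻¹ := by positivity
  rw [errorDensity]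
  nlinarith [hb₂ N x]

theorem tendsto_integral_errorDensity (ha : a ∈ Ioo (1 : ℝ) 3) {h : ℝ[X]} (hh : h.coeff 0 = 0) :
    (∀ N, Integrable fun x =>
        errorDensity a x (aeval (lowPass x) ((1 - X) * expTrunc N (-h)))) ∧
      Integrable (fun x => exp (logDefect a h x) - 1 - logDefect a h x) ∧
      Tendsto (fun N => ∫ x, errorDensity a x (aeval (lowPass x) ((1 - X) * expTrunc N (-h))))
        atTop (𝓝 (2 * π / sin (π / a) +
          ∫ x, (exp (logDefect a h x) - 1 - logDefect a h x))) := by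
  obtain ⟨C, hC⟩ := exists_errorDensity_aeval_mul_expTrunc_le a (h := -h) (by simpa using hh)
  have hG : Integrable fun x : ℝ => C * (|x| ^ (2 - a) / (1 + x ^ 2) + (1 + x ^ 2)⁻¹) :=
    ((integrable_abs_rpow_div_one_add_sq (by linarith [ha.2]) (by linarith [ha.1])).add
      integrable_inv_one_add_sq).const_mul C
  have hmeas : ∀ N, AEStronglyMeasurable fun x =>
      errorDensity a x (aeval (lowPass x) ((1 - X) * expTrunc N (-h))) := fun N => by
    have hc : Continuous fun x => ‖aeval (lowPass x) ((1 - X) * expTrunc N (-h))‖ ^ 2 := by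
      fun_prop
    have hc' : Continuous fun x => ‖1 - aeval (lowPass x) ((1 - X) * expTrunc N (-h))‖ ^ 2 := by
      fun_prop
    exact ((aestronglyMeasurable_abs_rpow _).mul hc.aestronglyMeasurable).add
      hc'.aestronglyMeasurable
  have hbound : ∀ N, ∀ᵐ x : ℝ, ‖errorDensity a x (aeval (lowPass x) ((1 - X) *
      expTrunc N (-h)))‖ ≤ C * (|x| ^ (2 - a) / (1 + x ^ 2) + (1 + x ^ 2)⁻¹) := fun N => by
    filter_upwards [ae_ne_zero] with x hx
    rw [norm_of_nonneg (errorDensity_nonneg _ _ _)]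
    exact hC N x hx
  have hlim : ∀ x, Tendsto (fun N =>
      errorDensity a x (aeval (lowPass x) ((1 - X) * expTrunc N (-h)))) atTop
      (𝓝 (errorDensity a x (outerResponse h x))) := fun x => by
    have hx := tendsto_aeval_mul_expTrunc (1 - X) (-h) (lowPass x)
    rw [map_neg, map_sub, map_one, aeval_X] at hx
    exact ((hx.norm.pow 2).const_mul _).add ((hx.const_sub 1).norm.pow 2)
  obtain ⟨hint, htendsto⟩ :=
    integrable_and_tendsto_integral_of_dominated hmeas hG hbound (ae_of_all _ hlim)
  obtain ⟨hint', hval⟩ := integral_errorDensity_outerResponse ha.1 hh hint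
  exact ⟨fun N => hG.mono' (hmeas N) (hbound N), hint', hval ▸ htendsto⟩

theorem exp_mul_add_sub_one_sub_le {L s θ κ : ℝ} (hs : s ∈ Icc (0 : ℝ) 1) (hθ : |θ| ≤ κ)
    (hκ : κ ≤ 1) :
    exp (s * L + θ) - 1 - (s * L + θ) ≤
      3 * (s * (exp L - 1 - L)) + θ ^ 2 + 2 * κ * |L| := by
  have hconvex : exp (s * L) ≤ s * exp L + (1 - s) := by
    simpa using convexOn_exp.2 (mem_univ L) (mem_univ 0) hs.1 (sub_nonneg.2 hs.2) (by ring)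
  have hθ₂ := (abs_le.1 (abs_exp_sub_one_sub_id_le (hθ.trans hκ))).2
  have hθ₁ : |exp θ - 1| ≤ 2 * κ := (abs_exp_sub_one_le (hθ.trans hκ)).trans (by linarith)
  have hθ₀ : exp θ ≤ 3 := by
    linarith [exp_le_exp.2 ((le_abs_self θ).trans (hθ.trans hκ)), exp_one_lt_d9]
  have hcross : s * L * (exp θ - 1) ≤ 2 * κ * |L| := by
    refine (le_abs_self _).trans ?_
    rw [abs_mul, abs_mul, abs_of_nonneg hs.1]
    calc s * |L| * |exp θ - 1| ≤ 1 * |L| * (2 * κ) := by gcongr; exact hs.2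
      _ = 2 * κ * |L| := by ring
  calc exp (s * L + θ) - 1 - (s * L + θ)
      = exp θ * (exp (s * L) - 1 - s * L) + (exp θ - 1 - θ) + s * L * (exp θ - 1) := by
        rw [exp_add]
        ring
    _ ≤ 3 * (s * (exp L - 1 - L)) + θ ^ 2 + 2 * κ * |L| := by
        have h₀ : 0 ≤ exp (s * L) - 1 - s * L := by linarith [add_one_le_exp (s * L)]
        nlinarith

theorem logDefect_zero (a : ℝ) : logDefect a 0 = logRatio a := by
  ext x
  simp [logDefect]

theorem continuousOn_log_one_add_abs_rpow (b : ℝ) :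
    ContinuousOn (fun x : ℝ => log (1 + |x| ^ b)) (Ioi 0) := by
  refine .log (continuousOn_const.add (continuous_abs.continuousOn.rpow_const ?_)) fun x _ => ?_
  · exact fun x hx => .inl (abs_pos.2 (mem_Ioi.1 hx).ne').ne'
  · positivity

theorem integrable_exp_logRatio (ha : a ∈ Ioo (1 : ℝ) 3) :
    Integrable fun x => exp (logRatio a x) - 1 - logRatio a x := by
  simpa only [logDefect_zero] using (tendsto_integral_errorDensity ha (h := 0) (by simp)).2.1

theorem continuous_cutoff_inv_one_add_sq (n : ℕ) :
    Continuous fun x : ℝ => cutoff n (1 + x ^ 2)⁻¹ :=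
  (continuous_cutoff n).comp (.inv₀ (by fun_prop) fun x => by positivity)

theorem integrable_one_sub_cutoff_mul {f : ℝ → ℝ} (hf : Integrable f) (n : ℕ) :
    Integrable fun x => (1 - cutoff n (1 + x ^ 2)⁻¹) * f x := by
  refine hf.bdd_mul (c := 1)
    (continuous_const.sub (continuous_cutoff_inv_one_add_sq n)).aestronglyMeasurable
    (ae_of_all _ fun x => abs_le.2 ⟨?_, ?_⟩)
  · linarith [cutoff_le_one n (1 + x ^ 2)⁻¹]
  · linarith [cutoff_nonneg n (1 + x ^ 2)⁻¹]

theorem exists_integral_exp_logDefect_le (ha : a ∈ Ioo (1 : ℝ) 3) (n : ℕ) {κ : ℝ}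
    (hκ : κ ∈ Ioc (0 : ℝ) 1) :
    ∃ h : ℝ[X], h.coeff 0 = 0 ∧ ∫ x, (exp (logDefect a h x) - 1 - logDefect a h x) ≤
      3 * (∫ x : ℝ, (1 - cutoff n (1 + x ^ 2)⁻¹) * (exp (logRatio a x) - 1 - logRatio a x)) +
        κ * (π + 2 * ∫ x, |logRatio a x|) := by
  obtain ⟨h, hh, happrox⟩ := exists_abs_two_mul_re_aeval_lowPass_sub_le (g := logRatio a)
    ((continuousOn_log_one_add_abs_rpow _).sub (continuousOn_log_one_add_abs_rpow _))
    (by simp [logRatio]) n hκ.1 0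
  refine ⟨h, hh, ?_⟩
  have hL := (integrable_logRatio ha.1).abs
  have hdefect := (tendsto_integral_errorDensity ha hh).2.1
  have htail := integrable_one_sub_cutoff_mul (integrable_exp_logRatio ha) n
  have hbound : ∀ᵐ x, exp (logDefect a h x) - 1 - logDefect a h x ≤
      3 * ((1 - cutoff n (1 + x ^ 2)⁻¹) * (exp (logRatio a x) - 1 - logRatio a x)) +
        κ * (1 + x ^ 2)⁻¹ + 2 * κ * |logRatio a x| := by
    filter_upwards [ae_ne_zero] with x hx
    have hu := inv_one_add_sq_mem_Ioo hx
    specialize happrox x hx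
    set u := (1 + x ^ 2)⁻¹
    have hu₂ : u ^ 2 ≤ u := by nlinarith [hu.1, hu.2]
    have hs : 1 - cutoff n u ∈ Icc (0 : ℝ) 1 :=
      ⟨by linarith [cutoff_le_one n u], by linarith [cutoff_nonneg n u]⟩
    have hθ : |cutoff n u * logRatio a x - 2 * (aeval (lowPass x) h).re| ≤ κ * u := by
      rw [zero_mul, add_zero, abs_sub_comm] at happrox
      exact happrox.trans (mul_le_mul_of_nonneg_left hu₂ hκ.1.le)
    have hκu : κ * u ≤ 1 := by nlinarith [hκ.1, hκ.2, hu.1, hu.2]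
    have hexp := exp_mul_add_sub_one_sub_le (L := logRatio a x) hs
      (hθ.trans (mul_le_of_le_one_right hκ.1.le hu.2.le)) hκ.2
    rw [show (1 - cutoff n u) * logRatio a x + (cutoff n u * logRatio a x -
      2 * (aeval (lowPass x) h).re) = logDefect a h x by rw [logDefect]; ring] at hexp
    have hθ₂ := pow_le_pow_left₀ (abs_nonneg _) hθ 2
    rw [sq_abs] at hθ₂
    nlinarith [mul_nonneg hκ.1.le hu.1.le]
  have hmono := integral_mono_ae hdefect
    (((htail.const_mul 3).add (integrable_inv_one_add_sq.const_mul κ)).add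
      (hL.const_mul (2 * κ))) hbound
  refine hmono.trans_eq ?_
  rw [integral_add' ((htail.const_mul 3).add (integrable_inv_one_add_sq.const_mul κ))
    (hL.const_mul (2 * κ)), integral_add' (htail.const_mul 3)
    (integrable_inv_one_add_sq.const_mul κ), MeasureTheory.integral_const_mul,
    MeasureTheory.integral_const_mul, MeasureTheory.integral_const_mul,
    integral_univ_inv_one_add_sq]
  ring

theorem tendsto_integral_one_sub_cutoff_mul {f : ℝ → ℝ} (hf : Integrable f) :
    Tendsto (fun n : ℕ => ∫ x : ℝ, (1 - cutoff n (1 + x ^ 2)⁻¹) * f x) atTop (𝓝 0) := by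
  have hlim := (integrable_and_tendsto_integral_of_dominated (f := fun _ => (0 : ℝ))
    (fun n => (integrable_one_sub_cutoff_mul hf n).aestronglyMeasurable) hf.norm
    (fun n => ae_of_all _ fun x => ?_) ?_).2
  · simpa only [integral_zero] using hlim
  · rw [norm_mul]
    refine mul_le_of_le_one_left (norm_nonneg _) (abs_le.2 ⟨?_, ?_⟩)
    · linarith [cutoff_le_one n (1 + x ^ 2)⁻¹]
    · linarith [cutoff_nonneg n (1 + x ^ 2)⁻¹]
  · filter_upwards [ae_ne_zero] with x hx
    simpa using ((tendsto_cutoff (inv_one_add_sq_mem_Ioo hx)).const_sub 1).mul_const (f x)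

theorem exists_integral_exp_logDefect_le_of_pos (ha : a ∈ Ioo (1 : ℝ) 3) {η : ℝ} (hη : 0 < η) :
    ∃ h : ℝ[X], h.coeff 0 = 0 ∧
      ∫ x, (exp (logDefect a h x) - 1 - logDefect a h x) ≤ η := by
  obtain ⟨n, hn⟩ := ((tendsto_integral_one_sub_cutoff_mul
    (integrable_exp_logRatio ha)).eventually_le_const (show 0 < η / 6 by positivity)).exists
  have hA : 0 < π + 2 * ∫ x, |logRatio a x| :=
    add_pos_of_pos_of_nonneg pi_pos (mul_nonneg two_pos.le (integral_nonneg fun x => abs_nonneg _))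
  have hκ : min 1 (η / 2 / (π + 2 * ∫ x, |logRatio a x|)) ∈ Ioc (0 : ℝ) 1 :=
    ⟨lt_min one_pos (by positivity), min_le_left _ _⟩
  obtain ⟨h, hh, hle⟩ := exists_integral_exp_logDefect_le ha n hκ
  have hκ' := (le_div_iff₀ hA).1 (min_le_right 1 (η / 2 / (π + 2 * ∫ x, |logRatio a x|)))
  exact ⟨h, hh, by linarith⟩

theorem exists_integral_errorDensity_le (ha : a ∈ Ioo (1 : ℝ) 3) {η : ℝ} (hη : 0 < η) :
    ∃ q : ℝ[X], q.coeff 0 = 1 ∧ q.eval 1 = 0 ∧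
      Integrable (fun x => errorDensity a x (aeval (lowPass x) q)) ∧
      ∫ x, errorDensity a x (aeval (lowPass x) q) ≤ 2 * π / sin (π / a) + η := by
  obtain ⟨h, hh, hle⟩ := exists_integral_exp_logDefect_le_of_pos ha (half_pos hη)
  obtain ⟨hint, -, hlim⟩ := tendsto_integral_errorDensity ha hh
  obtain ⟨N, hN⟩ := (hlim.eventually_le_const
    (show _ < 2 * π / sin (π / a) + η by linarith)).exists
  exact ⟨(1 - X) * expTrunc N (-h), coeff_zero_mul_expTrunc (by simp) (by simpa using hh) N,
    by simp, hint N, hN⟩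

end
end

section
open Polynomial
open scoped Topology ComplexConjugate

theorem abs_rpow_le_one_add_sq {c : ℝ} (hc : c ∈ Icc (0 : ℝ) 2) (x : ℝ) :
    |x| ^ c ≤ 1 + x ^ 2 := by
  rcases le_total |x| 1 with hx | hx
  · exact (rpow_le_one (abs_nonneg x) hx hc.1).trans (by linarith [sq_nonneg x])
  · calc |x| ^ c ≤ |x| ^ (2 : ℝ) := rpow_le_rpow_of_exponent_le hx hc.2
      _ = x ^ 2 := by rw [rpow_two, sq_abs]
      _ ≤ 1 + x ^ 2 := by linarith

theorem abs_rpow_mul_inv_one_add_sq_sq_le {b x : ℝ} (hb : b ∈ Ioo (-1 : ℝ) 3) (hx : x ≠ 0) :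
    |x| ^ b * (1 + x ^ 2)⁻¹ ^ 2 ≤ |x| ^ ((b - 1) / 2) / (1 + x ^ 2) := by
  have hsplit : |x| ^ b = |x| ^ ((b - 1) / 2) * |x| ^ ((b + 1) / 2) := by
    rw [← rpow_add (abs_pos.2 hx)]; ring_nf
  have hle := abs_rpow_le_one_add_sq (c := (b + 1) / 2)
    ⟨by linarith [hb.1], by linarith [hb.2]⟩ x
  calc |x| ^ b * (1 + x ^ 2)⁻¹ ^ 2
      ≤ |x| ^ ((b - 1) / 2) * (1 + x ^ 2) * (1 + x ^ 2)⁻¹ ^ 2 := by rw [hsplit]; gcongr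
    _ = |x| ^ ((b - 1) / 2) / (1 + x ^ 2) := by field_simp

theorem integrable_abs_rpow_div_one_add_sq_half {b : ℝ} (hb : b ∈ Ioo (-1 : ℝ) 3) :
    Integrable fun x : ℝ => |x| ^ ((b - 1) / 2) / (1 + x ^ 2) :=
  integrable_abs_rpow_div_one_add_sq (by linarith [hb.1]) (by linarith [hb.2])

theorem abs_rpow_mul_norm_sq_le {b x C : ℝ} {z : ℂ} (hb : b ∈ Ioo (-1 : ℝ) 3) (hx : x ≠ 0)
    (hz : ‖z‖ ≤ C * (1 + x ^ 2)⁻¹) :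
    |x| ^ b * ‖z‖ ^ 2 ≤ C ^ 2 * (|x| ^ ((b - 1) / 2) / (1 + x ^ 2)) :=
  calc |x| ^ b * ‖z‖ ^ 2 ≤ |x| ^ b * (C * (1 + x ^ 2)⁻¹) ^ 2 := by gcongr
    _ = C ^ 2 * (|x| ^ b * (1 + x ^ 2)⁻¹ ^ 2) := by ring
    _ ≤ _ := mul_le_mul_of_nonneg_left (abs_rpow_mul_inv_one_add_sq_sq_le hb hx) (sq_nonneg C)

theorem integrable_abs_rpow_mul_norm_twoSidedTransfer_sq {b : ℝ} (hb : b ∈ Ioo (-1 : ℝ) 3)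
    {p r : ℝ[X]} (hp : p.coeff 0 = 0) (hr : r.coeff 0 = 0) (h₁ : p.coeff 1 = r.coeff 1) :
    Integrable fun x => |x| ^ b * ‖twoSidedTransfer p r x‖ ^ 2 := by
  obtain ⟨C, -, hC⟩ := exists_norm_twoSidedTransfer_le hp hr h₁
  refine ((integrable_abs_rpow_div_one_add_sq_half hb).const_mul (C ^ 2)).mono'
    ((aestronglyMeasurable_abs_rpow b).mul
      ((continuous_twoSidedTransfer p r).norm.pow 2).aestronglyMeasurable) ?_
  filter_upwards [ae_ne_zero] with x hx
  rw [norm_of_nonneg (by positivity)]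
  exact abs_rpow_mul_norm_sq_le hb hx (hC x)

theorem conj_exp_sub_exp_neg (z : ℂ) :
    conj (Complex.exp z) - Complex.exp (-z) =
      Complex.exp (-z) * ((exp (2 * z.re) - 1 : ℝ) : ℂ) := by
  rw [← Complex.exp_conj, show conj z = -z + ((2 * z.re : ℝ) : ℂ) by rw [← Complex.add_conj]; ring,
    Complex.exp_add]
  push_cast
  ring

theorem abs_rpow_mul_norm_conj_exp_sub_sq_add_le {a x : ℝ} {z : ℂ} (hx : x ≠ 0)
    (hz : 0 ≤ 2 * z.re) (hz' : 2 * z.re ≤ log (1 + |x| ^ (-a))) :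
    |x| ^ a * ‖conj (Complex.exp z) - Complex.exp (-z)‖ ^ 2 + ‖1 - Complex.exp (-z)‖ ^ 2 ≤
      2 * (1 - Complex.exp (-z)).re := by
  have hxpos := abs_pos.2 hx
  have hnorm : ‖Complex.exp (-z)‖ ^ 2 = exp (-(2 * z.re)) := by
    rw [norm_exp_sq, Complex.neg_re, mul_neg]
  have hle : |x| ^ a * (exp (2 * z.re) - 1) ≤ 1 := by
    have hexp := (le_log_iff_exp_le (by positivity)).1 hz'
    calc |x| ^ a * (exp (2 * z.re) - 1) ≤ |x| ^ a * |x| ^ (-a) := by gcongr; linarith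
      _ = 1 := by rw [← rpow_add hxpos, add_neg_cancel, rpow_zero]
  have hnonneg : 0 ≤ exp (2 * z.re) - 1 := by linarith [one_le_exp hz]
  have hcancel : exp (-(2 * z.re)) * exp (2 * z.re) = 1 := by
    rw [← exp_add, neg_add_cancel, exp_zero]
  have hmain : |x| ^ a * ‖conj (Complex.exp z) - Complex.exp (-z)‖ ^ 2 ≤ 1 - exp (-(2 * z.re)) :=
    calc |x| ^ a * ‖conj (Complex.exp z) - Complex.exp (-z)‖ ^ 2
        = exp (-(2 * z.re)) * (exp (2 * z.re) - 1) * (|x| ^ a * (exp (2 * z.re) - 1)) := by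
          rw [conj_exp_sub_exp_neg, norm_mul, mul_pow, hnorm, Complex.norm_real, norm_eq_abs,
            sq_abs]
          ring
      _ ≤ exp (-(2 * z.re)) * (exp (2 * z.re) - 1) * 1 := by gcongr
      _ = 1 - exp (-(2 * z.re)) := by linear_combination hcancel
  rw [norm_one_sub_sq, hnorm, Complex.sub_re, Complex.one_re]
  linarith

section
variable {a : ℝ} {h : ℝ[X]}

theorem coeff_zero_one_sub_expTrunc (hh : h.coeff 0 = 0) (N : ℕ) :
    (1 - expTrunc N (-h)).coeff 0 = 0 := by
  rw [coeff_sub, coeff_zero_expTrunc (by rw [coeff_neg, hh, neg_zero]), coeff_one_zero, sub_self]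

theorem coeff_one_one_sub_expTrunc (hh : h.coeff 0 = 0) (N : ℕ) :
    (1 - expTrunc N (-h)).coeff 1 = h.coeff 1 := by
  rw [coeff_sub, coeff_one_expTrunc (by rw [coeff_neg, hh, neg_zero]), coeff_one, coeff_neg]
  simp

theorem coeff_zero_expTrunc_sub_one (hh : h.coeff 0 = 0) (N : ℕ) :
    (expTrunc N h - 1).coeff 0 = 0 := by
  rw [coeff_sub, coeff_zero_expTrunc hh, coeff_one_zero, sub_self]

theorem coeff_one_expTrunc_sub_one (hh : h.coeff 0 = 0) (N : ℕ) :
    (expTrunc N h - 1).coeff 1 = h.coeff 1 := by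
  rw [coeff_sub, coeff_one_expTrunc hh, coeff_one]
  simp

theorem tendsto_aeval_one_sub_expTrunc (h : ℝ[X]) (z : ℂ) :
    Tendsto (fun N => aeval z (1 - expTrunc N (-h))) atTop
      (𝓝 (1 - Complex.exp (-aeval z h))) := by
  simpa only [map_sub, map_one, map_neg] using (tendsto_aeval_expTrunc (-h) z).const_sub 1

theorem tendsto_twoSidedTransfer_expTrunc (h : ℝ[X]) (x : ℝ) :
    Tendsto (fun N => twoSidedTransfer (1 - expTrunc N (-h)) (expTrunc N h - 1) x) atTop
      (𝓝 (conj (Complex.exp (aeval (lowPass x) h)) - Complex.exp (-aeval (lowPass x) h))) := by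
  have hr := (Complex.continuous_conj.tendsto _).comp
    ((tendsto_aeval_expTrunc h (lowPass x)).sub_const 1)
  convert (tendsto_aeval_one_sub_expTrunc h (lowPass x)).add hr using 2
  · simp only [twoSidedTransfer, Function.comp_apply, map_sub, map_one]
  · simp only [map_sub, map_one]
    ring

theorem exists_norm_twoSidedTransfer_expTrunc_le (hh : h.coeff 0 = 0) :
    ∃ C, ∀ N x, ‖twoSidedTransfer (1 - expTrunc N (-h)) (expTrunc N h - 1) x‖ ≤
      C * (1 + x ^ 2)⁻¹ := by
  obtain ⟨K, -, hK⟩ := exists_norm_twoSidedTransfer_le hh hh rfl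
  obtain ⟨C, -, hC⟩ := exists_norm_aeval_expTrunc_sub_le hh
  obtain ⟨C', -, hC'⟩ := exists_norm_aeval_expTrunc_sub_le (h := -h) (by simpa using hh)
  refine ⟨K + C' + C, fun N x => ?_⟩
  have hp := hC' N (lowPass x) (norm_lowPass_le_one x)
  have hr := hC N (lowPass x) (norm_lowPass_le_one x)
  rw [norm_lowPass_sq] at hp hr
  have hsplit : twoSidedTransfer (1 - expTrunc N (-h)) (expTrunc N h - 1) x =
      twoSidedTransfer h h x - (aeval (lowPass x) (expTrunc N (-h)) - 1 - aeval (lowPass x) (-h)) +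
        conj (aeval (lowPass x) (expTrunc N h) - 1 - aeval (lowPass x) h) := by
    simp only [twoSidedTransfer, map_sub, map_one, map_neg]
    ring
  calc ‖twoSidedTransfer (1 - expTrunc N (-h)) (expTrunc N h - 1) x‖
      ≤ ‖twoSidedTransfer h h x‖ +
          ‖aeval (lowPass x) (expTrunc N (-h)) - 1 - aeval (lowPass x) (-h)‖ +
          ‖conj (aeval (lowPass x) (expTrunc N h) - 1 - aeval (lowPass x) h)‖ := by
        rw [hsplit]
        exact (norm_add_le _ _).trans (add_le_add_left (norm_sub_le _ _) _)
    _ ≤ (K + C' + C) * (1 + x ^ 2)⁻¹ := by rw [Complex.norm_conj]; linarith [hK x]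

/-- The density of the dual variational problem: the cost of a test function with scaled transfer
function `w` on the whole line, whose causal part has transfer function `z`. -/
noncomputable def dualDensity (a x : ℝ) (w z : ℂ) : ℝ := |x| ^ a * ‖w‖ ^ 2 + ‖z‖ ^ 2

theorem integrable_and_tendsto_integral_dualDensity (ha : a ∈ Ioo (1 : ℝ) 3)
    (hh : h.coeff 0 = 0) :
    Integrable (fun x => dualDensity a x
      (conj (Complex.exp (aeval (lowPass x) h)) - Complex.exp (-aeval (lowPass x) h))
      (1 - Complex.exp (-aeval (lowPass x) h))) ∧
    Tendsto (fun N => ∫ x, dualDensity a x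
      (twoSidedTransfer (1 - expTrunc N (-h)) (expTrunc N h - 1) x)
      (aeval (lowPass x) (1 - expTrunc N (-h)))) atTop
      (𝓝 (∫ x, dualDensity a x
        (conj (Complex.exp (aeval (lowPass x) h)) - Complex.exp (-aeval (lowPass x) h))
        (1 - Complex.exp (-aeval (lowPass x) h)))) := by
  have hb : a ∈ Ioo (-1 : ℝ) 3 := ⟨by linarith [ha.1], ha.2⟩
  obtain ⟨C, hC⟩ := exists_norm_twoSidedTransfer_expTrunc_le hh
  obtain ⟨C', -, hC'⟩ := exists_norm_one_sub_aeval_mul_expTrunc_sq_le (m := 1) (h := -h)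
    coeff_one_zero (by simpa using hh)
  refine integrable_and_tendsto_integral_of_dominated
    (G := fun x => C ^ 2 * (|x| ^ ((a - 1) / 2) / (1 + x ^ 2)) + C' * (1 + x ^ 2)⁻¹)
    (fun N => ((aestronglyMeasurable_abs_rpow a).mul
      ((continuous_twoSidedTransfer _ _).norm.pow 2).aestronglyMeasurable).add
      ((continuous_aeval_lowPass _).norm.pow 2).aestronglyMeasurable)
    (((integrable_abs_rpow_div_one_add_sq_half hb).const_mul _).add
      (integrable_inv_one_add_sq.const_mul _)) (fun N => ?_)
    (ae_of_all _ fun x => (((tendsto_twoSidedTransfer_expTrunc h x).norm.pow 2).const_mul _).add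
      ((tendsto_aeval_one_sub_expTrunc h _).norm.pow 2))
  filter_upwards [ae_ne_zero] with x hx
  rw [dualDensity, norm_of_nonneg (by positivity)]
  exact add_le_add (abs_rpow_mul_norm_sq_le hb hx (hC N x))
    (by simpa only [one_mul, map_sub, map_one] using hC' N x)

theorem integral_dualDensity_exp_le (ha : a ∈ Ioo (1 : ℝ) 3) (hh : h.coeff 0 = 0)
    (hnonneg : ∀ x ≠ 0, 0 ≤ 2 * (aeval (lowPass x) h).re)
    (hle : ∀ x ≠ 0, 2 * (aeval (lowPass x) h).re ≤ log (1 + |x| ^ (-a))) :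
    ∫ x, dualDensity a x
      (conj (Complex.exp (aeval (lowPass x) h)) - Complex.exp (-aeval (lowPass x) h))
      (1 - Complex.exp (-aeval (lowPass x) h)) ≤ 2 * π * h.coeff 1 := by
  obtain ⟨hint, hval⟩ := integrable_and_integral_re_one_sub_mul_exp (m := 1) (h := -h)
    coeff_one_zero (by simpa using hh)
  simp only [map_one, one_mul, map_neg] at hint hval
  have hmono := integral_mono_ae (integrable_and_tendsto_integral_dualDensity ha hh).1
    (hint.const_mul 2) (by
      filter_upwards [ae_ne_zero] with x hx using
        abs_rpow_mul_norm_conj_exp_sub_sq_add_le hx (hnonneg x hx) (hle x hx))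
  refine hmono.trans_eq ?_
  rw [MeasureTheory.integral_const_mul, hval, coeff_neg, coeff_one]
  simp
  ring

theorem exists_integral_dualDensity_le (ha : a ∈ Ioo (1 : ℝ) 3) (hh : h.coeff 0 = 0)
    (hnonneg : ∀ x ≠ 0, 0 ≤ 2 * (aeval (lowPass x) h).re)
    (hle : ∀ x ≠ 0, 2 * (aeval (lowPass x) h).re ≤ log (1 + |x| ^ (-a))) {η : ℝ} (hη : 0 < η) :
    ∃ p r : ℝ[X], p.coeff 0 = 0 ∧ r.coeff 0 = 0 ∧ p.coeff 1 = h.coeff 1 ∧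
      r.coeff 1 = h.coeff 1 ∧
      ∫ x, dualDensity a x (twoSidedTransfer p r x) (aeval (lowPass x) p) ≤
        2 * π * h.coeff 1 + η := by
  have hlt := (integral_dualDensity_exp_le ha hh hnonneg hle).trans_lt (lt_add_of_pos_right _ hη)
  obtain ⟨N, hN⟩ := ((integrable_and_tendsto_integral_dualDensity ha hh).2.eventually_le_const
    hlt).exists
  exact ⟨_, _, coeff_zero_one_sub_expTrunc hh N, coeff_zero_expTrunc_sub_one hh N,
    coeff_one_one_sub_expTrunc hh N, coeff_one_expTrunc_sub_one hh N, hN⟩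

theorem mul_inv_one_add_sq_sq_le_log (ha : a ∈ Ioo (1 : ℝ) 3) {x c : ℝ} (hx : x ≠ 0)
    (hc : c ≤ 1 / 2) : c * (1 + x ^ 2)⁻¹ ^ 2 ≤ log (1 + |x| ^ (-a)) := by
  have hxpos := abs_pos.2 hx
  have hpow : |x| ^ a ≤ (1 + x ^ 2) ^ 2 :=
    calc |x| ^ a = (|x| ^ (a / 2)) ^ 2 := by
          rw [← rpow_mul_natCast (abs_nonneg x)]; congr 1; push_cast; ring
      _ ≤ (1 + x ^ 2) ^ 2 := by
          gcongr
          exact abs_rpow_le_one_add_sq ⟨by linarith [ha.1], by linarith [ha.2]⟩ x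
  calc c * (1 + x ^ 2)⁻¹ ^ 2 ≤ 1 / 2 * (1 + x ^ 2)⁻¹ ^ 2 := by gcongr
    _ = (2 * (1 + x ^ 2) ^ 2)⁻¹ := by rw [mul_inv, inv_pow, one_div]
    _ ≤ (1 + |x| ^ a)⁻¹ := by gcongr; nlinarith [sq_nonneg x, sq_nonneg (x ^ 2)]
    _ = 1 - (1 + |x| ^ (-a))⁻¹ := by rw [rpow_neg hxpos.le]; field_simp; ring
    _ ≤ log (1 + |x| ^ (-a)) := one_sub_inv_le_log_of_pos (by positivity)

theorem integrable_inv_one_add_sq_sq : Integrable fun x : ℝ => (1 + x ^ 2)⁻¹ ^ 2 := by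
  have hcont : Continuous fun x : ℝ => (1 + x ^ 2)⁻¹ ^ 2 :=
    (Continuous.inv₀ (by fun_prop) fun x => by positivity).pow 2
  refine integrable_inv_one_add_sq.mono' hcont.aestronglyMeasurable (ae_of_all _ fun x => ?_)
  rw [norm_of_nonneg (by positivity)]
  exact pow_le_of_le_one (by positivity) (inv_le_one_of_one_le₀ (by linarith [sq_nonneg x]))
    two_ne_zero

theorem integral_inv_one_add_sq_sq_le : ∫ x : ℝ, (1 + x ^ 2)⁻¹ ^ 2 ≤ π := by
  rw [← integral_univ_inv_one_add_sq]
  exact integral_mono integrable_inv_one_add_sq_sq integrable_inv_one_add_sq fun x =>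
    pow_le_of_le_one (by positivity) (inv_le_one_of_one_le₀ (by linarith [sq_nonneg x]))
      two_ne_zero

theorem exists_re_aeval_lowPass_le_log (ha : a ∈ Ioo (1 : ℝ) 3) (n : ℕ) {c : ℝ}
    (hc : c ∈ Ioc (0 : ℝ) (1 / 2)) :
    ∃ h : ℝ[X], h.coeff 0 = 0 ∧ ∀ x ≠ 0, 0 ≤ 2 * (aeval (lowPass x) h).re ∧
      2 * (aeval (lowPass x) h).re ≤ log (1 + |x| ^ (-a)) ∧
      cutoff n (1 + x ^ 2)⁻¹ * (log (1 + |x| ^ (-a)) - c * (1 + x ^ 2)⁻¹ ^ 2) ≤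
        2 * (aeval (lowPass x) h).re := by
  have hcont : ContinuousOn (fun x : ℝ => log (1 + |x| ^ (-a)) - c * (1 + x ^ 2)⁻¹ ^ 2)
      (Ioi 0) :=
    (continuousOn_log_one_add_abs_rpow _).sub
      (continuous_const.mul ((Continuous.inv₀ (by fun_prop)
        fun x => by positivity).pow 2)).continuousOn
  obtain ⟨h, hh, happrox⟩ := exists_abs_two_mul_re_aeval_lowPass_sub_le hcont
    (fun x => by rw [abs_abs, sq_abs]) n (half_pos hc.1) (c / 2)
  refine ⟨h, hh, fun x hx => ?_⟩
  have hlow := sub_nonneg.2 (mul_inv_one_add_sq_sq_le_log ha hx hc.2)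
  have hcut := mul_nonneg (cutoff_nonneg n (1 + x ^ 2)⁻¹) hlow
  have hcut' := mul_le_of_le_one_left hlow (cutoff_le_one n (1 + x ^ 2)⁻¹)
  obtain ⟨hge, hle⟩ := abs_le.1 (happrox x hx)
  refine ⟨?_, ?_, ?_⟩ <;> linarith

theorem exists_log_one_add_abs_rpow_neg_approx (ha : a ∈ Ioo (1 : ℝ) 3) {η : ℝ} (hη : 0 < η) :
    ∃ h : ℝ[X], h.coeff 0 = 0 ∧ (∀ x ≠ 0, 0 ≤ 2 * (aeval (lowPass x) h).re) ∧
      (∀ x ≠ 0, 2 * (aeval (lowPass x) h).re ≤ log (1 + |x| ^ (-a))) ∧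
      2 * π / sin (π / a) ≤ 2 * π * h.coeff 1 + η := by
  obtain ⟨c, hc, hcη⟩ : ∃ c ∈ Ioc (0 : ℝ) (1 / 2), c * π ≤ η / 2 :=
    ⟨min (1 / 2) (η / 2 / π), ⟨lt_min (by norm_num) (by positivity), min_le_left _ _⟩,
      (le_div_iff₀ pi_pos).1 (min_le_right _ _)⟩
  have hlog := integrable_log_one_add_abs_rpow_neg ha.1
  have hsq := integrable_inv_one_add_sq_sq.const_mul c
  have htarget : Integrable fun x : ℝ => log (1 + |x| ^ (-a)) - c * (1 + x ^ 2)⁻¹ ^ 2 :=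
    hlog.sub hsq
  obtain ⟨n, hn⟩ := ((tendsto_integral_one_sub_cutoff_mul htarget).eventually_le_const
    (half_pos hη)).exists
  obtain ⟨h, hh, hbounds⟩ := exists_re_aeval_lowPass_le_log ha n hc
  refine ⟨h, hh, fun x hx => (hbounds x hx).1, fun x hx => (hbounds x hx).2.1, ?_⟩
  have htail := integrable_one_sub_cutoff_mul htarget n
  have hmono := integral_mono_ae (htarget.sub htail)
    ((integrable_re_aeval_lowPass hh).const_mul 2) (by
      filter_upwards [ae_ne_zero] with x hx
      have := (hbounds x hx).2.2
      simp only [Pi.sub_apply]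
      linarith)
  rw [integral_sub' htarget htail, MeasureTheory.integral_sub hlog hsq,
    integral_log_one_add_abs_rpow_neg ha.1, MeasureTheory.integral_const_mul,
    MeasureTheory.integral_const_mul, integral_re_aeval_lowPass hh] at hmono
  have hsq_le := mul_le_mul_of_nonneg_left integral_inv_one_add_sq_sq_le hc.1.le
  linarith

theorem exists_dual_test_function (ha : a ∈ Ioo (1 : ℝ) 3) {η : ℝ} (hη : 0 < η) :
    ∃ p r : ℝ[X], p.coeff 0 = 0 ∧ r.coeff 0 = 0 ∧ p.coeff 1 = r.coeff 1 ∧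
      2 * π / sin (π / a) ≤ 2 * π * p.coeff 1 + η ∧
      ∫ x, dualDensity a x (twoSidedTransfer p r x) (aeval (lowPass x) p) ≤
        2 * π * p.coeff 1 + η := by
  obtain ⟨h, hh, hnonneg, hle, hcoeff⟩ := exists_log_one_add_abs_rpow_neg_approx ha hη
  obtain ⟨p, r, hp, hr, hp₁, hr₁, hcost⟩ := exists_integral_dualDensity_le ha hh hnonneg hle hη
  exact ⟨p, r, hp, hr, hp₁.trans hr₁.symm, hp₁ ▸ hcoeff, hp₁ ▸ hcost⟩

end
end

/-! ### Filters at the time scale `δ` -/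

section
open Polynomial
variable {p : ℝ[X]} {T δ b : ℝ}

/-- The filter weights at time `t` of the convolution with `impulseResponse p`, run at the time
scale `δ` up to the horizon `T`. -/
noncomputable def scaledResponse (p : ℝ[X]) (T δ t : ℝ) : ℝ := δ⁻¹ * impulseResponse p ((T - t) / δ)

@[fun_prop]
theorem continuous_scaledResponse (p : ℝ[X]) (T δ : ℝ) : Continuous (scaledResponse p T δ) := by
  unfold scaledResponse
  fun_prop

theorem integral_scaledResponse_smul {E : Type*} [NormedAddCommGroup E] [NormedSpace ℝ E]
    (p : ℝ[X]) (T : ℝ) (hδ : 0 < δ) (k : ℝ → E) :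
    ∫ t in (0 : ℝ)..T, scaledResponse p T δ t • k t
      = ∫ τ in (0 : ℝ)..T / δ, impulseResponse p τ • k (T - δ * τ) := by
  have h := intervalIntegral.integral_comp_sub_div (a := 0) (b := T)
    (fun τ => impulseResponse p τ • k (T - δ * τ)) hδ.ne' (T / δ)
  simp only [zero_div, sub_zero, sub_self] at h
  rw [← inv_smul_eq_iff₀ hδ.ne', ← intervalIntegral.integral_smul] at h
  rw [← h]
  refine intervalIntegral.integral_congr fun t _ => ?_
  simp only [scaledResponse, smul_smul, ← sub_div, mul_div_cancel₀ _ hδ.ne', sub_sub_cancel]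

/-- The first absolute moment of `impulseResponse p`. -/
noncomputable def firstMoment (p : ℝ[X]) : ℝ := ∫ τ in Ioi (0 : ℝ), τ * |impulseResponse p τ|

theorem integrableOn_mul_abs_impulseResponse (p : ℝ[X]) :
    IntegrableOn (fun τ => τ * |impulseResponse p τ|) (Ioi 0) := by
  obtain ⟨C, -, hC⟩ := exists_abs_impulseResponse_le p
  have h : IntegrableOn (fun τ : ℝ => τ ^ (1 : ℝ) * exp (-(1 / 2) * τ ^ (1 : ℝ))) (Ioi 0) :=
    integrableOn_rpow_mul_exp_neg_mul_rpow (by norm_num) one_pos (by norm_num)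
  refine Integrable.mono' (h.const_mul C) (by fun_prop)
    ((ae_restrict_iff' measurableSet_Ioi).2 (ae_of_all _ fun τ hτ => ?_))
  have hτ' : 0 < τ := hτ
  have hC' := mul_le_mul_of_nonneg_left (hC τ hτ'.le) hτ'.le
  rw [norm_of_nonneg (by positivity), rpow_one, show -(1 / 2) * τ = -τ / 2 by ring]
  linarith

theorem firstMoment_nonneg (p : ℝ[X]) : 0 ≤ firstMoment p :=
  setIntegral_nonneg measurableSet_Ioi fun _ hτ => mul_nonneg (mem_Ioi.1 hτ).le (abs_nonneg _)

theorem setIntegral_mul_abs_impulseResponse_le (p : ℝ[X]) {s : Set ℝ} (hs : s ⊆ Ioi 0) :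
    ∫ τ in s, τ * |impulseResponse p τ| ≤ firstMoment p :=
  setIntegral_mono_set (integrableOn_mul_abs_impulseResponse p)
    ((ae_restrict_iff' measurableSet_Ioi).2
      (ae_of_all _ fun _ hτ => mul_nonneg (mem_Ioi.1 hτ).le (abs_nonneg _))) hs.eventuallyLE

theorem norm_setIntegral_Ioi_impulseResponse_mul_wave_le (p : ℝ[X]) (hb : 0 < b) (x : ℝ) :
    ‖∫ τ in Ioi b, impulseResponse p τ * wave (-τ) x‖ ≤ firstMoment p / b := by
  have hsub : Ioi b ⊆ Ioi 0 := Ioi_subset_Ioi hb.le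
  calc _ ≤ ∫ τ in Ioi b, ‖impulseResponse p τ * wave (-τ) x‖ := norm_integral_le_integral_norm _
    _ ≤ ∫ τ in Ioi b, b⁻¹ * (τ * |impulseResponse p τ|) := by
      refine setIntegral_mono_on ((integrableOn_impulseResponse_mul_wave p x).mono_set hsub).norm
        (((integrableOn_mul_abs_impulseResponse p).mono_set hsub).const_mul _)
        measurableSet_Ioi fun τ hτ => ?_
      rw [norm_mul, norm_wave, mul_one, Complex.norm_real, norm_eq_abs, ← mul_assoc, inv_mul_eq_div]
      exact le_mul_of_one_le_left (abs_nonneg _) ((one_le_div hb).2 (mem_Ioi.1 hτ).le)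
    _ ≤ firstMoment p / b := by
      rw [MeasureTheory.integral_const_mul, div_eq_inv_mul]
      exact mul_le_mul_of_nonneg_left (setIntegral_mul_abs_impulseResponse_le p hsub)
        (inv_nonneg.2 hb.le)

theorem norm_aeval_lowPass_sub_integral_le (hp : p.coeff 0 = 0) (hb : 0 < b) (x : ℝ) :
    ‖aeval (lowPass x) p - ∫ τ in (0 : ℝ)..b, impulseResponse p τ * wave (-τ) x‖
      ≤ firstMoment p / b := by
  have hint := integrableOn_impulseResponse_mul_wave p x
  rw [← integral_impulseResponse_mul_wave hp, ← intervalIntegral.integral_interval_add_Ioi hint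
    (hint.mono_set (Ioi_subset_Ioi hb.le)), add_sub_cancel_left]
  exact norm_setIntegral_Ioi_impulseResponse_mul_wave_le p hb x

theorem aeval_lowPass_zero (p : ℝ[X]) : aeval (lowPass 0) p = ((p.eval 1 : ℝ) : ℂ) := by
  have h : lowPass 0 = algebraMap ℝ ℂ 1 := by simp [lowPass]
  rw [h, aeval_algebraMap_apply, coe_aeval_eq_eval,
    Complex.coe_algebraMap]

theorem abs_eval_one_sub_integral_le (hp : p.coeff 0 = 0) (hb : 0 < b) :
    |p.eval 1 - ∫ τ in (0 : ℝ)..b, impulseResponse p τ| ≤ firstMoment p / b := by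
  have h := norm_aeval_lowPass_sub_integral_le hp hb 0
  simp only [aeval_lowPass_zero, wave, zero_mul, Complex.ofReal_zero, Complex.exp_zero, mul_one,
    intervalIntegral.integral_ofReal] at h
  rwa [← Complex.ofReal_sub, Complex.norm_real] at h

section
variable {Ω E : Type*} [NormedAddCommGroup E] [InnerProductSpace ℝ E] [CompleteSpace E]

/-- The filter sees the signal only through the last `δ` units of time, so it reproduces a Lipschitz
signal up to `O(δ)`. -/
theorem norm_filterResidual_scaledResponse_le (hp : p.coeff 0 = 0) (hp₁ : p.eval 1 = 1)
    (hT : 0 < T) (hδ : 0 < δ) {F : ℝ → Ω → E} {ω : Ω} (hF : Continuous fun t => F t ω) {L : ℝ}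
    (hL₀ : 0 ≤ L) (hL : ∀ t ∈ Icc 0 T, ‖F T ω - F t ω‖ ≤ L * |T - t|) :
    ‖filterResidual T F (scaledResponse p T δ) ω‖ ≤ (‖F T ω‖ / T + L) * firstMoment p * δ := by
  have hb : 0 < T / δ := div_pos hT hδ
  have hdecomp : filterResidual T F (scaledResponse p T δ) ω
      = (1 - ∫ τ in (0 : ℝ)..T / δ, impulseResponse p τ) • F T ω
        + ∫ τ in (0 : ℝ)..T / δ, impulseResponse p τ • (F T ω - F (T - δ * τ) ω) := by
    simp only [smul_sub]
    rw [filterResidual, integral_scaledResponse_smul p T hδ fun t => F t ω,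
      intervalIntegral.integral_sub (Continuous.intervalIntegrable (by fun_prop) _ _)
        (Continuous.intervalIntegrable (by fun_prop) _ _),
      intervalIntegral.integral_smul_const, sub_smul, one_smul]
    abel
  have hmass : ‖(1 - ∫ τ in (0 : ℝ)..T / δ, impulseResponse p τ) • F T ω‖
      ≤ firstMoment p / (T / δ) * ‖F T ω‖ := by
    rw [norm_smul, ← hp₁]
    exact mul_le_mul_of_nonneg_right (abs_eval_one_sub_integral_le hp hb) (norm_nonneg _)
  have hlip : ‖∫ τ in (0 : ℝ)..T / δ, impulseResponse p τ • (F T ω - F (T - δ * τ) ω)‖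
      ≤ L * δ * firstMoment p := by
    refine (intervalIntegral.norm_integral_le_of_norm_le
      (g := fun τ => L * δ * (τ * |impulseResponse p τ|)) hb.le (ae_of_all _ fun τ hτ => ?_)
      (Continuous.intervalIntegrable (by fun_prop) _ _)).trans ?_
    · have hpos : 0 < δ * τ := mul_pos hδ hτ.1
      have hle : δ * τ ≤ T := by
        rw [mul_comm]
        exact (le_div_iff₀ hδ).1 hτ.2
      have h := hL (T - δ * τ) ⟨by linarith, by linarith⟩
      rw [sub_sub_cancel, abs_of_pos hpos] at h
      rw [norm_smul, norm_eq_abs]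
      exact (mul_le_mul_of_nonneg_left h (abs_nonneg _)).trans_eq (by ring)
    · rw [intervalIntegral.integral_const_mul, intervalIntegral.integral_of_le hb.le]
      exact mul_le_mul_of_nonneg_left
        (setIntegral_mul_abs_impulseResponse_le p Ioc_subset_Ioi_self) (by positivity)
  rw [hdecomp]
  refine (norm_add_le _ _).trans ((add_le_add hmass hlip).trans_eq ?_)
  field_simp

end

theorem norm_filterResidual_wave_sub_le (hp : p.coeff 0 = 0) (hT : 0 < T) (hδ : 0 < δ) (ω : ℝ) :
    ‖filterResidual T wave (scaledResponse p T δ) ω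
      - wave T ω * (1 - aeval (lowPass (δ * ω)) p)‖ ≤ firstMoment p / T * δ := by
  have hint : ∫ t in (0 : ℝ)..T, scaledResponse p T δ t • wave t ω
      = wave T ω * ∫ τ in (0 : ℝ)..T / δ, impulseResponse p τ * wave (-τ) (δ * ω) := by
    rw [integral_scaledResponse_smul p T hδ fun t => wave t ω,
      ← intervalIntegral.integral_const_mul]
    refine intervalIntegral.integral_congr fun τ _ => ?_
    have h : wave (T - δ * τ) ω = wave T ω * wave (-τ) (δ * ω) := by
      rw [wave, wave, wave, ← Complex.exp_add]
      push_cast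
      ring_nf
    simp only [h, Complex.real_smul]
    ring
  have hdiff : filterResidual T wave (scaledResponse p T δ) ω
      - wave T ω * (1 - aeval (lowPass (δ * ω)) p) = wave T ω * (aeval (lowPass (δ * ω)) p
        - ∫ τ in (0 : ℝ)..T / δ, impulseResponse p τ * wave (-τ) (δ * ω)) := by
    rw [filterResidual, hint]
    ring
  rw [hdiff, norm_mul, norm_wave, one_mul]
  refine (norm_aeval_lowPass_sub_integral_le hp (div_pos hT hδ) (δ * ω)).trans_eq ?_
  field_simp

theorem integrableOn_impulseResponse_sq (p : ℝ[X]) :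
    IntegrableOn (fun τ => impulseResponse p τ ^ 2) (Ioi 0) := by
  obtain ⟨C, -, hC⟩ := exists_abs_impulseResponse_le p
  refine Integrable.mono' (integrableOn_exp_neg_div_two.const_mul (C ^ 2)) (by fun_prop)
    ((ae_restrict_iff' measurableSet_Ioi).2 (ae_of_all _ fun τ hτ => ?_))
  have hexp : exp (-τ / 2) ≤ 1 := exp_le_one_iff.2 (by linarith [mem_Ioi.1 hτ])
  have hsq := pow_le_pow_left₀ (abs_nonneg _) (hC τ (mem_Ioi.1 hτ).le) 2
  rw [norm_of_nonneg (sq_nonneg _), ← sq_abs]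
  calc _ ≤ C ^ 2 * (exp (-τ / 2) * exp (-τ / 2)) := hsq.trans_eq (by ring)
    _ ≤ _ := mul_le_mul_of_nonneg_left (mul_le_of_le_one_right (exp_pos _).le hexp) (sq_nonneg C)

theorem integral_scaledResponse_sq_le (hp : p.coeff 0 = 0) (hT : 0 ≤ T) (hδ : 0 < δ) :
    ∫ t in (0 : ℝ)..T, scaledResponse p T δ t ^ 2
      ≤ δ⁻¹ * ((2 * π)⁻¹ * ∫ x : ℝ, ‖aeval (lowPass x) p‖ ^ 2) := by
  have hscale : ∫ t in (0 : ℝ)..T, scaledResponse p T δ t ^ 2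
      = δ⁻¹ * ∫ τ in (0 : ℝ)..T / δ, impulseResponse p τ ^ 2 := by
    have h := integral_scaledResponse_smul p T hδ (scaledResponse p T δ)
    simp only [smul_eq_mul, ← sq] at h
    rw [h, ← intervalIntegral.integral_const_mul]
    refine intervalIntegral.integral_congr fun τ _ => ?_
    simp only [scaledResponse, sub_sub_cancel, mul_div_cancel_left₀ _ hδ.ne']
    ring
  rw [hscale, ← integral_impulseResponse_sq hp, intervalIntegral.integral_of_le (by positivity)]
  exact mul_le_mul_of_nonneg_left (setIntegral_mono_set (integrableOn_impulseResponse_sq p)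
    (ae_of_all _ fun _ => sq_nonneg _) Ioc_subset_Ioi_self.eventuallyLE) (inv_nonneg.2 hδ.le)

end

/-! ### The upper bound -/

section
open Polynomial
open scoped Topology
variable {H β T δ θ : ℝ} {p q : ℝ[X]}

theorem mul_filterResidual_ouFourier (β T : ℝ) {g : ℝ → ℝ} (hg : Continuous g) (ω : ℝ) :
    ω * Complex.I * filterResidual T (ouFourier β) g ω
      = filterResidual T wave g ω - filterResidual T wave g 0
        + β * (filterResidual T (ouFourier β) g ω - filterResidual T (ouFourier β) g 0) := by
  have hF (t : ℝ) : ω * Complex.I * ouFourier β t ω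
      = wave t ω - wave t 0 + β * (ouFourier β t ω - ouFourier β t 0) := by
    have h₀ := mul_ouFourier β t 0
    rw [Complex.ofReal_zero, zero_mul] at h₀
    linear_combination mul_ouFourier β t ω - h₀
  have hwave (ω : ℝ) : IntervalIntegrable (fun t => g t • wave t ω) volume 0 T :=
    Continuous.intervalIntegrable (by fun_prop) _ _
  have hou (ω : ℝ) : IntervalIntegrable (fun t => g t • ouFourier β t ω) volume 0 T :=
    (hg.smul ((continuous_ouFourier β).comp (Continuous.prodMk_left ω))).intervalIntegrable _ _
  have hint : ω * Complex.I * ∫ t in (0 : ℝ)..T, g t • ouFourier β t ω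
      = ((∫ t in (0 : ℝ)..T, g t • wave t ω) - ∫ t in (0 : ℝ)..T, g t • wave t 0)
        + β * ((∫ t in (0 : ℝ)..T, g t • ouFourier β t ω)
          - ∫ t in (0 : ℝ)..T, g t • ouFourier β t 0) := by
    rw [← intervalIntegral.integral_sub (hwave ω) (hwave 0),
      ← intervalIntegral.integral_sub (hou ω) (hou 0), ← intervalIntegral.integral_const_mul,
      ← intervalIntegral.integral_const_mul, ← intervalIntegral.integral_add
        ((hwave ω).sub (hwave 0)) (((hou ω).sub (hou 0)).const_mul _)]
    refine intervalIntegral.integral_congr fun t _ => ?_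
    simp only [Complex.real_smul]
    linear_combination (g t : ℂ) * hF t
  simp only [filterResidual]
  linear_combination hF T - hint

theorem exists_norm_filterResidual_ouFourier_le (β : ℝ) (hp : p.coeff 0 = 0) (hp₁ : p.eval 1 = 1)
    (hT : 0 < T) : ∃ C, 0 ≤ C ∧ ∀ δ, 0 < δ → ∀ ω,
      ‖filterResidual T (ouFourier β) (scaledResponse p T δ) ω‖ ≤ C * δ := by
  have hmem : T ∈ Icc 0 T := ⟨hT.le, le_rfl⟩
  have hM := firstMoment_nonneg p
  refine ⟨(exp (|β| * T) + (1 + |β| * (exp (|β| * T) * T))) * firstMoment p, by positivity,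
    fun δ hδ ω => (norm_filterResidual_scaledResponse_le (F := ouFourier β) hp hp₁ hT hδ
      ((continuous_ouFourier β).comp (Continuous.prodMk_left ω)) (by positivity)
      fun t ht => norm_ouFourier_sub_le ht hmem ω).trans ?_⟩
  have h : ‖ouFourier β T ω‖ / T ≤ exp (|β| * T) :=
    (div_le_iff₀ hT).2 (norm_ouFourier_le hmem ω)
  gcongr

theorem exists_abs_mul_norm_filterResidual_ouFourier_le (β : ℝ) (hp : p.coeff 0 = 0)
    (hp₁ : p.eval 1 = 1) (hT : 0 < T) : ∃ C, 0 ≤ C ∧ ∀ δ, 0 < δ → ∀ ω,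
      |ω| * ‖filterResidual T (ouFourier β) (scaledResponse p T δ) ω‖
        ≤ ‖1 - aeval (lowPass (δ * ω)) p‖ + C * δ := by
  obtain ⟨C, hC₀, hC⟩ := exists_norm_filterResidual_ouFourier_le β hp hp₁ hT
  have hM := firstMoment_nonneg p
  refine ⟨2 * (firstMoment p / T) + 2 * (|β| * C), by positivity, fun δ hδ ω => ?_⟩
  set R := filterResidual T (ouFourier β) (scaledResponse p T δ)
  set W := filterResidual T wave (scaledResponse p T δ)
  have hW : ‖W ω‖ ≤ ‖1 - aeval (lowPass (δ * ω)) p‖ + firstMoment p / T * δ := by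
    have h := norm_add_le (wave T ω * (1 - aeval (lowPass (δ * ω)) p))
      (W ω - wave T ω * (1 - aeval (lowPass (δ * ω)) p))
    rw [add_sub_cancel, norm_mul, norm_wave, one_mul] at h
    exact h.trans (add_le_add_right (norm_filterResidual_wave_sub_le hp hT hδ ω) _)
  have hW₀ : ‖W 0‖ ≤ firstMoment p / T * δ := by
    simpa [aeval_lowPass_zero, hp₁] using norm_filterResidual_wave_sub_le hp hT hδ 0
  have hR : ‖β * (R ω - R 0)‖ ≤ |β| * (C * δ + C * δ) := by
    rw [norm_mul, Complex.norm_real, norm_eq_abs]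
    exact mul_le_mul_of_nonneg_left
      ((norm_sub_le _ _).trans (add_le_add (hC δ hδ ω) (hC δ hδ 0))) (abs_nonneg β)
  calc |ω| * ‖R ω‖ = ‖W ω - W 0 + β * (R ω - R 0)‖ := by
        rw [← mul_filterResidual_ouFourier β T (continuous_scaledResponse p T δ) ω]
        simp [R]
    _ ≤ ‖W ω‖ + ‖W 0‖ + ‖β * (R ω - R 0)‖ :=
        (norm_add_le _ _).trans (add_le_add_left (norm_sub_le _ _) _)
    _ ≤ _ := by linarith

theorem add_sq_le_of_pos (hθ : 0 < θ) (a b : ℝ) :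
    (a + b) ^ 2 ≤ (1 + θ) * a ^ 2 + (1 + θ⁻¹) * b ^ 2 := by
  have h : (1 + θ) * a ^ 2 + (1 + θ⁻¹) * b ^ 2 - (a + b) ^ 2 = (θ * a - b) ^ 2 / θ := by
    field_simp
    ring
  linarith [div_nonneg (sq_nonneg (θ * a - b)) hθ.le]

theorem exists_norm_filterResidual_ouFourier_sq_le (β : ℝ) (hp : p.coeff 0 = 0)
    (hp₁ : p.eval 1 = 1) (hT : 0 < T) (hθ : 0 < θ) : ∃ C, 0 ≤ C ∧ ∀ δ, 0 < δ → ∀ ω,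
      (1 + ω ^ 2) * ‖filterResidual T (ouFourier β) (scaledResponse p T δ) ω‖ ^ 2
        ≤ (1 + θ) * ‖1 - aeval (lowPass (δ * ω)) p‖ ^ 2 + C * δ ^ 2 := by
  obtain ⟨C₁, -, hC₁⟩ := exists_norm_filterResidual_ouFourier_le β hp hp₁ hT
  obtain ⟨C₂, -, hC₂⟩ := exists_abs_mul_norm_filterResidual_ouFourier_le β hp hp₁ hT
  refine ⟨C₁ ^ 2 + (1 + θ⁻¹) * C₂ ^ 2, by positivity, fun δ hδ ω => ?_⟩
  have h₁ := pow_le_pow_left₀ (norm_nonneg _) (hC₁ δ hδ ω) 2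
  have h₂ := (pow_le_pow_left₀ (by positivity) (hC₂ δ hδ ω) 2).trans (add_sq_le_of_pos hθ _ _)
  rw [mul_pow, sq_abs] at h₂
  linarith

theorem abs_rpow_mul_comp_mul_left (hδ : 0 < δ) (b : ℝ) (f : ℝ → ℝ) (ω : ℝ) :
    |ω| ^ b * f (δ * ω) = δ ^ (-b) * (|δ * ω| ^ b * f (δ * ω)) := by
  rw [abs_mul, abs_of_pos hδ, mul_rpow hδ.le (abs_nonneg ω), rpow_neg hδ.le, mul_assoc,
    inv_mul_cancel_left₀ (rpow_pos_of_pos hδ b).ne']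

theorem integral_abs_rpow_mul_comp_mul_left (hδ : 0 < δ) (b : ℝ) (f : ℝ → ℝ) :
    ∫ ω : ℝ, |ω| ^ b * f (δ * ω) = δ ^ (-b - 1) * ∫ x : ℝ, |x| ^ b * f x := by
  simp only [abs_rpow_mul_comp_mul_left hδ b f]
  rw [MeasureTheory.integral_const_mul,
    Measure.integral_comp_mul_left (fun x => |x| ^ b * f x) δ, smul_eq_mul, ← mul_assoc,
    abs_of_pos (inv_pos.2 hδ), rpow_sub_one hδ.ne', div_eq_mul_inv]

theorem integrable_abs_rpow_mul_comp_mul_left (hδ : 0 < δ) {b : ℝ} {f : ℝ → ℝ}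
    (hf : Integrable fun x : ℝ => |x| ^ b * f x) : Integrable fun ω : ℝ => |ω| ^ b * f (δ * ω) := by
  simp only [abs_rpow_mul_comp_mul_left hδ b f]
  exact (hf.comp_mul_left' hδ.ne').const_mul _

theorem exists_integral_norm_filterResidual_sq_le (hH : H ∈ Ioo (0 : ℝ) 1) (β : ℝ)
    (hp : p.coeff 0 = 0) (hp₁ : p.eval 1 = 1)
    (hint : Integrable fun x : ℝ => |x| ^ (-(1 + 2 * H)) * ‖1 - aeval (lowPass x) p‖ ^ 2)
    (hT : 0 < T) (hθ : 0 < θ) : ∃ C, ∀ δ, 0 < δ →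
      ∫ ω, ‖filterResidual T (ouFourier β) (scaledResponse p T δ) ω‖ ^ 2 ∂spectralMeasure H
        ≤ spectralConst H * ((1 + θ) * (δ ^ (2 * H)
          * ∫ x : ℝ, |x| ^ (-(1 + 2 * H)) * ‖1 - aeval (lowPass x) p‖ ^ 2) + C * δ ^ 2) := by
  obtain ⟨C, -, hC⟩ := exists_norm_filterResidual_ouFourier_sq_le β hp hp₁ hT hθ
  refine ⟨C * ∫ ω : ℝ, |ω| ^ (1 - 2 * H) / (1 + ω ^ 2), fun δ hδ => ?_⟩
  have hδint := (integrable_abs_rpow_mul_comp_mul_left hδ hint).const_mul (1 + θ)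
  have hrem := (integrable_abs_rpow_div_one_add_sq (b := 1 - 2 * H) (by linarith [hH.2])
    (by linarith [hH.1])).const_mul (C * δ ^ 2)
  have hbound : ∫ ω, ‖filterResidual T (ouFourier β) (scaledResponse p T δ) ω‖ ^ 2
        ∂spectralMeasure H
      ≤ ∫ ω, spectralConst H * ((1 + θ)
          * (|ω| ^ (-(1 + 2 * H)) * ‖1 - aeval (lowPass (δ * ω)) p‖ ^ 2)
          + C * δ ^ 2 * (|ω| ^ (1 - 2 * H) / (1 + ω ^ 2))) := by
    rw [integral_spectralMeasure hH]
    refine integral_mono_of_nonneg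
      (ae_of_all _ fun ω => mul_nonneg (spectralDensity_nonneg hH ω) (sq_nonneg _))
      ((hδint.add hrem).const_mul _) ?_
    filter_upwards [ae_ne_zero] with ω hω
    have hpow : |ω| ^ (1 - 2 * H) * (1 + ω ^ 2)⁻¹ ≤ |ω| ^ (-(1 + 2 * H)) := by
      rw [← div_eq_mul_inv, div_le_iff₀ (by positivity), mul_add, abs_rpow_neg_mul_sq hω,
        show 2 - (1 + 2 * H) = 1 - 2 * H by ring]
      exact le_add_of_nonneg_left (by positivity)
    have hR := (le_div_iff₀' (by positivity)).2 (hC δ hδ ω)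
    rw [mul_assoc]
    refine mul_le_mul_of_nonneg_left ?_ (spectralConst_pos hH).le
    calc _ ≤ |ω| ^ (1 - 2 * H) * _ := mul_le_mul_of_nonneg_left hR (by positivity)
      _ = (1 + θ) * (|ω| ^ (1 - 2 * H) * (1 + ω ^ 2)⁻¹ * ‖1 - aeval (lowPass (δ * ω)) p‖ ^ 2)
          + C * δ ^ 2 * (|ω| ^ (1 - 2 * H) / (1 + ω ^ 2)) := by ring
      _ ≤ _ := by gcongr
  refine hbound.trans_eq ?_
  rw [MeasureTheory.integral_const_mul, MeasureTheory.integral_add hδint hrem,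
    MeasureTheory.integral_const_mul, MeasureTheory.integral_const_mul,
    integral_abs_rpow_mul_comp_mul_left hδ _ fun x => ‖1 - aeval (lowPass x) p‖ ^ 2,
    show -(-(1 + 2 * H)) - 1 = 2 * H by ring]
  ring

theorem exists_mul_solution_le (hH : H ∈ Ioo (0 : ℝ) 1) (β : ℝ) (hT : 0 < T)
    (hq₀ : q.coeff 0 = 1) (hq₁ : q.eval 1 = 0)
    (hq : Integrable fun x => errorDensity (1 + 2 * H) x (aeval (lowPass x) q)) (hθ : 0 < θ) :
    ∃ C, ∀ δ, 0 < δ → ∀ g,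
      IsWienerHopfSolution (fOUkernel H β) T (2 * π * spectralConst H * δ ^ (1 + 2 * H)) g →
      δ * g T ≤ (2 * π)⁻¹ * ((1 + θ) * (∫ x, errorDensity (1 + 2 * H) x (aeval (lowPass x) q))
        + C * δ ^ (2 - 2 * H)) := by
  have hp : (1 - q).coeff 0 = 0 := by simp [hq₀]
  have hz (x : ℝ) : 1 - aeval (lowPass x) (1 - q) = aeval (lowPass x) q := by
    simp only [map_sub, map_one]
    ring
  have hw := integrable_norm_aeval_lowPass_sq hp
  have herr (x : ℝ) : errorDensity (1 + 2 * H) x (aeval (lowPass x) q)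
      = |x| ^ (-(1 + 2 * H)) * ‖aeval (lowPass x) q‖ ^ 2 + ‖aeval (lowPass x) (1 - q)‖ ^ 2 := by
    simp only [errorDensity, map_sub, map_one]
  have hv : Integrable fun x : ℝ => |x| ^ (-(1 + 2 * H)) * ‖aeval (lowPass x) q‖ ^ 2 := by
    refine (hq.sub hw).congr (ae_of_all _ fun x => ?_)
    simp only [Pi.sub_apply, herr, add_sub_cancel_right]
  obtain ⟨C, hC⟩ := exists_integral_norm_filterResidual_sq_le hH β hp (by simp [hq₁])
    (by simpa only [hz] using hv) hT hθ
  refine ⟨C, fun δ hδ g hg => ?_⟩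
  have hs := spectralConst_pos hH
  have hpow : δ ^ (1 + 2 * H) = δ * δ ^ (2 * H) := by rw [rpow_add hδ, rpow_one]
  have hpow' : δ ^ 2 = δ ^ (2 * H) * δ ^ (2 - 2 * H) := by
    rw [← rpow_add hδ, add_sub_cancel, rpow_two]
  have henergy := ((isSpectralFactor_ouFourier hH β T).mul_le_energy hT.le (by positivity) hg
    (continuous_scaledResponse (1 - q) T δ)).trans (add_le_add (hC δ hδ)
      (mul_le_mul_of_nonneg_left (integral_scaledResponse_sq_le hp hT.le hδ) (by positivity)))
  simp only [hz] at henergy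
  simp only [herr]
  rw [MeasureTheory.integral_add hv hw]
  set V := ∫ x : ℝ, |x| ^ (-(1 + 2 * H)) * ‖aeval (lowPass x) q‖ ^ 2
  set W := ∫ x : ℝ, ‖aeval (lowPass x) (1 - q)‖ ^ 2
  have hW : 0 ≤ θ * W := mul_nonneg hθ.le (integral_nonneg fun _ => sq_nonneg _)
  have hunit : 0 < 2 * π * spectralConst H * δ ^ (2 * H) := by positivity
  refine le_of_mul_le_mul_left (a := 2 * π * spectralConst H * δ ^ (2 * H)) ?_ hunit
  calc 2 * π * spectralConst H * δ ^ (2 * H) * (δ * g T)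
      = 2 * π * spectralConst H * δ ^ (1 + 2 * H) * g T := by rw [hpow]; ring
    _ ≤ _ := henergy
    _ = 2 * π * spectralConst H * δ ^ (2 * H)
        * ((2 * π)⁻¹ * ((1 + θ) * V + W + C * δ ^ (2 - 2 * H))) := by
      rw [hpow, hpow']
      field_simp
      ring
    _ ≤ _ := by gcongr; linarith

theorem eventually_mul_solution_le (hH : H ∈ Ioo (0 : ℝ) 1) (β : ℝ) (hT : 0 < T) {η : ℝ}
    (hη : 0 < η) : ∀ᶠ δ in 𝓝[>] 0, ∀ g,
      IsWienerHopfSolution (fOUkernel H β) T (2 * π * spectralConst H * δ ^ (1 + 2 * H)) g →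
      δ * g T ≤ 1 / sin (π / (1 + 2 * H)) + η := by
  have ha : 1 + 2 * H ∈ Ioo (1 : ℝ) 3 := ⟨by linarith [hH.1], by linarith [hH.2]⟩
  obtain ⟨q, hq₀, hq₁, hint, hle⟩ := exists_integral_errorDensity_le ha (mul_pos pi_pos hη)
  set J := ∫ x, errorDensity (1 + 2 * H) x (aeval (lowPass x) q)
  have hJ : 0 ≤ J := integral_nonneg fun x => errorDensity_nonneg _ _ _
  obtain ⟨C, hC⟩ := exists_mul_solution_le hH β hT hq₀ hq₁ hint
    (θ := π * η / (2 * (J + 1))) (by positivity)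
  have hθ : π * η / (2 * (J + 1)) * J ≤ π * η / 2 := by
    rw [div_mul_eq_mul_div, div_le_div_iff₀ (by positivity) two_pos]
    nlinarith [mul_pos pi_pos hη]
  have hlim : Tendsto (fun δ : ℝ => C * δ ^ (2 - 2 * H)) (𝓝[>] 0) (𝓝 0) := by
    have hexp : 0 < 2 - 2 * H := by linarith [hH.2]
    have h := ((continuousAt_rpow_const 0 _ (Or.inr hexp.le)).tendsto.const_mul C).mono_left
      (nhdsWithin_le_nhds (s := Ioi 0))
    rwa [zero_rpow hexp.ne', mul_zero] at h
  filter_upwards [hlim.eventually_le_const (show 0 < π * η / 2 by positivity),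
    self_mem_nhdsWithin] with δ hδ hδ₀ g hg
  calc δ * g T ≤ (2 * π)⁻¹ * (2 * π / sin (π / (1 + 2 * H)) + 2 * (π * η)) := by
        refine (hC δ hδ₀ g hg).trans (mul_le_mul_of_nonneg_left ?_ (by positivity))
        linarith
    _ = _ := by field_simp

end

/-! ### The lower bound -/

section
open scoped ComplexConjugate
variable {H β t : ℝ} {B : ℝ → ℂ}

/-- The spectral function whose pairing with `ouFourier β t` in `L²(spectralMeasure H)` is the
pairing of `B` with `wave t - exp (β * t)` in `L²(ℝ)`. -/
noncomputable def dualSpectrum (H β : ℝ) (B : ℝ → ℂ) (ω : ℝ) : ℂ :=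
  (spectralConst H * |ω| ^ (1 - 2 * H))⁻¹ • (conj (ω * Complex.I - β) * B ω)

theorem stronglyMeasurable_dualSpectrum (H β : ℝ) (hB : Continuous B) :
    StronglyMeasurable (dualSpectrum H β B) := by
  have hd : Measurable fun ω : ℝ => (spectralConst H * |ω| ^ (1 - 2 * H))⁻¹ := by fun_prop
  have hc : Continuous fun ω : ℝ => conj ((ω : ℂ) * Complex.I - β) * B ω := by fun_prop
  exact hd.stronglyMeasurable.smul hc.stronglyMeasurable

theorem inner_dualSpectrum_ouFourier (hH : H ∈ Ioo (0 : ℝ) 1) (β t : ℝ) (B : ℝ → ℂ) {ω : ℝ}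
    (hω : ω ≠ 0) :
    spectralConst H * |ω| ^ (1 - 2 * H) * inner ℝ (dualSpectrum H β B ω) (ouFourier β t ω)
      = inner ℝ (B ω) (wave t ω) - exp (β * t) * inner ℝ (B ω) (wave 0 ω) := by
  have hd : spectralConst H * |ω| ^ (1 - 2 * H) ≠ 0 :=
    (mul_pos (spectralConst_pos hH) (rpow_pos_of_pos (abs_pos.2 hω) _)).ne'
  have hadj : inner ℝ (conj (ω * Complex.I - β) * B ω) (ouFourier β t ω)
      = inner ℝ (B ω) ((ω * Complex.I - β) * ouFourier β t ω) := by
    rw [Complex.inner, Complex.inner, map_mul, Complex.conj_conj]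
    ring_nf
  have hwave : (exp (β * t) : ℂ) = exp (β * t) • wave 0 ω := by simp [wave]
  rw [dualSpectrum, real_inner_smul_left, mul_inv_cancel_left₀ hd, hadj, mul_ouFourier, hwave,
    inner_sub_right, real_inner_smul_right]

theorem integral_inner_dualSpectrum_ouFourier (hH : H ∈ Ioo (0 : ℝ) 1) (β t : ℝ)
    (hB : Integrable B) :
    ∫ ω, inner ℝ (dualSpectrum H β B ω) (ouFourier β t ω) ∂spectralMeasure H
      = (∫ ω, inner ℝ (B ω) (wave t ω)) - exp (β * t) * ∫ ω, inner ℝ (B ω) (wave 0 ω) := by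
  have hint (t : ℝ) : Integrable fun ω => inner ℝ (B ω) (wave t ω) := by
    have hc : Continuous fun ω => wave t ω := by fun_prop
    refine hB.norm.mono' (hB.1.inner hc.aestronglyMeasurable) (ae_of_all _ fun ω => ?_)
    exact (norm_inner_le_norm (B ω) (wave t ω)).trans_eq (by rw [norm_wave, mul_one])
  rw [integral_spectralMeasure hH, ← MeasureTheory.integral_const_mul,
    ← MeasureTheory.integral_sub (hint t) ((hint 0).const_mul _)]
  refine integral_congr_ae ?_
  filter_upwards [ae_ne_zero] with ω hω using inner_dualSpectrum_ouFourier hH β t B hω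

theorem norm_dualSpectrum_sq (hH : H ∈ Ioo (0 : ℝ) 1) (β : ℝ) (B : ℝ → ℂ) {ω : ℝ} (hω : ω ≠ 0) :
    spectralConst H * |ω| ^ (1 - 2 * H) * ‖dualSpectrum H β B ω‖ ^ 2
      = (spectralConst H)⁻¹ * (|ω| ^ (1 + 2 * H) * ‖B ω‖ ^ 2
        + β ^ 2 * (|ω| ^ (2 * H - 1) * ‖B ω‖ ^ 2)) := by
  have hs := spectralConst_pos hH
  have hnorm : ‖conj (ω * Complex.I - β)‖ ^ 2 = ω ^ 2 + β ^ 2 := by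
    rw [RCLike.norm_conj, Complex.sq_norm, Complex.normSq_apply]
    simp
    ring
  have hlow : |ω| ^ (2 * H - 1) = (|ω| ^ (1 - 2 * H))⁻¹ := by
    rw [← rpow_neg (abs_nonneg ω), neg_sub]
  have hhigh : |ω| ^ (1 + 2 * H) = (|ω| ^ (1 - 2 * H))⁻¹ * ω ^ 2 := by
    rw [← rpow_neg (abs_nonneg ω), abs_rpow_neg_mul_sq hω]
    ring_nf
  rw [dualSpectrum, norm_smul, norm_mul, mul_pow, mul_pow, hnorm, norm_of_nonneg (by positivity),
    hlow, hhigh]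
  field_simp

theorem memLp_dualSpectrum (hH : H ∈ Ioo (0 : ℝ) 1) (β : ℝ) (hB : Continuous B)
    (hhigh : Integrable fun ω => |ω| ^ (1 + 2 * H) * ‖B ω‖ ^ 2)
    (hlow : Integrable fun ω => |ω| ^ (2 * H - 1) * ‖B ω‖ ^ 2) :
    MemLp (dualSpectrum H β B) 2 (spectralMeasure H) := by
  rw [memLp_two_iff_integrable_sq_norm
    (stronglyMeasurable_dualSpectrum H β hB).aestronglyMeasurable,
    integrable_spectralMeasure_iff hH]
  refine ((hhigh.add (hlow.const_mul (β ^ 2))).const_mul (spectralConst H)⁻¹).congr ?_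
  filter_upwards [ae_ne_zero] with ω hω using (norm_dualSpectrum_sq hH β B hω).symm

theorem integral_norm_dualSpectrum_sq (hH : H ∈ Ioo (0 : ℝ) 1) (β : ℝ)
    (hhigh : Integrable fun ω => |ω| ^ (1 + 2 * H) * ‖B ω‖ ^ 2)
    (hlow : Integrable fun ω => |ω| ^ (2 * H - 1) * ‖B ω‖ ^ 2) :
    ∫ ω, ‖dualSpectrum H β B ω‖ ^ 2 ∂spectralMeasure H
      = (spectralConst H)⁻¹ * ((∫ ω, |ω| ^ (1 + 2 * H) * ‖B ω‖ ^ 2)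
        + β ^ 2 * ∫ ω, |ω| ^ (2 * H - 1) * ‖B ω‖ ^ 2) := by
  rw [integral_spectralMeasure hH, ← MeasureTheory.integral_const_mul (β ^ 2),
    ← MeasureTheory.integral_add hhigh (hlow.const_mul _), ← MeasureTheory.integral_const_mul]
  refine integral_congr_ae ?_
  filter_upwards [ae_ne_zero] with ω hω using norm_dualSpectrum_sq hH β B hω

end

section
open Polynomial
open scoped ComplexConjugate Topology
variable {H β T δ b t : ℝ} {p r : ℝ[X]}

/-- The spectrum of the time-reversed response `twoSidedResponse p r`, at the time scale `δ` and
started at the horizon `T`. -/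
noncomputable def scaledSpectrum (p r : ℝ[X]) (T δ ω : ℝ) : ℂ :=
  (2 * π)⁻¹ • (twoSidedTransfer p r (δ * ω) * wave T ω)

theorem continuous_scaledSpectrum (p r : ℝ[X]) (T δ : ℝ) : Continuous (scaledSpectrum p r T δ) := by
  unfold scaledSpectrum
  fun_prop

theorem integrable_scaledSpectrum (hp : p.coeff 0 = 0) (hr : r.coeff 0 = 0)
    (h₁ : p.coeff 1 = r.coeff 1) (hδ : 0 < δ) : Integrable (scaledSpectrum p r T δ) := by
  refine ((integrable_twoSidedTransfer hp hr h₁).comp_mul_left' hδ.ne').norm.const_mul (2 * π)⁻¹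
    |>.mono' (continuous_scaledSpectrum p r T δ).aestronglyMeasurable (ae_of_all _ fun ω => ?_)
  rw [scaledSpectrum, norm_smul, norm_mul, norm_wave, mul_one, norm_of_nonneg (by positivity)]

theorem norm_scaledSpectrum_sq (p r : ℝ[X]) (T δ ω : ℝ) :
    ‖scaledSpectrum p r T δ ω‖ ^ 2 = ((2 * π)⁻¹) ^ 2 * ‖twoSidedTransfer p r (δ * ω)‖ ^ 2 := by
  rw [scaledSpectrum, norm_smul, norm_mul, norm_wave, mul_one, mul_pow, norm_eq_abs, sq_abs]

theorem integrable_abs_rpow_mul_norm_scaledSpectrum_sq (hb : b ∈ Ioo (-1 : ℝ) 3)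
    (hp : p.coeff 0 = 0) (hr : r.coeff 0 = 0) (h₁ : p.coeff 1 = r.coeff 1) (T : ℝ) (hδ : 0 < δ) :
    Integrable fun ω => |ω| ^ b * ‖scaledSpectrum p r T δ ω‖ ^ 2 := by
  simp only [norm_scaledSpectrum_sq, mul_left_comm (|_| ^ b)]
  exact (integrable_abs_rpow_mul_comp_mul_left hδ
    (integrable_abs_rpow_mul_norm_twoSidedTransfer_sq hb hp hr h₁)).const_mul _

theorem integral_abs_rpow_mul_norm_scaledSpectrum_sq (p r : ℝ[X]) (b T : ℝ) (hδ : 0 < δ) :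
    ∫ ω, |ω| ^ b * ‖scaledSpectrum p r T δ ω‖ ^ 2
      = ((2 * π)⁻¹) ^ 2 * (δ ^ (-b - 1) * ∫ x, |x| ^ b * ‖twoSidedTransfer p r x‖ ^ 2) := by
  simp only [norm_scaledSpectrum_sq, mul_left_comm (|_| ^ b)]
  rw [MeasureTheory.integral_const_mul,
    integral_abs_rpow_mul_comp_mul_left hδ b fun x => ‖twoSidedTransfer p r x‖ ^ 2]

theorem integral_inner_scaledSpectrum_wave (hp : p.coeff 0 = 0) (hr : r.coeff 0 = 0)
    (h₁ : p.coeff 1 = r.coeff 1) (hδ : 0 < δ) (ht : t ≤ T) :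
    ∫ ω, inner ℝ (scaledSpectrum p r T δ ω) (wave t ω) = scaledResponse p T δ t := by
  have hpair (ω : ℝ) : inner ℝ (scaledSpectrum p r T δ ω) (wave t ω)
      = (2 * π)⁻¹ * (twoSidedTransfer p r (δ * ω) * wave ((T - t) / δ) (δ * ω)).re := by
    have hwave : wave ((T - t) / δ) (δ * ω) = wave T ω * conj (wave t ω) := by
      have harg : δ * ω * ((T - t) / δ) = ω * T + ω * (-t) := by
        field_simp
        ring
      rw [conj_wave, wave, wave, wave, ← Complex.exp_add, harg]
      push_cast
      ring_nf
    rw [scaledSpectrum, real_inner_smul_left, real_inner_comm, Complex.inner, hwave]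
    ring_nf
  have hint : Integrable fun x => twoSidedTransfer p r x * wave ((T - t) / δ) x := by
    have hc : Continuous fun x => wave ((T - t) / δ) x := by fun_prop
    exact (integrable_twoSidedTransfer hp hr h₁).mul_bdd (c := 1) hc.aestronglyMeasurable
      (ae_of_all _ fun x => (norm_wave _ x).le)
  have hval : ∫ x, (twoSidedTransfer p r x * wave ((T - t) / δ) x).re
      = 2 * π * impulseResponse p ((T - t) / δ) := by
    have hre := integral_re hint
    simp only [RCLike.re_to_complex] at hre
    rw [hre, integral_twoSidedTransfer_mul_wave hp hr h₁, twoSidedResponse,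
      if_pos (div_nonneg (sub_nonneg.2 ht) hδ.le)]
    norm_cast
  simp only [hpair]
  rw [MeasureTheory.integral_const_mul, Measure.integral_comp_mul_left
    (fun x => (twoSidedTransfer p r x * wave ((T - t) / δ) x).re) δ, hval,
    abs_of_pos (inv_pos.2 hδ), scaledResponse, smul_eq_mul]
  field_simp

theorem integral_norm_dualSpectrum_scaledSpectrum_sq (hH : H ∈ Ioo (0 : ℝ) 1) (β T : ℝ)
    (hp : p.coeff 0 = 0) (hr : r.coeff 0 = 0) (h₁ : p.coeff 1 = r.coeff 1) (hδ : 0 < δ) :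
    2 * π * spectralConst H * δ ^ (2 + 2 * H)
        * ∫ ω, ‖dualSpectrum H β (scaledSpectrum p r T δ) ω‖ ^ 2 ∂spectralMeasure H
      = (2 * π)⁻¹ * ((∫ x, |x| ^ (1 + 2 * H) * ‖twoSidedTransfer p r x‖ ^ 2)
        + β ^ 2 * δ ^ 2 * ∫ x, |x| ^ (2 * H - 1) * ‖twoSidedTransfer p r x‖ ^ 2) := by
  have hs := spectralConst_pos hH
  have hlow : δ ^ (2 + 2 * H) = δ ^ 2 * δ ^ (2 * H) := by rw [rpow_add hδ, rpow_two]
  have hexp : δ ^ (-(1 + 2 * H) - 1) = (δ ^ (2 + 2 * H))⁻¹ := by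
    rw [← rpow_neg hδ.le]
    ring_nf
  have hexp' : δ ^ (-(2 * H - 1) - 1) = (δ ^ (2 * H))⁻¹ := by
    rw [← rpow_neg hδ.le]
    ring_nf
  rw [integral_norm_dualSpectrum_sq hH β
    (integrable_abs_rpow_mul_norm_scaledSpectrum_sq
      ⟨by linarith [hH.1], by linarith [hH.2]⟩ hp hr h₁ T hδ)
    (integrable_abs_rpow_mul_norm_scaledSpectrum_sq
      ⟨by linarith [hH.1], by linarith [hH.2]⟩ hp hr h₁ T hδ),
    integral_abs_rpow_mul_norm_scaledSpectrum_sq p r _ T hδ,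
    integral_abs_rpow_mul_norm_scaledSpectrum_sq p r _ T hδ, hexp, hexp', hlow]
  field_simp

end

section
open Polynomial
open scoped Topology
variable {H T δ : ℝ} {p r : ℝ[X]}

theorem integral_sub_exp_mul_sq_le {θ : ℝ} (β : ℝ) (hT : 0 ≤ T) (hθ : 0 < θ) {ψ : ℝ → ℝ}
    (hψ : Continuous ψ) (c : ℝ) :
    ∫ t in (0 : ℝ)..T, (ψ t - exp (β * t) * c) ^ 2
      ≤ (1 + θ) * (∫ t in (0 : ℝ)..T, ψ t ^ 2)
        + (1 + θ⁻¹) * (T * (exp (|β| * T) * c) ^ 2) := by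
  have hpoint (t : ℝ) (ht : t ∈ Icc 0 T) : (ψ t - exp (β * t) * c) ^ 2
      ≤ (1 + θ) * ψ t ^ 2 + (1 + θ⁻¹) * (exp (|β| * T) * c) ^ 2 := by
    have hexp : exp (β * t) ≤ exp (|β| * T) := exp_le_exp.2
      ((mul_le_mul_of_nonneg_right (le_abs_self β) ht.1).trans
        (mul_le_mul_of_nonneg_left ht.2 (abs_nonneg β)))
    have hadd := add_sq_le_of_pos hθ (ψ t) (-(exp (β * t) * c))
    rw [← sub_eq_add_neg, neg_sq] at hadd
    refine hadd.trans ?_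
    rw [mul_pow, mul_pow]
    gcongr
  have hmono := intervalIntegral.integral_mono_on (μ := volume) hT
    (Continuous.intervalIntegrable (by fun_prop) 0 T)
    (Continuous.intervalIntegrable (by fun_prop) 0 T) hpoint
  rwa [intervalIntegral.integral_add (Continuous.intervalIntegrable (by fun_prop) _ _)
    intervalIntegrable_const, intervalIntegral.integral_const_mul, intervalIntegral.integral_const,
    smul_eq_mul, sub_zero, mul_left_comm T] at hmono

theorem scaledResponse_self (p : ℝ[X]) (T δ : ℝ) : scaledResponse p T δ T = δ⁻¹ * p.coeff 1 := by
  rw [scaledResponse, sub_self, zero_div, impulseResponse_zero]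

theorem tendsto_scaledResponse_zero (p : ℝ[X]) (hT : 0 < T) :
    Tendsto (fun δ => scaledResponse p T δ 0) (𝓝[>] 0) (𝓝 0) := by
  obtain ⟨C, -, hC⟩ := exists_abs_impulseResponse_le p
  have hlim := ((tendsto_rpow_mul_exp_neg_mul_atTop_nhds_zero 1 (T / 2) (half_pos hT)).comp
    tendsto_inv_nhdsGT_zero).const_mul C
  rw [mul_zero] at hlim
  refine squeeze_zero_norm' ?_ hlim
  filter_upwards [self_mem_nhdsWithin] with δ (hδ : 0 < δ)
  rw [scaledResponse, sub_zero, norm_mul, norm_eq_abs, norm_eq_abs, abs_of_pos (inv_pos.2 hδ)]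
  calc δ⁻¹ * |impulseResponse p (T / δ)| ≤ δ⁻¹ * (C * exp (-(T / δ) / 2)) :=
        mul_le_mul_of_nonneg_left (hC _ (by positivity)) (by positivity)
    _ = _ := by
        simp only [Function.comp_apply, rpow_one]
        ring_nf

theorem two_mul_le_mul_solution_add (hH : H ∈ Ioo (0 : ℝ) 1) (β : ℝ) (hT : 0 ≤ T)
    (hp : p.coeff 0 = 0) (hr : r.coeff 0 = 0) (h₁ : p.coeff 1 = r.coeff 1) (hδ : 0 < δ)
    {g : ℝ → ℝ}
    (hg : IsWienerHopfSolution (fOUkernel H β) T (2 * π * spectralConst H * δ ^ (1 + 2 * H)) g) :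
    2 * (p.coeff 1 - δ * exp (β * T) * scaledResponse p T δ 0)
      ≤ δ * g T + ((2 * π)⁻¹ * ((∫ x, |x| ^ (1 + 2 * H) * ‖twoSidedTransfer p r x‖ ^ 2)
          + β ^ 2 * δ ^ 2 * ∫ x, |x| ^ (2 * H - 1) * ‖twoSidedTransfer p r x‖ ^ 2)
        + (1 + δ) * ((2 * π)⁻¹ * (∫ x, ‖aeval (lowPass x) p‖ ^ 2)
          + T * (exp (|β| * T) * scaledResponse p T δ 0) ^ 2)) := by
  have hs := spectralConst_pos hH
  have hhigh := integrable_abs_rpow_mul_norm_scaledSpectrum_sq (b := 1 + 2 * H)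
    ⟨by linarith [hH.1], by linarith [hH.2]⟩ hp hr h₁ T hδ
  have hlow := integrable_abs_rpow_mul_norm_scaledSpectrum_sq (b := 2 * H - 1)
    ⟨by linarith [hH.1], by linarith [hH.2]⟩ hp hr h₁ T hδ
  have hcont := continuous_scaledSpectrum p r T δ
  have hdual := (isSpectralFactor_ouFourier hH β T).two_mul_integral_inner_le hT (by positivity) hg
    (stronglyMeasurable_dualSpectrum H β hcont) (memLp_dualSpectrum hH β hcont hhigh hlow)
    (φ := fun t => scaledResponse p T δ t - exp (β * t) * scaledResponse p T δ 0) (by fun_prop)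
    fun t ht => by
      rw [integral_inner_dualSpectrum_ouFourier hH β t (integrable_scaledSpectrum hp hr h₁ hδ),
        integral_inner_scaledSpectrum_wave hp hr h₁ hδ ht.2,
        integral_inner_scaledSpectrum_wave hp hr h₁ hδ hT]
  have hspectral := integral_norm_dualSpectrum_scaledSpectrum_sq hH β T hp hr h₁ hδ
  have htemporal := (integral_sub_exp_mul_sq_le β hT hδ (continuous_scaledResponse p T δ)
    (scaledResponse p T δ 0)).trans (add_le_add_left (mul_le_mul_of_nonneg_left
      (integral_scaledResponse_sq_le hp hT hδ) (by positivity)) _)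
  have hpow : δ ^ (2 + 2 * H) = δ * δ ^ (1 + 2 * H) := by
    rw [show 2 + 2 * H = 1 + (1 + 2 * H) by ring, rpow_add hδ, rpow_one]
  rw [hpow] at hspectral
  rw [← hspectral]
  rw [scaledResponse_self] at hdual
  set ψ₀ := scaledResponse p T δ 0
  have hfinal := mul_le_mul_of_nonneg_left
    (hdual.trans (add_le_add_right (add_le_add_right htemporal _) _)) hδ.le
  calc 2 * (p.coeff 1 - δ * exp (β * T) * ψ₀)
      = δ * (2 * (δ⁻¹ * p.coeff 1 - exp (β * T) * ψ₀)) := by field_simp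
    _ ≤ _ := hfinal
    _ = _ := by field_simp; ring

theorem eventually_le_mul_solution (hH : H ∈ Ioo (0 : ℝ) 1) (β : ℝ) (hT : 0 < T) {η : ℝ}
    (hη : 0 < η) : ∀ᶠ δ in 𝓝[>] 0, ∀ g,
      IsWienerHopfSolution (fOUkernel H β) T (2 * π * spectralConst H * δ ^ (1 + 2 * H)) g →
      1 / sin (π / (1 + 2 * H)) - η ≤ δ * g T := by
  have ha : 1 + 2 * H ∈ Ioo (1 : ℝ) 3 := ⟨by linarith [hH.1], by linarith [hH.2]⟩
  obtain ⟨p, r, hp, hr, h₁, hsup, hcost⟩ :=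
    exists_dual_test_function ha (η := π * η / 2) (by positivity)
  simp only [dualDensity] at hcost
  rw [MeasureTheory.integral_add (integrable_abs_rpow_mul_norm_twoSidedTransfer_sq
    ⟨by linarith [ha.1], ha.2⟩ hp hr h₁) (integrable_norm_aeval_lowPass_sq hp)] at hcost
  set N := ∫ x : ℝ, |x| ^ (1 + 2 * H) * ‖twoSidedTransfer p r x‖ ^ 2
  set D := ∫ x : ℝ, |x| ^ (2 * H - 1) * ‖twoSidedTransfer p r x‖ ^ 2
  set W := ∫ x : ℝ, ‖aeval (lowPass x) p‖ ^ 2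
  have hlim : Tendsto (fun δ => 2 * (p.coeff 1 - δ * exp (β * T) * scaledResponse p T δ 0)
      - ((2 * π)⁻¹ * (N + β ^ 2 * δ ^ 2 * D)
        + (1 + δ) * ((2 * π)⁻¹ * W + T * (exp (|β| * T) * scaledResponse p T δ 0) ^ 2)))
      (𝓝[>] 0) (𝓝 (2 * p.coeff 1 - (2 * π)⁻¹ * (N + W))) := by
    have hψ := tendsto_scaledResponse_zero p hT
    have hδ : Tendsto (fun δ : ℝ => δ) (𝓝[>] 0) (𝓝 0) := nhdsWithin_le_nhds
    have h := (((hδ.mul_const (exp (β * T))).mul hψ).const_sub (p.coeff 1)).const_mul 2 |>.sub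
      (((((hδ.pow 2).const_mul (β ^ 2)).mul_const D).const_add N |>.const_mul (2 * π)⁻¹).add
        ((hδ.const_add 1).mul ((((hψ.const_mul (exp (|β| * T))).pow 2).const_mul T).const_add
          ((2 * π)⁻¹ * W))))
    convert h using 2
    ring
  have hvalue : 1 / sin (π / (1 + 2 * H)) - η < 2 * p.coeff 1 - (2 * π)⁻¹ * (N + W) := by
    have hsin : 1 / sin (π / (1 + 2 * H)) = (2 * π)⁻¹ * (2 * π / sin (π / (1 + 2 * H))) := by
      field_simp
    have hsup' := mul_le_mul_of_nonneg_left hsup (show 0 ≤ (2 * π)⁻¹ by positivity)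
    have hcost' := mul_le_mul_of_nonneg_left hcost (show 0 ≤ (2 * π)⁻¹ by positivity)
    have hsimp : (2 * π)⁻¹ * (2 * π * p.coeff 1 + π * η / 2) = p.coeff 1 + η / 4 := by
      field_simp
      ring
    rw [hsimp] at hsup' hcost'
    linarith
  filter_upwards [hlim.eventually_const_lt hvalue, self_mem_nhdsWithin] with δ hlt hδ g hg
  linarith [two_mul_le_mul_solution_add hH β hT.le hp hr h₁ hδ hg]

end

section
open scoped Topology
variable {H T : ℝ}

theorem tendsto_mul_solution (hH : H ∈ Ioo (0 : ℝ) 1) (β : ℝ) (hT : 0 < T) {ι : Type*}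
    {F : Filter ι} {δ : ι → ℝ} (hδ : Tendsto δ F (𝓝[>] 0)) {g : ι → ℝ → ℝ}
    (hg : ∀ᶠ i in F, IsWienerHopfSolution (fOUkernel H β) T
      (2 * π * spectralConst H * δ i ^ (1 + 2 * H)) (g i)) :
    Tendsto (fun i => δ i * g i T) F (𝓝 (1 / sin (π / (1 + 2 * H)))) := by
  refine tendsto_order.2 ⟨fun a ha => ?_, fun b hb => ?_⟩
  · filter_upwards [hg, hδ.eventually
      (eventually_le_mul_solution hH β hT (half_pos (sub_pos.2 ha)))] with i hi hle
    linarith [hle _ hi]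
  · filter_upwards [hg, hδ.eventually
      (eventually_mul_solution_le hH β hT (half_pos (sub_pos.2 hb)))] with i hi hle
    linarith [hle _ hi]

theorem tendsto_solution_div_rpow (hH : H ∈ Ioo (0 : ℝ) 1) (β : ℝ) (hT : 0 < T) {ι : Type*}
    {F : Filter ι} {l : ι → ℝ} (hl : Tendsto l F (𝓝[>] 0)) {g : ι → ℝ → ℝ}
    (hg : ∀ᶠ i in F, IsWienerHopfSolution (fOUkernel H β) T (l i) (g i)) :
    Tendsto (fun i => l i * g i T / l i ^ (2 * H / (1 + 2 * H))) F
      (𝓝 ((2 * π * spectralConst H) ^ (1 / (1 + 2 * H)) / sin (π / (1 + 2 * H)))) := by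
  have ha : 0 < 1 + 2 * H := by linarith [hH.1]
  have hc : 0 < 2 * π * spectralConst H := mul_pos two_pi_pos (spectralConst_pos hH)
  set c := 2 * π * spectralConst H
  have hpos : ∀ᶠ i in F, 0 < l i := hl.eventually self_mem_nhdsWithin
  have hδ : Tendsto (fun i => (l i / c) ^ (1 / (1 + 2 * H))) F (𝓝[>] 0) := by
    refine tendsto_nhdsWithin_iff.2 ⟨?_, hpos.mono fun i hi => ?_⟩
    · have h := ((tendsto_nhdsWithin_iff.1 hl).1.div_const c).rpow_const
        (p := 1 / (1 + 2 * H)) (Or.inr (by positivity))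
      rwa [zero_div, zero_rpow (by positivity)] at h
    · exact rpow_pos_of_pos (div_pos hi hc) _
  have hlim := tendsto_mul_solution hH β hT hδ (g := g) (by
    filter_upwards [hg, hpos] with i hi hi₀
    rwa [← rpow_mul (by positivity), one_div_mul_cancel ha.ne', rpow_one, mul_div_cancel₀ _ hc.ne'])
  rw [div_eq_mul_one_div (c ^ _)]
  refine (hlim.const_mul (c ^ (1 / (1 + 2 * H)))).congr' ?_
  filter_upwards [hpos] with i hi
  have hexp : 1 / (1 + 2 * H) = 1 - 2 * H / (1 + 2 * H) := by
    field_simp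
    ring
  rw [← mul_assoc, ← mul_rpow hc.le (by positivity), mul_div_cancel₀ _ hc.ne', hexp, rpow_sub hi,
    rpow_one, div_mul_eq_mul_div]

theorem isWienerHopfSolution_IccExtend {K : ℝ → ℝ → ℝ} {l : ℝ} (hT : 0 ≤ T) {g : ℝ → ℝ}
    (hg : ContinuousOn g (Icc 0 T))
    (heq : ∀ s ∈ Icc 0 T, l * g s + ∫ r in (0 : ℝ)..T, K r s * g r = K s T) :
    IsWienerHopfSolution K T l (IccExtend hT ((Icc 0 T).domRestrict g)) where
  continuous := hg.domRestrict.Icc_extend'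
  eq s hs := by
    rw [IccExtend_of_mem hT _ hs, domRestrict_apply, ← heq s hs]
    congr 1
    refine intervalIntegral.integral_congr fun r hr => ?_
    rw [uIcc_of_le hT] at hr
    simp only [IccExtend_of_mem hT _ hr, domRestrict_apply]

theorem filtering_error_asymptotics_general {μ : ℝ} (hH : H ∈ Ioo (0 : ℝ) 1) (β : ℝ) (hμ : μ ≠ 0)
    (hT : 0 < T) {g : ℝ → ℝ → ℝ} (hcont : ∀ ε > 0, ContinuousOn (g ε) (Icc 0 T))
    (heq : ∀ ε > 0, ∀ s ∈ Icc 0 T,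
      ε * g ε s + μ ^ 2 * ∫ r in (0 : ℝ)..T, fOUkernel H β r s * g ε r
        = μ ^ 2 * fOUkernel H β s T) :
    Tendsto (fun ε => ε / μ ^ 2 * g ε T / (ε / μ ^ 2) ^ (2 * H / (1 + 2 * H))) (𝓝[>] 0)
      (𝓝 ((sin (π * H) * Gamma (2 * H + 1)) ^ (1 / (1 + 2 * H)) / sin (π / (2 * H + 1)))) := by
  have hl : Tendsto (fun ε : ℝ => ε / μ ^ 2) (𝓝[>] 0) (𝓝[>] 0) := by
    refine tendsto_nhdsWithin_iff.2 ⟨?_, eventually_mem_nhdsWithin.mono fun ε (hε : 0 < ε) => ?_⟩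
    · have h := (tendsto_id.mono_left (nhdsWithin_le_nhds (a := (0 : ℝ)) (s := Ioi 0))).div_const
        (μ ^ 2)
      rwa [zero_div] at h
    · exact div_pos hε (by positivity)
  have hsol : ∀ᶠ ε in 𝓝[>] 0, IsWienerHopfSolution (fOUkernel H β) T (ε / μ ^ 2)
      (IccExtend hT.le ((Icc 0 T).domRestrict (g ε))) := by
    filter_upwards [self_mem_nhdsWithin] with ε hε
    refine isWienerHopfSolution_IccExtend hT.le (hcont ε hε) fun s hs => ?_
    have h := heq ε hε s hs
    field_simp
    exact h
  have hconst : 2 * π * spectralConst H = sin (π * H) * Gamma (2 * H + 1) :=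
    mul_div_cancel₀ _ two_pi_pos.ne'
  have hlim := tendsto_solution_div_rpow hH β hT hl hsol
  simp only [IccExtend_of_mem hT.le _ (right_mem_Icc.2 hT.le), domRestrict_apply] at hlim
  rwa [hconst, show π / (1 + 2 * H) = π / (2 * H + 1) by rw [add_comm]] at hlim

end

/-- Exact small-noise asymptotics of the filtering error for the fOU signal in white noise. -/
theorem filtering_error_asymptotics
    (H β μ T : ℝ) (hH : H ∈ Set.Ioo (0:ℝ) 1) (hμ : μ ≠ 0) (hT : 0 < T)
    (h : ℝ → ℝ → ℝ → ℝ)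
    (hcont : ∀ ε > 0, ContinuousOn (fun p : ℝ × ℝ => h ε p.1 p.2) (Icc 0 T ×ˢ Icc 0 T))
    (heq : ∀ ε > 0, ∀ s t : ℝ, 0 ≤ s → s ≤ t → t ≤ T →
      ε * h ε s t + μ ^ 2 * ∫ r in (0:ℝ)..T, fOUkernel H β r s * h ε r t
        = μ ^ 2 * fOUkernel H β s t) :
    Tendsto (fun ε : ℝ =>
        ((ε / μ ^ 2) * h ε T T) / (ε / μ ^ 2) ^ (2 * H / (1 + 2 * H)))
      (nhdsWithin 0 (Ioi 0))
      (nhds ((Real.sin (π * H) * Real.Gamma (2 * H + 1)) ^ ((1:ℝ) / (1 + 2 * H))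
        / Real.sin (π / (2 * H + 1)))) :=
  filtering_error_asymptotics_general hH β hμ hT (g := fun ε s => h ε s T)
    (fun ε hε => (hcont ε hε).comp (f := fun s => (s, T)) (by fun_prop)
      fun _ hs => ⟨hs, right_mem_Icc.2 hT.le⟩)
    fun ε hε s hs => heq ε hε s T hs.1 hs.2 le_rfl
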